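/- arXiv:1407.6077 — 6 statements merged into one kernel-verified Lean document; each statement's English description precedes it below -/
import Mathlib

section
/- Let P be a finite poset and let m be the maximum size of an antichain in P. On the set A_m(P) of m-element antichains of P, define X ⪯ Y if and only if for every x ∈ X there exists y ∈ Y with x ≤ y. Then ⪯ is a partial order on A_m(P) and A_m(P) has a minimum element with respect to ⪯, i.e., there exists an m-element antichain Z such that Z ⪯ X for every m-element antichain X. -/
/-!
If `X` and `Y` are antichains of maximum size, let `L` and `U` be the sets of minimal and of maximal
elements of `X ∪ Y`. No element of `X ∪ Y` lies strictly between two others, and the elements of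
`X ∩ Y` are both minimal and maximal, so `|L| + |U| ≥ |X| + |Y|`; hence the antichain `L` again has
maximum size.

Now let `Z` be the set of minimal elements of the union of all maximum antichains. Passing from
`W` and `X` to the minimal elements of `W ∪ X` loses no element of `Z`, so finitely many elements
of `Z`, and therefore all of them, lie in one maximum antichain `W`. If `P` is well-founded, every
`w ∈ W` is above some `z ∈ Z ⊆ W`, whence `W = Z`. Finally `z ∈ Z` is comparable to some element of
any given maximum antichain, and being minimal it lies below that element.
-/

section MaximumAntichains

open Finset

variable {P : Type*}

section Cofinality

variable [PartialOrder P] {s t : Set P}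

theorem subset_of_isCofinalFor_of_isCofinalFor (hs : IsAntichain (· ≤ ·) s)
    (hst : IsCofinalFor s t) (hts : IsCofinalFor t s) : s ⊆ t := by
  intro x hx
  obtain ⟨y, hy, hxy⟩ := hst hx
  obtain ⟨x', hx', hyx'⟩ := hts hy
  have hxx' : x = x' := hs.eq hx hx' (hxy.trans hyx')
  rwa [hxy.antisymm (hyx'.trans_eq hxx'.symm)]

theorem eq_of_isCofinalFor_of_isCofinalFor (hs : IsAntichain (· ≤ ·) s)
    (ht : IsAntichain (· ≤ ·) t) (hst : IsCofinalFor s t) (hts : IsCofinalFor t s) : s = t :=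
  (subset_of_isCofinalFor_of_isCofinalFor hs hst hts).antisymm
    (subset_of_isCofinalFor_of_isCofinalFor ht hts hst)

end Cofinality

section UnionOfAntichains

variable [Preorder P] {s t : Set P} {a : P}

theorem minimal_or_maximal_of_mem_union (hs : IsAntichain (· ≤ ·) s) (ht : IsAntichain (· ≤ ·) t)
    (ha : a ∈ s ∪ t) : Minimal (· ∈ s ∪ t) a ∨ Maximal (· ∈ s ∪ t) a := by
  wlog has : a ∈ s generalizing s t
  · simpa only [Set.union_comm] using this ht hs ha.symm (ha.resolve_left has)
  by_contra! ⟨hmin, hmax⟩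
  obtain ⟨b, hba, hb⟩ := (not_minimal_iff_exists_lt ha).1 hmin
  obtain ⟨c, hac, hc⟩ := (not_maximal_iff_exists_gt ha).1 hmax
  have hbt : b ∈ t := hb.resolve_left fun hbs => hs.not_lt hbs has hba
  have hct : c ∈ t := hc.resolve_left fun hcs => hs.not_lt has hcs hac
  exact ht.not_lt hbt hct (hba.trans hac)

theorem minimal_union_of_mem_inter (hs : IsAntichain (· ≤ ·) s) (ht : IsAntichain (· ≤ ·) t)
    (ha : a ∈ s ∩ t) : Minimal (· ∈ s ∪ t) a :=
  ⟨.inl ha.1, fun _ hb hba => hb.elim (fun hb => (hs.eq hb ha.1 hba).ge)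
    (fun hb => (ht.eq hb ha.2 hba).ge)⟩

theorem maximal_union_of_mem_inter (hs : IsAntichain (· ≤ ·) s) (ht : IsAntichain (· ≤ ·) t)
    (ha : a ∈ s ∩ t) : Maximal (· ∈ s ∪ t) a :=
  minimal_union_of_mem_inter (P := Pᵒᵈ) hs.to_dual ht.to_dual ha

open scoped Classical in
theorem card_add_card_le_card_minimal_add_card_maximal {X Y : Finset P}
    (hX : IsAntichain (· ≤ ·) (X : Set P)) (hY : IsAntichain (· ≤ ·) (Y : Set P)) :
    #X + #Y ≤ #{a ∈ X ∪ Y | Minimal (· ∈ (X ∪ Y : Set P)) a} +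
      #{a ∈ X ∪ Y | Maximal (· ∈ (X ∪ Y : Set P)) a} := by
  set L := {a ∈ X ∪ Y | Minimal (· ∈ (X ∪ Y : Set P)) a} with hL
  set U := {a ∈ X ∪ Y | Maximal (· ∈ (X ∪ Y : Set P)) a} with hU
  have hunion : X ∪ Y ⊆ L ∪ U := fun a ha => by
    rw [hL, hU, ← filter_or, mem_filter]
    exact ⟨ha, minimal_or_maximal_of_mem_union hX hY (by simpa using ha)⟩
  have hinter : X ∩ Y ⊆ L ∩ U := fun a ha => by
    have ha' : a ∈ (X ∩ Y : Set P) := by simpa using ha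
    rw [hL, hU, ← filter_and, mem_filter]
    exact ⟨inter_subset_union ha, minimal_union_of_mem_inter hX hY ha',
      maximal_union_of_mem_inter hX hY ha'⟩
  calc #X + #Y = #(X ∪ Y) + #(X ∩ Y) := (card_union_add_card_inter X Y).symm
    _ ≤ #(L ∪ U) + #(L ∩ U) := add_le_add (card_le_card hunion) (card_le_card hinter)
    _ = #L + #U := card_union_add_card_inter L U

end UnionOfAntichains

/-- An antichain that has maximum cardinality among the finite antichains of `P`; if the maximum
size of an antichain is `m`, these are the elements of `A_m(P)`. The existence of such an antichain
bounds the size of every antichain, so the infinite ones need not be mentioned. -/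
structure IsMaximumAntichain [LE P] (A : Finset P) : Prop where
  isAntichain : IsAntichain (· ≤ ·) (A : Set P)
  card_le_card : ∀ B : Finset P, IsAntichain (· ≤ ·) (B : Set P) → #B ≤ #A

/-- The union of all antichains of maximum cardinality of `P`. Its minimal elements form the least
such antichain. -/
def maximumAntichainUnion (P : Type*) [LE P] : Set P :=
  {a | ∃ A : Finset P, IsMaximumAntichain A ∧ a ∈ A}

namespace IsMaximumAntichain

section LE

variable [LE P] {A B : Finset P}

theorem isMaximumAntichain_iff (hA : IsMaximumAntichain A) :
    IsMaximumAntichain B ↔ IsAntichain (· ≤ ·) (B : Set P) ∧ #B = #A where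
  mp hB := ⟨hB.isAntichain, (hA.card_le_card B hB.isAntichain).antisymm
    (hB.card_le_card A hA.isAntichain)⟩
  mpr h := ⟨h.1, fun C hC => (hA.card_le_card C hC).trans_eq h.2.symm⟩

theorem finite_of_isAntichain {s : Set P} (hA : IsMaximumAntichain A)
    (hs : IsAntichain (· ≤ ·) s) : s.Finite := by
  by_contra hinf
  obtain ⟨B, hBs, hBcard⟩ := Set.Infinite.exists_subset_card_eq hinf (#A + 1)
  have := hA.card_le_card B (hs.subset hBs)
  lia

end LE

theorem exists_le_or_ge [Preorder P] {A : Finset P} (hA : IsMaximumAntichain A) (p : P) :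
    ∃ a ∈ A, p ≤ a ∨ a ≤ p := by
  classical
  by_contra! hp
  have hpA : p ∉ A := fun h => (hp p h).1 le_rfl
  have hanti : IsAntichain (· ≤ ·) (insert p A : Set P) :=
    hA.isAntichain.insert (fun b hb _ => (hp b hb).2) (fun b hb _ => (hp b hb).1)
  have hcard := hA.card_le_card (insert p A) (by rwa [coe_insert])
  rw [card_insert_of_notMem hpA] at hcard
  lia

variable [PartialOrder P] {X Y : Finset P}

open scoped Classical in
theorem filter_minimal_union (hX : IsMaximumAntichain X) (hY : IsMaximumAntichain Y) :
    IsMaximumAntichain {a ∈ X ∪ Y | Minimal (· ∈ (X ∪ Y : Set P)) a} := by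
  have hL : IsAntichain (· ≤ ·)
      (({a ∈ X ∪ Y | Minimal (· ∈ (X ∪ Y : Set P)) a} : Finset P) : Set P) :=
    (setOfPred_minimal_antichain _).subset fun _ ha => (mem_filter.1 ha).2
  have hU : IsAntichain (· ≤ ·)
      (({a ∈ X ∪ Y | Maximal (· ∈ (X ∪ Y : Set P)) a} : Finset P) : Set P) :=
    (setOfPred_maximal_antichain _).subset fun _ ha => (mem_filter.1 ha).2
  have hcard := card_add_card_le_card_minimal_add_card_maximal hX.isAntichain hY.isAntichain
  have hUY := hY.card_le_card _ hU
  exact ⟨hL, fun B hB => (hX.card_le_card B hB).trans (by lia)⟩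

theorem exists_superset_of_forall_minimal (hX : IsMaximumAntichain X) (S : Finset P)
    (hS : ∀ z ∈ S, Minimal (· ∈ maximumAntichainUnion P) z) :
    ∃ W, IsMaximumAntichain W ∧ S ⊆ W := by
  classical
  induction S using Finset.induction_on with
  | empty => exact ⟨X, hX, empty_subset X⟩
  | insert z S _ ih =>
    obtain ⟨W, hW, hSW⟩ := ih fun y hy => hS y (mem_insert_of_mem hy)
    obtain ⟨Y, hY, hzY⟩ := (hS z (mem_insert_self z S)).prop
    refine ⟨_, hW.filter_minimal_union hY, fun y hy => ?_⟩
    have hyWY : y ∈ W ∪ Y := by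
      rcases mem_insert.1 hy with rfl | hyS
      · exact mem_union_right W hzY
      · exact mem_union_left Y (hSW hyS)
    refine mem_filter.2 ⟨hyWY, (hS y hy).mono ?_ (by simpa using hyWY)⟩
    rintro x (hx | hx)
    exacts [⟨W, hW, hx⟩, ⟨Y, hY, hx⟩]

theorem isCofinalFor_setOfPred_minimal (hX : IsMaximumAntichain X) :
    IsCofinalFor {z | Minimal (· ∈ maximumAntichainUnion P) z} X := by
  intro z hz
  obtain ⟨x, hx, hzx | hxz⟩ := hX.exists_le_or_ge z
  · exact ⟨x, hx, hzx⟩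
  · exact ⟨x, hx, hz.le_of_le ⟨X, hX, hx⟩ hxz⟩

theorem exists_coe_eq_setOfPred_minimal [WellFoundedLT P] (hX : IsMaximumAntichain X) :
    ∃ Z : Finset P, IsMaximumAntichain Z ∧
      (Z : Set P) = {z | Minimal (· ∈ maximumAntichainUnion P) z} := by
  have hfin : {z | Minimal (· ∈ maximumAntichainUnion P) z}.Finite :=
    hX.finite_of_isAntichain (setOfPred_minimal_antichain _)
  obtain ⟨W, hW, hsub⟩ := hX.exists_superset_of_forall_minimal hfin.toFinset
    fun z hz => hfin.mem_toFinset.1 hz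
  have hZW : ∀ z, Minimal (· ∈ maximumAntichainUnion P) z → z ∈ W :=
    fun z hz => hsub (hfin.mem_toFinset.2 hz)
  refine ⟨W, hW, Set.Subset.antisymm (fun w hw => ?_) hZW⟩
  obtain ⟨z, hzw, hz⟩ := exists_minimal_le_of_wellFoundedLT _ w
    (show w ∈ maximumAntichainUnion P from ⟨W, hW, hw⟩)
  rwa [← hW.isAntichain.eq (hZW z hz) hw hzw]

theorem exists_forall_isCofinalFor [WellFoundedLT P] (hX : IsMaximumAntichain X) :
    ∃ Z : Finset P, IsMaximumAntichain Z ∧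
      ∀ Y : Finset P, IsMaximumAntichain Y → IsCofinalFor (Z : Set P) Y := by
  obtain ⟨Z, hZ, hZ_eq⟩ := hX.exists_coe_eq_setOfPred_minimal
  exact ⟨Z, hZ, fun Y hY => hZ_eq ▸ hY.isCofinalFor_setOfPred_minimal⟩

end IsMaximumAntichain

end MaximumAntichains

theorem stmt_0_general {P : Type*} [PartialOrder P] [WellFoundedLT P] (m : ℕ)
    (hmax : ∀ A : Finset P, IsAntichain (· ≤ ·) (A : Set P) → A.card ≤ m)
    (hex : ∃ A : Finset P, IsAntichain (· ≤ ·) (A : Set P) ∧ A.card = m) :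
    (∀ X : Finset P, IsAntichain (· ≤ ·) (X : Set P) → X.card = m → IsCofinalFor (X : Set P) X) ∧
    (∀ X Y Z : Finset P,
      IsAntichain (· ≤ ·) (X : Set P) → X.card = m →
      IsAntichain (· ≤ ·) (Y : Set P) → Y.card = m →
      IsAntichain (· ≤ ·) (Z : Set P) → Z.card = m →
      IsCofinalFor (X : Set P) Y → IsCofinalFor (Y : Set P) Z → IsCofinalFor (X : Set P) Z) ∧
    (∀ X Y : Finset P,
      IsAntichain (· ≤ ·) (X : Set P) → X.card = m →
      IsAntichain (· ≤ ·) (Y : Set P) → Y.card = m →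
      IsCofinalFor (X : Set P) Y → IsCofinalFor (Y : Set P) X → X = Y) ∧
    (∃ Z : Finset P, IsAntichain (· ≤ ·) (Z : Set P) ∧ Z.card = m ∧
      ∀ X : Finset P, IsAntichain (· ≤ ·) (X : Set P) → X.card = m →
        IsCofinalFor (Z : Set P) X) := by
  refine ⟨fun _ _ _ => .rfl, fun _ _ _ _ _ _ _ _ _ => .trans,
    fun X Y hX _ hY _ hXY hYX =>
      Finset.coe_injective (eq_of_isCofinalFor_of_isCofinalFor hX hY hXY hYX), ?_⟩
  obtain ⟨A, hA, rfl⟩ := hex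
  have hAmax : IsMaximumAntichain A := ⟨hA, hmax⟩
  obtain ⟨Z, hZ, hZ_le⟩ := hAmax.exists_forall_isCofinalFor
  obtain ⟨hZ_anti, hZ_card⟩ := hAmax.isMaximumAntichain_iff.1 hZ
  exact ⟨Z, hZ_anti, hZ_card, fun X hX hX_card =>
    hZ_le X (hAmax.isMaximumAntichain_iff.2 ⟨hX, hX_card⟩)⟩

/-- For a finite poset `P` with maximum antichain size `m`, the relation
`X ⪯ Y ↔ ∀ x ∈ X, ∃ y ∈ Y, x ≤ y` is a partial order on the set of `m`-element antichains,
and this poset has a minimum element. -/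
theorem stmt_0 {P : Type*} [PartialOrder P] [Fintype P] (m : ℕ)
    (hmax : ∀ A : Finset P, IsAntichain (· ≤ ·) (A : Set P) → A.card ≤ m)
    (hex : ∃ A : Finset P, IsAntichain (· ≤ ·) (A : Set P) ∧ A.card = m) :
    -- reflexivity
    (∀ X : Finset P, IsAntichain (· ≤ ·) (X : Set P) → X.card = m →
      ∀ x ∈ X, ∃ y ∈ X, x ≤ y) ∧
    -- transitivity
    (∀ X Y Z : Finset P,
      IsAntichain (· ≤ ·) (X : Set P) → X.card = m →
      IsAntichain (· ≤ ·) (Y : Set P) → Y.card = m →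
      IsAntichain (· ≤ ·) (Z : Set P) → Z.card = m →
      (∀ x ∈ X, ∃ y ∈ Y, x ≤ y) → (∀ y ∈ Y, ∃ z ∈ Z, y ≤ z) →
      (∀ x ∈ X, ∃ z ∈ Z, x ≤ z)) ∧
    -- antisymmetry
    (∀ X Y : Finset P,
      IsAntichain (· ≤ ·) (X : Set P) → X.card = m →
      IsAntichain (· ≤ ·) (Y : Set P) → Y.card = m →
      (∀ x ∈ X, ∃ y ∈ Y, x ≤ y) → (∀ y ∈ Y, ∃ x ∈ X, y ≤ x) → X = Y) ∧
    -- existence of a minimum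
    (∃ Z : Finset P, IsAntichain (· ≤ ·) (Z : Set P) ∧ Z.card = m ∧
      ∀ X : Finset P, IsAntichain (· ≤ ·) (X : Set P) → X.card = m →
        ∀ z ∈ Z, ∃ x ∈ X, z ≤ x) :=
  stmt_0_general m hmax hex
end

section
/- Let P be a finite poset partitioned into chains C_1, …, C_m (each C_i is a chain, their union is P, and they are pairwise disjoint), and suppose every antichain of P has size at most m. Let X and Y be m-element antichains of P. Then each intersection X ∩ C_i and Y ∩ C_i is a singleton, say X ∩ C_i = {x_i} and Y ∩ C_i = {y_i}, and the following are equivalent: (1) x_i ≤ y_i for all i ∈ {1,…,m}; (2) for every x ∈ X there exists y ∈ Y with x ≤ y. -/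
/-!
A chain and an antichain share at most one element. Hence sending each element of an antichain `X`
to the index of a chain containing it is injective, and it is onto as soon as `X` has at least as
many elements as there are chains; so `X` meets every chain exactly once. If `x` and `y ∈ Y` lie on
a common chain and `x ≤ z` for some `z ∈ Y`, then either `x ≤ y`, or `y ≤ x ≤ z`, which forces
`y = z` because `Y` is an antichain.
-/

section Relation

variable {ι α : Type*} {r : α → α → Prop} {C : ι → Set α}

theorem injective_of_isAntichain_of_forall_mem_chain {X : Set α} (hC : ∀ i, IsChain r (C i))
    (hX : IsAntichain r X) {f : X → ι} (hf : ∀ x : X, (x : α) ∈ C (f x)) :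
    Function.Injective f := fun x y hxy ↦
  Subtype.ext <| inter_subsingleton_of_isChain_of_isAntichain (hC (f x)) hX
    ⟨hf x, x.2⟩ ⟨hxy ▸ hf y, y.2⟩

theorem existsUnique_mem_chain_of_isAntichain [Fintype ι] {X : Finset α}
    (hC : ∀ i, IsChain r (C i)) (hX : IsAntichain r (X : Set α)) (hXC : ∀ x ∈ X, ∃ i, x ∈ C i)
    (hcard : Fintype.card ι ≤ X.card) (i : ι) : ∃! x, x ∈ X ∧ x ∈ C i := by
  choose f hf using fun x : (X : Set α) ↦ hXC x x.2
  have hf_inj : Function.Injective f := injective_of_isAntichain_of_forall_mem_chain hC hX hf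
  have hf_bij : Function.Bijective f := hf_inj.bijective_of_nat_card_le (by simpa using hcard)
  obtain ⟨x, rfl⟩ := hf_bij.surjective i
  exact ⟨x, ⟨x.2, hf x⟩, fun y hy ↦
    inter_subsingleton_of_isChain_of_isAntichain (hC (f x)) hX hy.symm ⟨hf x, x.2⟩⟩

end Relation

section Preorder

variable {ι α : Type*} [Preorder α]

theorem le_of_isChain_of_isAntichain_of_exists_le {D Y : Set α} (hD : IsChain (· ≤ ·) D)
    (hY : IsAntichain (· ≤ ·) Y) {x y : α} (hxD : x ∈ D) (hyD : y ∈ D) (hyY : y ∈ Y)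
    (hxY : ∃ z ∈ Y, x ≤ z) : x ≤ y := by
  obtain ⟨z, hzY, hxz⟩ := hxY
  rcases hD.total hxD hyD with hxy | hyx
  · exact hxy
  · have hyz : y = z := hY.eq hyY hzY (hyx.trans hxz)
    exact hyz ▸ hxz

theorem forall_mem_chain_le_iff_forall_exists_le {C : ι → Set α} {X Y : Set α}
    (hC : ∀ i, IsChain (· ≤ ·) (C i)) (hY : IsAntichain (· ≤ ·) Y)
    (hXC : ∀ x ∈ X, ∃ i, x ∈ C i) (hYC : ∀ i, ∃ y ∈ Y, y ∈ C i) :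
    (∀ i, ∀ x y : α, x ∈ X → x ∈ C i → y ∈ Y → y ∈ C i → x ≤ y) ↔ ∀ x ∈ X, ∃ y ∈ Y, x ≤ y := by
  constructor
  · intro hle x hxX
    obtain ⟨i, hxi⟩ := hXC x hxX
    obtain ⟨y, hyY, hyi⟩ := hYC i
    exact ⟨y, hyY, hle i x y hxX hxi hyY hyi⟩
  · intro hXY i x y hxX hxi hyY hyi
    exact le_of_isChain_of_isAntichain_of_exists_le (hC i) hY hxi hyi hyY (hXY x hxX)

theorem stmt_1_general [Fintype ι] {C : ι → Set α} {X Y : Finset α}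
    (hchain : ∀ i, IsChain (· ≤ ·) (C i))
    (hXC : ∀ x ∈ X, ∃ i, x ∈ C i) (hYC : ∀ y ∈ Y, ∃ i, y ∈ C i)
    (hX : IsAntichain (· ≤ ·) (X : Set α)) (hXcard : Fintype.card ι ≤ X.card)
    (hY : IsAntichain (· ≤ ·) (Y : Set α)) (hYcard : Fintype.card ι ≤ Y.card) :
    (∀ i, ∃! x, x ∈ X ∧ x ∈ C i) ∧
    (∀ i, ∃! y, y ∈ Y ∧ y ∈ C i) ∧
    ((∀ i, ∀ x y : α, x ∈ X → x ∈ C i → y ∈ Y → y ∈ C i → x ≤ y) ↔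
      (∀ x ∈ X, ∃ y ∈ Y, x ≤ y)) := by
  have hX_meets := existsUnique_mem_chain_of_isAntichain hchain hX hXC hXcard
  have hY_meets := existsUnique_mem_chain_of_isAntichain hchain hY hYC hYcard
  exact ⟨hX_meets, hY_meets,
    forall_mem_chain_le_iff_forall_exists_le hchain hY hXC fun i ↦ (hY_meets i).exists⟩

end Preorder

/-- If a finite poset `P` is partitioned into `m` chains and every antichain
has size at most `m`, then each `m`-element antichain meets each chain in exactly one
element, and for two `m`-antichains `X`, `Y` the chainwise comparison `x_i ≤ y_i` for all `i`
is equivalent to: for every `x ∈ X` there exists `y ∈ Y` with `x ≤ y`. -/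
theorem stmt_1 {P : Type*} [PartialOrder P] [Fintype P] (m : ℕ) (C : Fin m → Finset P)
    (hchain : ∀ i, IsChain (· ≤ ·) ((C i : Set P)))
    (hcover : ∀ p : P, ∃ i, p ∈ C i)
    (hdisj : ∀ i j, i ≠ j → ∀ p : P, p ∈ C i → p ∉ C j)
    (hmax : ∀ A : Finset P, IsAntichain (· ≤ ·) (A : Set P) → A.card ≤ m)
    (X Y : Finset P)
    (hX : IsAntichain (· ≤ ·) (X : Set P)) (hXcard : X.card = m)
    (hY : IsAntichain (· ≤ ·) (Y : Set P)) (hYcard : Y.card = m) :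
    (∀ i, ∃! x : P, x ∈ X ∧ x ∈ C i) ∧
    (∀ i, ∃! y : P, y ∈ Y ∧ y ∈ C i) ∧
    ((∀ i, ∀ x y : P, x ∈ X → x ∈ C i → y ∈ Y → y ∈ C i → x ≤ y) ↔
      (∀ x ∈ X, ∃ y ∈ Y, x ≤ y)) := by
  exact stmt_1_general hchain (fun x _ ↦ hcover x) (fun y _ ↦ hcover y)
    hX (by simp [hXcard]) hY (by simp [hYcard])
end

section
/- Fix integers m, n ≥ 3, 2 ≤ k < min(m,n), and any positive real edge weights ω on the grid Γ. Let I, J ⊆ {1,…,2k−1} with |I| = |J| = k−1 and 1 ∉ J, 2k−1 ∉ J. Set J′ := {2,…,2k−1} ∖ J and J″ := {1,…,2k−2} ∖ J. Then wt(I,J) = wt(I,J′) + wt(I,J″). -/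
/-- One step of a directed path in the grid `Γ`: from `(i,j)` to `(i+1,j)` or `(i,j+1)`. -/
def GridStep (u v : ℕ × ℕ) : Prop := v = (u.1 + 1, u.2) ∨ v = (u.1, u.2 + 1)

/-- `p` is a directed path in the grid `{1,…,m} × {1,…,n}` from `src` to `tgt`. -/
def IsGridPath (m n : ℕ) (src tgt : ℕ × ℕ) (p : List (ℕ × ℕ)) : Prop :=
  p.head? = some src ∧ p.getLast? = some tgt ∧
  (∀ v ∈ p, 1 ≤ v.1 ∧ v.1 ≤ m ∧ 1 ≤ v.2 ∧ v.2 ≤ n) ∧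
  List.Chain' GridStep p

/-- A tuple of pairwise vertex-disjoint directed paths in the grid `{1,…,m} × {1,…,n}`,
the `l`-th one going from the `l`-th entry of `src` to the `l`-th entry of `tgt`. -/
structure NCTuple (m n : ℕ) (src tgt : List (ℕ × ℕ)) where
  path : List (List (ℕ × ℕ))
  hlen : path.length = src.length
  hlen' : path.length = tgt.length
  valid : ∀ l, l < path.length →
    IsGridPath m n (src.getD l (0, 0)) (tgt.getD l (0, 0)) (path.getD l [])
  disj : ∀ l l', l < path.length → l' < path.length → l ≠ l' →
    ∀ v ∈ path.getD l [], v ∉ path.getD l' []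

/-- The weight of a path: the product of the weights of its edges. -/
noncomputable def pathEdgeWeight (ω : ℕ × ℕ → ℕ × ℕ → ℝ) (p : List (ℕ × ℕ)) : ℝ :=
  ((p.zip p.tail).map fun e => ω e.1 e.2).prod

/-- The weight of a tuple of paths: the product of the weights of its paths. -/
noncomputable def tupleEdgeWeight (ω : ℕ × ℕ → ℕ × ℕ → ℝ) (ps : List (List (ℕ × ℕ))) : ℝ :=
  (ps.map (pathEdgeWeight ω)).prod

/-- The source `s_i` (for `1 ≤ i ≤ 2k-1`): `s_{2i-1} = (k+1-i, i)`, `s_{2i} = (k-i, i)`. -/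
def gridSource (k i : ℕ) : ℕ × ℕ :=
  if i % 2 = 1 then (k + 1 - (i + 1) / 2, (i + 1) / 2) else (k - i / 2, i / 2)

/-- The sink `t_j` (for `1 ≤ j ≤ 2k-1`): `t_{2j-1} = (m+1-j, n-k+j)`, `t_{2j} = (m-j, n-k+j)`. -/
def gridSink (m n k i : ℕ) : ℕ × ℕ :=
  if i % 2 = 1 then (m + 1 - (i + 1) / 2, n - k + (i + 1) / 2)
  else (m - i / 2, n - k + i / 2)

/-- `wt(I,J)`: the sum over all pairs `(R,B)` with
`R ∈ NCPath(I,J)` and `B ∈ NCPath({1,…,2k-1}∖I, {1,…,2k-1}∖J)` of `wt(R)·wt(B)`. -/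
noncomputable def patWeight (m n k : ℕ) (ω : ℕ × ℕ → ℕ × ℕ → ℝ) (I J : Finset ℕ) : ℝ :=
  ∑ᶠ RB : NCTuple m n ((I.sort (· ≤ ·)).map (gridSource k))
            ((J.sort (· ≤ ·)).map (gridSink m n k)) ×
          NCTuple m n (((Finset.Icc 1 (2 * k - 1) \ I).sort (· ≤ ·)).map (gridSource k))
            (((Finset.Icc 1 (2 * k - 1) \ J).sort (· ≤ ·)).map (gridSink m n k)),
    tupleEdgeWeight ω RB.1.path * tupleEdgeWeight ω RB.2.path

/-!
By the Lindström–Gessel–Viennot lemma every `wt(I, J)` is a product of two minors of the matrix of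
path generating functions from the sources to the sinks. A path leaving `s_{2q}` passes through
`s_{2q-1}` or `s_{2q+1}`, so this matrix factors as `L * O`, where `O` consists of the `k` odd
rows. A path into an inner odd sink `t_{2q+1}` comes through `t_{2q}` or `t_{2q+2}`, so the columns
`2, …, 2k-2` of `O` are spanned by the `k-1` even ones and lie in a hyperplane.

The `(k-1)`-minor of `L * O` with rows `I` and columns `J` is the determinant of the columns `J` of
`O` together with a vector `e` depending only on `I`. Expanding `e` by Cramer's rule in the `k`
columns outside `J` exchanges it with each of them in turn; the exchanged column and the columns
`J` all lie in the hyperplane unless the exchanged column is the first or the last one, so only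
these two terms survive.
-/

/-! ### Exchange relations between determinants -/

theorem det_smul_map_eq_sum_det_updateRow {n R M : Type*} [Fintype n] [DecidableEq n] [CommRing R]
    [AddCommGroup M] [Module R M] (A : Matrix n n R) (φ : (n → R) →ₗ[R] M) (e : n → R) :
    A.det • φ e = ∑ i, (A.updateRow i e).det • φ (A i) := by
  have cramer : A.det • e = ∑ i, (A.updateRow i e).det • A i := by
    simpa only [Matrix.mulVec_transpose, Matrix.vecMul_eq_sum, Matrix.cramer_transpose_apply,
      Matrix.det_transpose] using (Matrix.mulVec_cramer A.transpose e).symm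
  rw [← map_smul, cramer, map_sum]
  simp only [map_smul]

section CommRing

variable {R : Type*} [CommRing R] {r : ℕ}

/-- The determinant of the matrix with rows `e, c 0, …, c (r - 1)`, as a linear form in `e`. -/
def detCons (c : Fin r → Fin (r + 1) → R) : (Fin (r + 1) → R) →ₗ[R] R :=
  Matrix.detRowAlternating.toMultilinearMap.toLinearMap
    (Fin.cons 0 c : Fin (r + 1) → Fin (r + 1) → R) 0

theorem detCons_apply (c : Fin r → Fin (r + 1) → R) (e : Fin (r + 1) → R) :
    detCons c e = (Matrix.of (Fin.cons e c)).det := by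
  simp only [detCons, MultilinearMap.toLinearMap_apply, Fin.update_cons_zero]
  rfl

theorem det_snoc (c : Fin r → Fin (r + 1) → R) (e : Fin (r + 1) → R) :
    (Matrix.of (Fin.snoc c e : Fin (r + 1) → Fin (r + 1) → R)).det = (-1) ^ r * detCons c e := by
  have rotate : Matrix.of (Fin.snoc c e : Fin (r + 1) → Fin (r + 1) → R) =
      (Matrix.of (Fin.cons e c : Fin (r + 1) → Fin (r + 1) → R)).submatrix
        (finRotate (r + 1)) id := by
    ext i j
    exact congrFun (congrFun (Fin.snoc_eq_cons_rotate c e) i) j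
  rw [rotate, Matrix.det_permute, sign_finRotate, detCons_apply]
  simp

theorem det_updateRow_zero (d : Fin (r + 1) → Fin (r + 1) → R) (e : Fin (r + 1) → R) :
    ((Matrix.of d).updateRow 0 e).det = detCons (Fin.tail d) e := by
  rw [detCons_apply]
  congr 1
  exact (congrArg (Function.update · 0 e) (Fin.cons_self_tail d)).symm.trans
    (Fin.update_cons_zero ..)

theorem det_updateRow_last (d : Fin (r + 1) → Fin (r + 1) → R) (e : Fin (r + 1) → R) :
    ((Matrix.of d).updateRow (Fin.last r) e).det = (-1) ^ r * detCons (Fin.init d) e := by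
  rw [← det_snoc]
  congr 1
  exact (congrArg (Function.update · (Fin.last r) e) (Fin.snoc_init_self d)).symm.trans
    (Fin.update_snoc_last ..)

end CommRing

section Field

variable {K : Type*} [Field K] {r : ℕ}

theorem exists_ne_zero_mulVec_eq_zero (A : Matrix (Fin r) (Fin (r + 1)) K) :
    ∃ y ≠ 0, A.mulVec y = 0 := by
  obtain ⟨y, hy, hy0⟩ := (Submodule.ne_bot_iff _).1
    (LinearMap.ker_ne_bot_of_finrank_lt (f := A.mulVecLin) (by simp))
  exact ⟨y, hy0, hy⟩

theorem detCons_eq_zero_of_dotProduct_eq_zero {c : Fin r → Fin (r + 1) → K}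
    {v x : Fin (r + 1) → K} (hx : x ≠ 0) (hv : v ⬝ᵥ x = 0) (hc : ∀ j, c j ⬝ᵥ x = 0) :
    detCons c v = 0 := by
  rw [detCons_apply, ← Matrix.exists_mulVec_eq_zero_iff]
  refine ⟨x, hx, funext fun j => ?_⟩
  cases j using Fin.cases with
  | zero => exact hv
  | succ j => exact hc j

theorem det_mul_transpose_eq_detCons_mul_detCons {a : Fin r → Fin (r + 1) → K}
    {y z : Fin (r + 1) → K} (hy : (Matrix.of a).mulVec y = 0) (hzy : z ⬝ᵥ y = 1)
    (c : Fin r → Fin (r + 1) → K) :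
    (Matrix.of a * (Matrix.of c).transpose).det = detCons a z * detCons c y := by
  set N := Matrix.of (Fin.cons z a : Fin (r + 1) → Fin (r + 1) → K) *
    (Matrix.of (Fin.cons y c : Fin (r + 1) → Fin (r + 1) → K)).transpose with hN
  have corner : N 0 0 = 1 := hzy
  have below (i : Fin r) : N i.succ 0 = 0 := congrFun hy i
  have block : N.submatrix Fin.succ Fin.succ = Matrix.of a * (Matrix.of c).transpose := rfl
  calc (Matrix.of a * (Matrix.of c).transpose).det = N.det := by
        simp [Matrix.det_succ_column_zero N, Fin.sum_univ_succ, corner, below, block]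
    _ = detCons a z * detCons c y := by
        rw [hN, Matrix.det_mul, Matrix.det_transpose, detCons_apply, detCons_apply]

/-- The vector `e` is, up to sign, the vector of maximal minors of the matrix with rows `a`. -/
theorem exists_det_mul_transpose_eq_detCons (a : Fin r → Fin (r + 1) → K) :
    ∃ e, ∀ c : Fin r → Fin (r + 1) → K,
      (Matrix.of a * (Matrix.of c).transpose).det = detCons c e := by
  obtain ⟨y, hy0, hy⟩ := exists_ne_zero_mulVec_eq_zero (Matrix.of a)
  obtain ⟨i, hi⟩ := Function.ne_iff.1 hy0
  have hzy : Pi.single i (y i)⁻¹ ⬝ᵥ y = 1 := by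
    rw [single_dotProduct, inv_mul_cancel₀ hi]
  refine ⟨detCons a (Pi.single i (y i)⁻¹) • y, fun c => ?_⟩
  rw [map_smul, smul_eq_mul, det_mul_transpose_eq_detCons_mul_detCons hy hzy]

theorem detCons_mul_det_eq_add (hr : r ≠ 0) (e : Fin (r + 1) → K) {c : Fin r → Fin (r + 1) → K}
    {d : Fin (r + 1) → Fin (r + 1) → K} {x : Fin (r + 1) → K} (hx : x ≠ 0)
    (hc : ∀ j, c j ⬝ᵥ x = 0) (hd : ∀ j, j ≠ 0 → j ≠ Fin.last r → d j ⬝ᵥ x = 0) :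
    detCons c e * (Matrix.of d).det =
      detCons (Fin.tail d) e * detCons c (d 0) +
        detCons (Fin.init d) e *
          (Matrix.of (Fin.snoc c (d (Fin.last r)) : Fin (r + 1) → Fin (r + 1) → K)).det := by
  have row (j : Fin (r + 1)) : Matrix.of d j = d j := rfl
  have exchange := det_smul_map_eq_sum_det_updateRow (Matrix.of d) (detCons c) e
  rw [Fintype.sum_eq_add 0 (Fin.last r) (by simpa [Fin.ext_iff] using hr.symm) fun j hj => by
    rw [row, detCons_eq_zero_of_dotProduct_eq_zero hx (hd j hj.1 hj.2) hc, smul_zero],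
    det_updateRow_zero, det_updateRow_last] at exchange
  simp only [smul_eq_mul, row] at exchange
  rw [det_snoc]
  linear_combination exchange

/-- A three-term Plücker relation: the columns of `O` picked by `c`, and the inner ones picked
by `d`, span at most a hyperplane, so only two exchanges survive. -/
theorem det_submatrix_mul_det_submatrix_eq_add {ι κ : Type*} (hr : r ≠ 0)
    (L : Matrix ι (Fin (r + 1)) K) (O : Matrix (Fin (r + 1)) κ K) (a : Fin r → ι)
    (b : Fin (r + 1) → ι) {c : Fin r → κ} {d : Fin (r + 1) → κ} {x : Fin (r + 1) → K}
    (hx : x ≠ 0) (hc : ∀ j, Matrix.vecMul x O (c j) = 0)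
    (hd : ∀ j, j ≠ 0 → j ≠ Fin.last r → Matrix.vecMul x O (d j) = 0) :
    ((L * O).submatrix a c).det * ((L * O).submatrix b d).det =
      ((L * O).submatrix a (Fin.tail d)).det *
          ((L * O).submatrix b (Fin.cons (d 0) c : Fin (r + 1) → κ)).det +
        ((L * O).submatrix a (Fin.init d)).det *
          ((L * O).submatrix b (Fin.snoc c (d (Fin.last r)) : Fin (r + 1) → κ)).det := by
  obtain ⟨e, he⟩ := exists_det_mul_transpose_eq_detCons fun i => L (a i)
  let w (j : κ) (l : Fin (r + 1)) : K := O l j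
  have minor_a (f : Fin r → κ) : ((L * O).submatrix a f).det = detCons (w ∘ f) e := he (w ∘ f)
  have minor_b (f : Fin (r + 1) → κ) : ((L * O).submatrix b f).det =
      (L.submatrix b id).det * (Matrix.of (w ∘ f)).det := by
    rw [← Matrix.det_transpose (Matrix.of _), ← Matrix.det_mul]
    rfl
  have relation := detCons_mul_det_eq_add hr e (c := w ∘ c) (d := w ∘ d) hx
    (fun j => (dotProduct_comm _ _).trans (hc j))
    (fun j h0 hl => (dotProduct_comm _ _).trans (hd j h0 hl))
  rw [Function.comp_apply, Function.comp_apply] at relation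
  simp only [minor_a, minor_b, Fin.comp_cons, Fin.comp_snoc, ← detCons_apply, Fin.comp_tail,
    Fin.comp_init]
  linear_combination (L.submatrix b id).det * relation

end Field

/-! ### Directed paths graded by a level -/

section PathWeight

variable {V R : Type*} [Monoid R]

/-- The product of the edge weights `ω` along a list of vertices, in an arbitrary monoid; on the
grid it is `pathEdgeWeight`. -/
def pathWeight (ω : V → V → R) (p : List V) : R :=
  ((p.zip p.tail).map fun e => ω e.1 e.2).prod

theorem pathWeight_pair (ω : V → V → R) (u v : V) : pathWeight ω [u, v] = ω u v := by
  simp [pathWeight]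

theorem pathWeight_append_cons (ω : V → V → R) (p : List V) (v : V) (q : List V) :
    pathWeight ω (p ++ v :: q) = pathWeight ω (p ++ [v]) * pathWeight ω (v :: q) := by
  induction p with
  | nil => simp [pathWeight]
  | cons u p ih => cases p <;> simp_all [pathWeight, mul_assoc]

end PathWeight

/-- A directed graph in which every edge strictly increases a level function, with a finite set
`verts` of vertices that paths are allowed to visit. -/
structure LevelledDigraph (V : Type*) where
  verts : Finset V
  Adj : V → V → Prop
  level : V → ℕ
  level_lt_of_adj : ∀ {u v}, Adj u v → level u < level v

namespace LevelledDigraph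

variable {V : Type*} (G : LevelledDigraph V) {s t s' t' u v : V} {p q : List V}

/-- Directed paths from `s` to `t` inside `G.verts`, given by their list of vertices. -/
def IsPath (s t : V) (p : List V) : Prop :=
  p.head? = some s ∧ p.getLast? = some t ∧ (∀ v ∈ p, v ∈ G.verts) ∧ p.IsChain G.Adj

variable {G}

theorem isPath_append_cons :
    G.IsPath s t (p ++ v :: q) ↔ G.IsPath s v (p ++ [v]) ∧ G.IsPath v t (v :: q) := by
  have head : (p ++ v :: q).head? = (p ++ [v]).head? := by cases p <;> rfl
  rw [IsPath, head, List.isChain_split, IsPath, IsPath]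
  simp only [List.getLast?_append_cons, List.getLast?_singleton, List.head?_cons, List.mem_append,
    List.mem_cons]
  grind

theorem isPath_pair : G.IsPath u v [u, v] ↔ u ∈ G.verts ∧ v ∈ G.verts ∧ G.Adj u v := by
  simp [IsPath, and_assoc]

theorem isPath_iff_exists_succ (hst : s ≠ t) : G.IsPath s t p ↔
    ∃ v q, p = s :: v :: q ∧ s ∈ G.verts ∧ G.Adj s v ∧ G.IsPath v t (v :: q) := by
  have split (v : V) (q : List V) : G.IsPath s t (s :: v :: q) ↔
      s ∈ G.verts ∧ G.Adj s v ∧ G.IsPath v t (v :: q) := by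
    refine (isPath_append_cons (p := [s])).trans ?_
    rw [List.singleton_append, isPath_pair]
    exact ⟨fun h => ⟨h.1.1, h.1.2.2, h.2⟩, fun h => ⟨⟨h.1, h.2.2.2.2.1 v (by simp), h.2.1⟩, h.2.2⟩⟩
  constructor
  · intro hp
    obtain ⟨_ | ⟨v, q⟩, rfl⟩ := List.head?_eq_some_iff.1 hp.1
    · exact absurd (by simpa using hp.2.1) hst
    · exact ⟨v, q, rfl, (split v q).1 hp⟩
  · rintro ⟨v, q, rfl, h⟩
    exact (split v q).2 h

theorem isPath_iff_exists_pred (hst : s ≠ t) : G.IsPath s t p ↔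
    ∃ v q, p = q ++ [v, t] ∧ t ∈ G.verts ∧ G.Adj v t ∧ G.IsPath s v (q ++ [v]) := by
  have split (v : V) (q : List V) : G.IsPath s t (q ++ [v, t]) ↔
      t ∈ G.verts ∧ G.Adj v t ∧ G.IsPath s v (q ++ [v]) := by
    rw [isPath_append_cons, isPath_pair]
    exact ⟨fun h => ⟨h.2.2.1, h.2.2.2, h.1⟩, fun h => ⟨h.2.2, h.2.2.2.2.1 v (by simp), h.1, h.2.1⟩⟩
  constructor
  · intro hp
    obtain ⟨p', rfl⟩ := List.getLast?_eq_some_iff.1 hp.2.1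
    obtain rfl | ⟨q, v, rfl⟩ := List.eq_nil_or_concat p'
    · exact absurd (by simpa using hp.1.symm) hst
    · rw [List.concat_eq_append, List.append_assoc, List.singleton_append] at hp ⊢
      exact ⟨v, q, rfl, (split v q).1 hp⟩
  · rintro ⟨v, q, rfl, h⟩
    exact (split v q).2 h

theorem IsPath.pairwise_level_lt (hp : G.IsPath s t p) :
    p.Pairwise fun u v => G.level u < G.level v := by
  have : Trans (fun u v => G.level u < G.level v) (fun u v => G.level u < G.level v)
      (fun u v => G.level u < G.level v) := ⟨lt_trans⟩
  exact List.isChain_iff_pairwise.1 (hp.2.2.2.imp fun _ _ => G.level_lt_of_adj)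

variable (G)

theorem finite_setOf_isPath (s t : V) : {p | G.IsPath s t p}.Finite := by
  classical
  refine Set.Finite.of_finite_image (f := List.toFinset)
    (G.verts.powerset.finite_toSet.subset ?_) ?_
  · rintro _ ⟨p, hp, rfl⟩
    exact Finset.mem_powerset.2 fun v hv => hp.2.2.1 v (List.mem_toFinset.1 hv)
  · intro p hp q hq hpq
    have hp := IsPath.pairwise_level_lt hp
    have hq := IsPath.pairwise_level_lt hq
    have nodup {l : List V} (hl : l.Pairwise fun u v => G.level u < G.level v) : l.Nodup :=
      hl.imp fun h => ne_of_apply_ne G.level h.ne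
    exact List.Perm.eq_of_pairwise (fun u v _ _ huv hvu => absurd huv hvu.asymm) hp hq
      (List.perm_of_nodup_nodup_toFinset_eq (nodup hp) (nodup hq) hpq)

/-- The finite set of directed paths from `s` to `t`. -/
noncomputable def paths (s t : V) : Finset (List V) := (G.finite_setOf_isPath s t).toFinset

variable {G}

theorem mem_paths : p ∈ G.paths s t ↔ G.IsPath s t p := Set.Finite.mem_toFinset _

section PathSum

variable {R : Type*} [Semiring R]

variable (G) in
/-- The generating function of the paths from `s` to `t`. -/
noncomputable def pathSum (ω : V → V → R) (s t : V) : R := ∑ p ∈ G.paths s t, pathWeight ω p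

theorem pathSum_eq_sum_succ (ω : V → V → R) (hs : s ∈ G.verts) (hst : s ≠ t) {N : Finset V}
    (hN : ∀ v, v ∈ N ↔ G.Adj s v) : G.pathSum ω s t = ∑ v ∈ N, ω s v * G.pathSum ω v t := by
  simp only [pathSum, Finset.mul_sum]
  rw [Finset.sum_sigma', eq_comm]
  refine Finset.sum_bij (fun x _ => s :: x.2) ?_ ?_ ?_ ?_
  all_goals simp only [Finset.mem_sigma, mem_paths, hN]
  · rintro ⟨v, p⟩ ⟨hv, hp : G.IsPath v t p⟩
    obtain ⟨q, rfl⟩ := List.head?_eq_some_iff.1 hp.1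
    exact (isPath_iff_exists_succ hst).2 ⟨v, q, rfl, hs, hv, hp⟩
  · rintro ⟨v, p⟩ ⟨-, hp⟩ ⟨w, q⟩ ⟨-, hq⟩ hpq
    obtain rfl : p = q := List.tail_eq_of_cons_eq hpq
    obtain rfl : v = w := Option.some.inj (hp.1.symm.trans hq.1)
    rfl
  · intro p hp
    obtain ⟨v, q, rfl, -, hv, hq⟩ := (isPath_iff_exists_succ hst).1 hp
    exact ⟨⟨v, v :: q⟩, ⟨hv, hq⟩, rfl⟩
  · rintro ⟨v, p⟩ ⟨-, hp : G.IsPath v t p⟩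
    obtain ⟨q, rfl⟩ := List.head?_eq_some_iff.1 hp.1
    rw [← pathWeight_pair ω s v]
    exact (pathWeight_append_cons ω [s] v q).symm

theorem pathSum_eq_sum_pred (ω : V → V → R) (ht : t ∈ G.verts) (hst : s ≠ t) {N : Finset V}
    (hN : ∀ v, v ∈ N ↔ G.Adj v t) : G.pathSum ω s t = ∑ v ∈ N, G.pathSum ω s v * ω v t := by
  simp only [pathSum, Finset.sum_mul]
  rw [Finset.sum_sigma', eq_comm]
  refine Finset.sum_bij (fun x _ => x.2 ++ [t]) ?_ ?_ ?_ ?_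
  all_goals simp only [Finset.mem_sigma, mem_paths, hN]
  · rintro ⟨v, p⟩ ⟨hv, hp : G.IsPath s v p⟩
    obtain ⟨q, rfl⟩ := List.getLast?_eq_some_iff.1 hp.2.1
    exact (isPath_iff_exists_pred hst).2 ⟨v, q, List.append_assoc .., ht, hv, hp⟩
  · rintro ⟨v, p⟩ ⟨-, hp⟩ ⟨w, q⟩ ⟨-, hq⟩ hpq
    obtain rfl : p = q := List.append_cancel_right hpq
    obtain rfl : v = w := Option.some.inj (hp.2.1.symm.trans hq.2.1)
    rfl
  · intro p hp
    obtain ⟨v, q, rfl, -, hv, hq⟩ := (isPath_iff_exists_pred hst).1 hp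
    exact ⟨⟨v, q ++ [v]⟩, ⟨hv, hq⟩, List.append_assoc ..⟩
  · rintro ⟨v, p⟩ ⟨-, hp : G.IsPath s v p⟩
    obtain ⟨q, rfl⟩ := List.getLast?_eq_some_iff.1 hp.2.1
    rw [List.append_assoc, ← pathWeight_pair ω v t]
    exact (pathWeight_append_cons ω q v [t]).symm

end PathSum

/-! ### The Lindström–Gessel–Viennot lemma -/

section Crossover

variable {d : ℕ} {p₁ p₂ q₁ q₂ : List V}

variable (G) in
/-- The list following `p` up to level `d` and `q` above it. -/
def crossover (d : ℕ) (p q : List V) : List V :=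
  p.filter (G.level · ≤ d) ++ q.filter (d < G.level ·)

theorem crossover_self (hp : p.Pairwise fun u v => G.level u < G.level v) :
    G.crossover d p p = p := by
  have above : p.filter (d < G.level ·) = p.filter (fun v => !decide (G.level v ≤ d)) := by
    simp only [← not_le, decide_not]
  refine List.Perm.eq_of_pairwise (fun u v _ _ huv hvu => absurd huv hvu.asymm) ?_ hp ?_
  · refine List.pairwise_append.2 ⟨hp.filter _, hp.filter _, fun u hu v hv => ?_⟩
    have hu := of_decide_eq_true (List.mem_filter.1 hu).2
    have hv := of_decide_eq_true (List.mem_filter.1 hv).2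
    exact hu.trans_lt hv
  · rw [crossover, above]
    exact List.filter_append_perm _ p

theorem crossover_crossover :
    G.crossover d (G.crossover d p₁ p₂) (G.crossover d q₁ q₂) = G.crossover d p₁ q₂ := by
  have below_above (l : List V) : (l.filter (d < G.level ·)).filter (G.level · ≤ d) = [] := by
    simp [List.filter_filter]
  have above_below (l : List V) : (l.filter (G.level · ≤ d)).filter (d < G.level ·) = [] := by
    simp [List.filter_filter]
  simp [crossover, below_above, above_below]

theorem mem_crossover (hv : G.level v ≤ d) : v ∈ G.crossover d p q ↔ v ∈ p := by
  simp [crossover, hv]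

theorem crossover_append_cons
    (hp : (p₁ ++ v :: p₂).Pairwise fun u v => G.level u < G.level v)
    (hq : (q₁ ++ v :: q₂).Pairwise fun u v => G.level u < G.level v) :
    G.crossover (G.level v) (p₁ ++ v :: p₂) (q₁ ++ v :: q₂) = p₁ ++ v :: q₂ := by
  obtain ⟨-, hvp₂, hp₁v⟩ := List.pairwise_append.1 hp
  obtain ⟨-, hvq₂, hq₁v⟩ := List.pairwise_append.1 hq
  have below_p₁ : p₁.filter (G.level · ≤ G.level v) = p₁ :=
    List.filter_eq_self.2 fun u hu => decide_eq_true (hp₁v u hu v List.mem_cons_self).le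
  have below_p₂ : p₂.filter (G.level · ≤ G.level v) = [] :=
    List.filter_eq_nil_iff.2 fun u hu => by simpa using List.rel_of_pairwise_cons hvp₂ hu
  have above_q₁ : q₁.filter (G.level v < G.level ·) = [] :=
    List.filter_eq_nil_iff.2 fun u hu => by simpa using (hq₁v u hu v List.mem_cons_self).le
  have above_q₂ : q₂.filter (G.level v < G.level ·) = q₂ :=
    List.filter_eq_self.2 fun u hu => decide_eq_true (List.rel_of_pairwise_cons hvq₂ hu)
  simp [crossover, below_p₁, below_p₂, above_q₁, above_q₂]

theorem IsPath.crossover (hp : G.IsPath s t p) (hq : G.IsPath s' t' q) (hvp : v ∈ p)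
    (hvq : v ∈ q) : G.IsPath s t' (G.crossover (G.level v) p q) := by
  obtain ⟨p₁, p₂, rfl⟩ := List.append_of_mem hvp
  obtain ⟨q₁, q₂, rfl⟩ := List.append_of_mem hvq
  rw [crossover_append_cons hp.pairwise_level_lt hq.pairwise_level_lt]
  exact isPath_append_cons.2 ⟨(isPath_append_cons.1 hp).1, (isPath_append_cons.1 hq).2⟩

theorem pathWeight_crossover_mul_pathWeight_crossover {R : Type*} [CommMonoid R] (ω : V → V → R)
    (hp : G.IsPath s t p) (hq : G.IsPath s' t' q) (hvp : v ∈ p) (hvq : v ∈ q) :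
    pathWeight ω (G.crossover (G.level v) p q) * pathWeight ω (G.crossover (G.level v) q p) =
      pathWeight ω p * pathWeight ω q := by
  obtain ⟨p₁, p₂, rfl⟩ := List.append_of_mem hvp
  obtain ⟨q₁, q₂, rfl⟩ := List.append_of_mem hvq
  rw [crossover_append_cons hp.pairwise_level_lt hq.pairwise_level_lt,
    crossover_append_cons hq.pairwise_level_lt hp.pairwise_level_lt]
  simp only [pathWeight_append_cons ω _ v p₂, pathWeight_append_cons ω _ v q₂]
  ac_rfl

end Crossover

section Uncross

variable {ι : Type*} {d e : ℕ} {P : ι → List V}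

variable (G) in
/-- The ordered pairs of distinct members of the family `P` that share a vertex of level `d`. -/
def meetingPairs (P : ι → List V) (d : ℕ) : Set (ι × ι) :=
  {x | x.1 ≠ x.2 ∧ ∃ v ∈ P x.1, v ∈ P x.2 ∧ G.level v = d}

variable (G) in
/-- Some two members of the family `P` share a vertex. -/
def Meets (P : ι → List V) : Prop := ∃ d, (G.meetingPairs P d).Nonempty

theorem not_meets_iff : ¬ G.Meets P ↔ Pairwise fun i j => (P i).Disjoint (P j) := by
  constructor
  · exact fun h i j hij v hi hj => h ⟨_, (i, j), hij, v, hi, hj, rfl⟩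
  · rintro h ⟨_, x, hx, v, hv₁, hv₂, -⟩
    exact h hx hv₁ hv₂

variable (G) in
/-- The lowest level at which two members of `P` meet. -/
noncomputable def firstMeetingLevel (P : ι → List V) : ℕ :=
  sInf {d | (G.meetingPairs P d).Nonempty}

theorem firstMeetingLevel_le (h : (G.meetingPairs P d).Nonempty) : G.firstMeetingLevel P ≤ d :=
  Nat.sInf_le h

theorem Meets.nonempty_meetingPairs (h : G.Meets P) :
    (G.meetingPairs P (G.firstMeetingLevel P)).Nonempty := Nat.sInf_mem h

/-- A chosen pair meeting at the lowest level; as a choice from the set `meetingPairs`, it depends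
on nothing else about `P`. -/
noncomputable def Meets.firstPair (h : G.Meets P) : ι × ι := h.nonempty_meetingPairs.some

theorem Meets.firstPair_mem (h : G.Meets P) :
    h.firstPair ∈ G.meetingPairs P (G.firstMeetingLevel P) := h.nonempty_meetingPairs.some_mem

variable [DecidableEq ι]

variable (G) in
/-- The family obtained by exchanging, above level `d`, the members of `P` indexed by `x`. -/
def swapTails (P : ι → List V) (d : ℕ) (x : ι × ι) (i : ι) : List V :=
  G.crossover d (P i) (P (Equiv.swap x.1 x.2 i))

theorem swapTails_swapTails {x : ι × ι}
    (hP : ∀ i, (P i).Pairwise fun u v => G.level u < G.level v) :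
    G.swapTails (G.swapTails P d x) d x = P := by
  funext i
  simp only [swapTails, Equiv.swap_apply_self, crossover_crossover, crossover_self (hP i)]

theorem meetingPairs_swapTails (x : ι × ι) (hed : e ≤ d) :
    G.meetingPairs (G.swapTails P d x) e = G.meetingPairs P e := by
  ext y
  refine and_congr_right fun _ => exists_congr fun v => ?_
  constructor <;> rintro ⟨h₁, h₂, rfl⟩ <;>
    simpa only [swapTails, mem_crossover hed, and_true] using And.intro h₁ h₂

/-- The sign-reversing involution: exchange the tails of a pair that meets first. -/
noncomputable def Meets.uncross (h : G.Meets P) : ι → List V :=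
  G.swapTails P (G.firstMeetingLevel P) h.firstPair

theorem Meets.meets_uncross (h : G.Meets P) : G.Meets h.uncross :=
  ⟨_, (meetingPairs_swapTails h.firstPair le_rfl).symm ▸ h.nonempty_meetingPairs⟩

theorem Meets.firstMeetingLevel_uncross (h : G.Meets P) :
    G.firstMeetingLevel h.uncross = G.firstMeetingLevel P := by
  have below {e : ℕ} (he : e ≤ G.firstMeetingLevel P) :
      G.meetingPairs h.uncross e = G.meetingPairs P e := meetingPairs_swapTails _ he
  have le : G.firstMeetingLevel h.uncross ≤ G.firstMeetingLevel P :=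
    firstMeetingLevel_le ((below le_rfl).symm ▸ h.nonempty_meetingPairs)
  exact le.antisymm (firstMeetingLevel_le (below le ▸ h.meets_uncross.nonempty_meetingPairs))

theorem Meets.firstPair_uncross (h : G.Meets P) : h.meets_uncross.firstPair = h.firstPair := by
  have : G.meetingPairs h.uncross (G.firstMeetingLevel h.uncross) =
      G.meetingPairs P (G.firstMeetingLevel P) := by
    rw [h.firstMeetingLevel_uncross]
    exact meetingPairs_swapTails _ le_rfl
  simp only [firstPair, this]

theorem Meets.uncross_uncross (h : G.Meets P)
    (hP : ∀ i, (P i).Pairwise fun u v => G.level u < G.level v) :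
    h.meets_uncross.uncross = P := by
  conv_lhs => rw [uncross, h.firstMeetingLevel_uncross, h.firstPair_uncross]
  exact swapTails_swapTails hP

variable {s t : ι → V}

theorem Meets.isPath_uncross (h : G.Meets P) (hP : ∀ i, G.IsPath (s i) (t i) (P i)) (i : ι) :
    G.IsPath (s i) (t (Equiv.swap h.firstPair.1 h.firstPair.2 i)) (h.uncross i) := by
  obtain ⟨-, v, hv₁, hv₂, hv⟩ := h.firstPair_mem
  rw [uncross, swapTails, ← hv]
  rcases eq_or_ne i h.firstPair.1 with rfl | hi₁
  · rw [Equiv.swap_apply_left]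
    exact (hP _).crossover (hP _) hv₁ hv₂
  rcases eq_or_ne i h.firstPair.2 with rfl | hi₂
  · rw [Equiv.swap_apply_right]
    exact (hP _).crossover (hP _) hv₂ hv₁
  · rw [Equiv.swap_apply_of_ne_of_ne hi₁ hi₂, crossover_self (hP i).pairwise_level_lt]
    exact hP i

theorem Meets.prod_pathWeight_uncross [Fintype ι] {R : Type*} [CommMonoid R] (ω : V → V → R)
    (h : G.Meets P) (hP : ∀ i, G.IsPath (s i) (t i) (P i)) :
    ∏ i, pathWeight ω (h.uncross i) = ∏ i, pathWeight ω (P i) := by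
  obtain ⟨hne, v, hv₁, hv₂, hv⟩ := h.firstPair_mem
  rw [← Finset.prod_mul_prod_compl {h.firstPair.1, h.firstPair.2},
    ← Finset.prod_mul_prod_compl {h.firstPair.1, h.firstPair.2} fun i => pathWeight ω (P i)]
  congr 1
  · rw [Finset.prod_pair hne, Finset.prod_pair hne]
    simp only [uncross, swapTails, ← hv, Equiv.swap_apply_left, Equiv.swap_apply_right]
    exact pathWeight_crossover_mul_pathWeight_crossover ω (hP _) (hP _) hv₁ hv₂
  · refine Finset.prod_congr rfl fun i hi => ?_
    simp only [Finset.mem_compl, Finset.mem_insert, Finset.mem_singleton, not_or] at hi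
    rw [uncross, swapTails, Equiv.swap_apply_of_ne_of_ne hi.1 hi.2,
      crossover_self (hP i).pairwise_level_lt]

end Uncross

section LGV

variable {ι R : Type*} [Fintype ι] [CommRing R] {s t : ι → V} {P : ι → List V}

variable (G) in
/-- The matrix whose `(i, j)` entry is the generating function of the paths from `s i` to `t j`. -/
noncomputable def pathMatrix {κ κ' : Type*} (ω : V → V → R) (s : κ → V) (t : κ' → V) :
    Matrix κ κ' R :=
  Matrix.of fun i j => G.pathSum ω (s i) (t j)

variable [DecidableEq ι]

variable (G) in
/-- The families of paths from `s i` to `t i`, which may intersect each other. -/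
noncomputable def pathFamilies (s t : ι → V) : Finset (ι → List V) :=
  Fintype.piFinset fun i => G.paths (s i) (t i)

theorem mem_pathFamilies : P ∈ G.pathFamilies s t ↔ ∀ i, G.IsPath (s i) (t i) (P i) := by
  simp only [pathFamilies, Fintype.mem_piFinset, mem_paths]

variable (G) in
open scoped Classical in
/-- The families of pairwise vertex-disjoint paths from `s i` to `t i`. -/
noncomputable def disjointPaths (s t : ι → V) : Finset (ι → List V) :=
  (G.pathFamilies s t).filter fun P => ¬ G.Meets P

theorem mem_disjointPaths : P ∈ G.disjointPaths s t ↔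
    (∀ i, G.IsPath (s i) (t i) (P i)) ∧ Pairwise fun i j => (P i).Disjoint (P j) := by
  classical
  rw [disjointPaths, Finset.mem_filter, mem_pathFamilies, not_meets_iff]

variable (ω : V → V → R)

open scoped Classical in
theorem sum_sign_smul_sum_meets_eq_zero (s t : ι → V) :
    ∑ σ : Equiv.Perm ι, Equiv.Perm.sign σ •
      ∑ P ∈ G.pathFamilies s (t ∘ σ) with G.Meets P, ∏ i, pathWeight ω (P i) = 0 := by
  simp only [Finset.smul_sum]
  rw [Finset.sum_sigma']
  have meets {x : (_ : Equiv.Perm ι) × (ι → List V)}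
      (hx : x ∈ Finset.univ.sigma fun σ : Equiv.Perm ι =>
        (G.pathFamilies s (t ∘ σ)).filter G.Meets) : G.Meets x.2 :=
    (Finset.mem_filter.1 (Finset.mem_sigma.1 hx).2).2
  have isPath {x : (_ : Equiv.Perm ι) × (ι → List V)}
      (hx : x ∈ Finset.univ.sigma fun σ : Equiv.Perm ι =>
        (G.pathFamilies s (t ∘ σ)).filter G.Meets) (i : ι) :
      G.IsPath (s i) (t (x.1 i)) (x.2 i) :=
    mem_pathFamilies.1 (Finset.mem_filter.1 (Finset.mem_sigma.1 hx).2).1 i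
  refine Finset.sum_involution (fun x hx =>
    ⟨x.1 * Equiv.swap (meets hx).firstPair.1 (meets hx).firstPair.2, (meets hx).uncross⟩)
    (fun x hx => ?_) (fun x hx _ => ?_) (fun x hx => ?_) (fun x hx => ?_)
  · rw [(meets hx).prod_pathWeight_uncross ω (isPath hx), Equiv.Perm.sign_mul,
      Equiv.Perm.sign_swap (meets hx).firstPair_mem.1, mul_neg_one, Units.neg_smul,
      add_neg_cancel]
  · refine ne_of_apply_ne Sigma.fst fun h => (meets hx).firstPair_mem.1 ?_
    exact Equiv.swap_eq_one_iff.1 (mul_eq_left.1 h)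
  · refine Finset.mem_sigma.2 ⟨Finset.mem_univ _, Finset.mem_filter.2
      ⟨mem_pathFamilies.2 ?_, (meets hx).meets_uncross⟩⟩
    exact (meets hx).isPath_uncross (isPath hx)
  · refine Sigma.ext ?_ (heq_of_eq ?_)
    · rw [(meets hx).firstPair_uncross, mul_assoc, Equiv.swap_mul_self, mul_one]
    · exact (meets hx).uncross_uncross fun i => (isPath hx i).pairwise_level_lt

theorem det_pathMatrix (s t : ι → V) : (G.pathMatrix ω s t).det =
    ∑ σ : Equiv.Perm ι, Equiv.Perm.sign σ •
      ∑ P ∈ G.disjointPaths s (t ∘ σ), ∏ i, pathWeight ω (P i) := by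
  classical
  have expand (σ : Equiv.Perm ι) : ∏ i, G.pathMatrix ω s t i (σ i) =
      ∑ P ∈ G.pathFamilies s (t ∘ σ) with G.Meets P, ∏ i, pathWeight ω (P i) +
        ∑ P ∈ G.disjointPaths s (t ∘ σ), ∏ i, pathWeight ω (P i) := by
    simp only [pathMatrix, Matrix.of_apply, pathSum, Finset.prod_univ_sum]
    exact (Finset.sum_filter_add_sum_filter_not _ G.Meets _).symm
  rw [← Matrix.det_transpose, Matrix.det_apply]
  simp only [Matrix.transpose_apply, expand, smul_add, Finset.sum_add_distrib,
    sum_sign_smul_sum_meets_eq_zero, zero_add]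

end LGV

theorem det_pathMatrix_of_crossing {ι R : Type*} [Fintype ι] [LinearOrder ι] [CommRing R]
    (ω : V → V → R) {s t : ι → V} (crossing : ∀ {i j a b : ι} {p q : List V}, i < j → a < b →
      G.IsPath (s i) (t b) p → G.IsPath (s j) (t a) q → ¬ p.Disjoint q) :
    (G.pathMatrix ω s t).det = ∑ P ∈ G.disjointPaths s t, ∏ i, pathWeight ω (P i) := by
  rw [det_pathMatrix, Fintype.sum_eq_single 1 fun σ hσ => ?_]
  · rw [Equiv.Perm.sign_one, one_smul, Equiv.Perm.coe_one, Function.comp_id]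
  suffices G.disjointPaths s (t ∘ σ) = ∅ by rw [this, Finset.sum_empty, smul_zero]
  refine Finset.eq_empty_of_forall_notMem fun P hP => hσ ?_
  obtain ⟨hpath, hdisj⟩ := mem_disjointPaths.1 hP
  have mono : StrictMono σ := by
    intro i j hij
    by_contra! hji
    exact crossing hij (hji.lt_of_ne (σ.injective.ne hij.ne')) (hpath i) (hpath j) (hdisj hij.ne)
  have eq_refl : mono.orderIsoOfSurjective σ σ.surjective = OrderIso.refl ι := Subsingleton.elim _ _
  exact Equiv.ext fun i => DFunLike.congr_fun eq_refl i

end LevelledDigraph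

/-! ### Increasing enumerations -/

/-- `a` lists the elements of `S` in increasing order. -/
structure IsIncreasingEnum {α : Type*} [LinearOrder α] {r : ℕ} (a : Fin r → α) (S : Finset α) :
    Prop where
  strictMono : StrictMono a
  range_eq : Set.range a = S

namespace IsIncreasingEnum

variable {α : Type*} [LinearOrder α] {r : ℕ} {S : Finset α} {x : α}

theorem exists_of_card_eq (h : S.card = r) : ∃ a : Fin r → α, IsIncreasingEnum a S :=
  ⟨S.orderEmbOfFin h, (S.orderEmbOfFin h).strictMono, S.range_orderEmbOfFin h⟩

section

variable {a : Fin r → α} (ha : IsIncreasingEnum a S)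
include ha

theorem mem (i : Fin r) : a i ∈ S := Finset.mem_coe.1 (ha.range_eq ▸ Set.mem_range_self i)

theorem card_eq : S.card = r := by
  rw [← Set.ncard_coe_finset, ← ha.range_eq, ← Set.image_univ,
    Set.ncard_image_of_injective _ ha.strictMono.injective, Set.ncard_univ, Nat.card_fin]

theorem map_sort {β : Type*} (f : α → β) : (S.sort (· ≤ ·)).map f = List.ofFn (f ∘ a) := by
  have sort_eq : S.sort (· ≤ ·) = List.ofFn a := by
    rw [Finset.orderEmbOfFin_unique ha.card_eq ha.mem ha.strictMono]
    exact List.ext_getElem (by simp [ha.card_eq]) fun i _ _ => by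
      simp [Finset.orderEmbOfFin_apply]
  rw [sort_eq, List.map_ofFn]

theorem cons (hx : ∀ y ∈ S, x < y) :
    IsIncreasingEnum (Fin.cons x a : Fin (r + 1) → α) (insert x S) where
  strictMono := Fin.strictMono_cons.2 ⟨fun _ => hx _ (ha.mem _), ha.strictMono⟩
  range_eq := by rw [Fin.range_cons, ha.range_eq, Finset.coe_insert]

theorem snoc (hx : ∀ y ∈ S, y < x) :
    IsIncreasingEnum (Fin.snoc a x : Fin (r + 1) → α) (insert x S) where
  strictMono i j hij := by
    obtain ⟨i, rfl⟩ := Fin.exists_castSucc_eq.2 (Fin.ne_last_of_lt hij)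
    cases j using Fin.lastCases with
    | last => simpa only [Fin.snoc_castSucc, Fin.snoc_last] using hx _ (ha.mem i)
    | cast j =>
      simpa only [Fin.snoc_castSucc] using ha.strictMono (Fin.castSucc_lt_castSucc_iff.1 hij)
  range_eq := by rw [Fin.range_snoc, ha.range_eq, Finset.coe_insert]

end

variable {d : Fin (r + 1) → α} (hd : IsIncreasingEnum d S)
include hd

theorem zero_eq (hx : IsLeast (S : Set α) x) : d 0 = x := by
  obtain ⟨i, rfl⟩ := hd.range_eq.symm ▸ hx.1
  exact (hd.strictMono.monotone i.zero_le).antisymm (hx.2 (hd.mem 0))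

theorem last_eq (hx : IsGreatest (S : Set α) x) : d (Fin.last r) = x := by
  obtain ⟨i, rfl⟩ := hd.range_eq.symm ▸ hx.1
  exact (hx.2 (hd.mem _)).antisymm (hd.strictMono.monotone i.le_last)

theorem tail : IsIncreasingEnum (Fin.tail d) (S.erase (d 0)) where
  strictMono := hd.strictMono.comp Fin.strictMono_succ
  range_eq := by
    change Set.range (d ∘ Fin.succ) = _
    rw [Set.range_comp, Fin.range_succ, Set.image_compl_eq_range_sdiff_image
      hd.strictMono.injective, Set.image_singleton, hd.range_eq, Finset.coe_erase]

theorem init : IsIncreasingEnum (Fin.init d) (S.erase (d (Fin.last r))) where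
  strictMono := hd.strictMono.comp Fin.strictMono_castSucc
  range_eq := by
    change Set.range (d ∘ Fin.castSucc) = _
    have range_castSucc : Set.range (Fin.castSucc (n := r)) = {Fin.last r}ᶜ :=
      Set.ext fun _ => Fin.exists_castSucc_eq
    rw [Set.range_comp, range_castSucc, Set.image_compl_eq_range_sdiff_image
      hd.strictMono.injective, Set.image_singleton, hd.range_eq, Finset.coe_erase]

theorem mem_Ioo [LocallyFiniteOrder α] {y : α} (hS : S ⊆ Finset.Icc x y) {j : Fin (r + 1)}
    (hj₀ : j ≠ 0) (hjl : j ≠ Fin.last r) : d j ∈ Finset.Ioo x y :=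
  Finset.mem_Ioo.2
    ⟨(Finset.mem_Icc.1 (hS (hd.mem 0))).1.trans_lt (hd.strictMono (Fin.pos_of_ne_zero hj₀)),
      (hd.strictMono (Fin.lt_last_iff_ne_last.2 hjl)).trans_le
        (Finset.mem_Icc.1 (hS (hd.mem (Fin.last r)))).2⟩

end IsIncreasingEnum

/-! ### Paths in the grid -/

theorem GridStep.level_eq {u v : ℕ × ℕ} (h : GridStep u v) :
    v.1 + v.2 = u.1 + u.2 + 1 := by
  obtain rfl | rfl := h <;> dsimp only <;> omega

/-- The grid `Γ`, graded by antidiagonals. -/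
def grid (m n : ℕ) : LevelledDigraph (ℕ × ℕ) where
  verts := Finset.Icc 1 m ×ˢ Finset.Icc 1 n
  Adj := GridStep
  level v := v.1 + v.2
  level_lt_of_adj h := h.level_eq ▸ Nat.lt_succ_self _

section GridPaths

open LevelledDigraph

variable {m n : ℕ} {s t u u' v v' : ℕ × ℕ} {p q : List (ℕ × ℕ)}

theorem isGridPath_iff : IsGridPath m n s t p ↔ (grid m n).IsPath s t p := by
  have mem_verts {v : ℕ × ℕ} : v ∈ (grid m n).verts ↔ 1 ≤ v.1 ∧ v.1 ≤ m ∧ 1 ≤ v.2 ∧ v.2 ≤ n := by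
    simp [grid, and_assoc]
  simp only [IsPath, mem_verts]
  rfl

theorem fst_le_and_snd_le_of_isPath (hp : (grid m n).IsPath s t p) : s.1 ≤ t.1 ∧ s.2 ≤ t.2 := by
  induction p generalizing s with
  | nil => simp [IsPath] at hp
  | cons w q ih =>
    by_cases hst : s = t
    · exact hst ▸ ⟨le_rfl, le_rfl⟩
    obtain ⟨v, q', hq', -, hsv, hv⟩ := (isPath_iff_exists_succ hst).1 hp
    obtain ⟨-, rfl⟩ := List.cons.inj hq'
    have hvt := ih hv
    obtain rfl | rfl := hsv <;> grind

/-- Advance whichever path starts at the lower level: the order of the two starting points along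
the antidiagonals can only be reversed through a common vertex. -/
theorem not_disjoint_of_crossing (hu : u.1 + u.2 ≤ u'.1 + u'.2 + 1)
    (hu' : u'.1 + u'.2 ≤ u.1 + u.2 + 1) (hv : v.1 + v.2 ≤ v'.1 + v'.2 + 1)
    (hv' : v'.1 + v'.2 ≤ v.1 + v.2 + 1) (huu' : u.2 + u'.1 < u'.2 + u.1)
    (hvv' : v'.2 + v.1 < v.2 + v'.1) (hp : (grid m n).IsPath u v p)
    (hq : (grid m n).IsPath u' v' q) : ¬ p.Disjoint q := by
  induction hN : p.length + q.length using Nat.strong_induction_on generalizing u u' p q with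
  | _ N ih =>
  subst hN
  obtain ⟨huv₁, huv₂⟩ := fst_le_and_snd_le_of_isPath hp
  obtain ⟨huv'₁, huv'₂⟩ := fst_le_and_snd_le_of_isPath hq
  rcases le_or_gt (u.1 + u.2) (u'.1 + u'.2) with hle | hlt
  · obtain ⟨w, p', rfl, -, huw, hw⟩ := (isPath_iff_exists_succ (by rintro rfl; omega)).1 hp
    rcases eq_or_ne w u' with rfl | hwu'
    · exact fun h => h (by simp) (List.mem_of_head? hq.1)
    have hwu'_order : w.2 + u'.1 < u'.2 + w.1 := by
      rw [ne_eq, Prod.ext_iff] at hwu'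
      obtain rfl | rfl := huw <;> dsimp only at hwu' ⊢ <;> omega
    have := huw.level_eq
    exact fun h => ih _ (by simp) (by omega) (by omega) hwu'_order hw hq rfl
      fun _ h₁ => h (List.mem_cons_of_mem _ h₁)
  · obtain ⟨w, q', rfl, -, huw, hw⟩ := (isPath_iff_exists_succ (by rintro rfl; omega)).1 hq
    rcases eq_or_ne w u with rfl | hwu
    · exact fun h => h (List.mem_of_head? hp.1) (by simp)
    have hwu_order : u.2 + w.1 < w.2 + u.1 := by
      rw [ne_eq, Prod.ext_iff] at hwu
      obtain rfl | rfl := huw <;> dsimp only at hwu ⊢ <;> omega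
    have := huw.level_eq
    exact fun h => ih _ (by simp) (by omega) (by omega) hwu_order hp hw rfl
      fun _ h₁ h₂ => h h₁ (List.mem_cons_of_mem _ h₂)

end GridPaths

section NCTuple

open LevelledDigraph

variable {m n r r' : ℕ}

theorem ncTuple_ext {src tgt : List (ℕ × ℕ)} {R B : NCTuple m n src tgt} (h : R.path = B.path) :
    R = B := by
  cases R
  cases B
  cases h
  rfl

/-- Tuples of disjoint grid paths, encoded by lists, correspond to disjoint families indexed by
`Fin r`. -/
noncomputable def ncTupleEquiv (s t : Fin r → ℕ × ℕ) :
    NCTuple m n (List.ofFn s) (List.ofFn t) ≃ (grid m n).disjointPaths s t where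
  toFun R := ⟨fun i => R.path.getD i [], by
    have length_eq : R.path.length = r := by simpa only [List.length_ofFn] using R.hlen
    refine mem_disjointPaths.2 ⟨fun i => ?_, fun i j hij v => ?_⟩
    · simpa [isGridPath_iff, List.getD_eq_getElem?_getD] using R.valid i (by omega)
    · exact R.disj i j (by omega) (by omega) (Fin.val_ne_of_ne hij) v⟩
  invFun P :=
    { path := List.ofFn P.1
      hlen := by simp only [List.length_ofFn]
      hlen' := by simp only [List.length_ofFn]
      valid := fun l hl => by
        rw [List.length_ofFn] at hl
        simpa [isGridPath_iff, List.getD_eq_getElem?_getD, hl] using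
          (mem_disjointPaths.1 P.2).1 ⟨l, hl⟩
      disj := fun l l' hl hl' hne v hv hv' => by
        rw [List.length_ofFn] at hl hl'
        simp only [List.getD_eq_getElem?_getD, List.getElem?_ofFn, hl, hl', dite_true,
          Option.getD_some] at hv hv'
        exact (mem_disjointPaths.1 P.2).2 (Fin.ne_of_val_ne hne) hv hv' }
  left_inv R := by
    have length_eq : R.path.length = r := by simpa only [List.length_ofFn] using R.hlen
    refine ncTuple_ext (List.ext_getElem (by simp [length_eq]) fun i _ hi => ?_)
    simp [List.getD_eq_getElem?_getD, hi]
  right_inv P := Subtype.ext <| funext fun i => by simp [List.getD_eq_getElem?_getD]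

theorem finsum_tupleEdgeWeight_mul_tupleEdgeWeight (ω : ℕ × ℕ → ℕ × ℕ → ℝ)
    (s t : Fin r → ℕ × ℕ) (s' t' : Fin r' → ℕ × ℕ) :
    ∑ᶠ RB : NCTuple m n (List.ofFn s) (List.ofFn t) × NCTuple m n (List.ofFn s') (List.ofFn t'),
        tupleEdgeWeight ω RB.1.path * tupleEdgeWeight ω RB.2.path =
      (∑ P ∈ (grid m n).disjointPaths s t, ∏ i, pathWeight ω (P i)) *
        ∑ P ∈ (grid m n).disjointPaths s' t', ∏ i, pathWeight ω (P i) := by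
  have weight {r : ℕ} {s t : Fin r → ℕ × ℕ} (P : (grid m n).disjointPaths s t) :
      tupleEdgeWeight ω ((ncTupleEquiv s t).symm P).path = ∏ i, pathWeight ω (P.1 i) := by
    simp only [tupleEdgeWeight, ncTupleEquiv, Equiv.coe_fn_symm_mk, List.map_ofFn, List.prod_ofFn]
    rfl
  rw [← finsum_comp_equiv ((ncTupleEquiv s t).prodCongr (ncTupleEquiv s' t')).symm,
    finsum_eq_sum_of_fintype, Fintype.sum_prod_type]
  simp only [Equiv.prodCongr_symm, Equiv.prodCongr_apply, Prod.map, weight]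
  rw [← Finset.sum_mul_sum, ← Finset.sum_coe_sort (disjointPaths _ s t),
    ← Finset.sum_coe_sort (disjointPaths _ s' t')]

end NCTuple

/-! ### Interlacing sources and sinks -/

section Interlacing

open LevelledDigraph

variable {m n k : ℕ}

theorem gridSource_odd (k q : ℕ) : gridSource k (2 * q + 1) = (k - q, q + 1) := by
  rw [gridSource, if_pos (by omega), Prod.mk.injEq]
  omega

theorem gridSource_even (k q : ℕ) : gridSource k (2 * q + 2) = (k - (q + 1), q + 1) := by
  rw [gridSource, if_neg (by omega), Prod.mk.injEq]
  omega

theorem gridSink_odd (m n k q : ℕ) :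
    gridSink m n k (2 * q + 1) = (m - q, n - k + (q + 1)) := by
  rw [gridSink, if_pos (by omega), Prod.mk.injEq]
  omega

theorem gridSink_even (m n k q : ℕ) :
    gridSink m n k (2 * q + 2) = (m - (q + 1), n - k + (q + 1)) := by
  rw [gridSink, if_neg (by omega), Prod.mk.injEq]
  omega

theorem gridSource_bounds {i : ℕ} (hi : i ∈ Finset.Icc 1 (2 * k - 1)) :
    (gridSource k i).2 + k = (gridSource k i).1 + i ∧
      k ≤ (gridSource k i).1 + (gridSource k i).2 ∧
      (gridSource k i).1 + (gridSource k i).2 ≤ k + 1 := by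
  rw [Finset.mem_Icc] at hi
  rw [gridSource]
  split_ifs <;> dsimp only <;> omega

theorem gridSink_bounds (hkm : k < m) (hkn : k < n) {j : ℕ} (hj : j ∈ Finset.Icc 1 (2 * k - 1)) :
    (gridSink m n k j).2 + k + m = (gridSink m n k j).1 + n + j ∧
      m + n ≤ (gridSink m n k j).1 + (gridSink m n k j).2 + k ∧
      (gridSink m n k j).1 + (gridSink m n k j).2 + k ≤ m + n + 1 := by
  rw [Finset.mem_Icc] at hj
  rw [gridSink]
  split_ifs <;> dsimp only <;> omega

theorem gridSource_ne_gridSink (hkm : k < m) (hkn : k < n) {i j : ℕ}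
    (hi : i ∈ Finset.Icc 1 (2 * k - 1)) (hj : j ∈ Finset.Icc 1 (2 * k - 1)) :
    gridSource k i ≠ gridSink m n k j := by
  have hs := gridSource_bounds hi
  have ht := gridSink_bounds hkm hkn hj
  intro h
  rw [h] at hs
  omega

theorem not_disjoint_of_isPath_gridSource_gridSink (hkm : k < m) (hkn : k < n) {i j a b : ℕ}
    (hi : i ∈ Finset.Icc 1 (2 * k - 1)) (hj : j ∈ Finset.Icc 1 (2 * k - 1))
    (ha : a ∈ Finset.Icc 1 (2 * k - 1)) (hb : b ∈ Finset.Icc 1 (2 * k - 1)) (hij : i < j)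
    (hab : a < b) {p q : List (ℕ × ℕ)}
    (hp : (grid m n).IsPath (gridSource k i) (gridSink m n k b) p)
    (hq : (grid m n).IsPath (gridSource k j) (gridSink m n k a) q) : ¬ p.Disjoint q := by
  have hi := gridSource_bounds hi
  have hj := gridSource_bounds hj
  have ha := gridSink_bounds hkm hkn ha
  have hb := gridSink_bounds hkm hkn hb
  refine not_disjoint_of_crossing ?_ ?_ ?_ ?_ ?_ ?_ hp hq <;> omega

theorem gridStep_gridSource_iff {q : ℕ} (hq : q + 1 < k) {v : ℕ × ℕ} :
    GridStep (gridSource k (2 * q + 2)) v ↔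
      v = gridSource k (2 * q + 1) ∨ v = gridSource k (2 * (q + 1) + 1) := by
  rw [gridSource_even, gridSource_odd, gridSource_odd, GridStep]
  have : k - (q + 1) + 1 = k - q := by omega
  rw [this]

theorem gridStep_gridSink_iff (hkm : k < m) {q : ℕ} (hq : q + 2 < k) {v : ℕ × ℕ} :
    GridStep v (gridSink m n k (2 * (q + 1) + 1)) ↔
      v = gridSink m n k (2 * q + 2) ∨ v = gridSink m n k (2 * (q + 1) + 2) := by
  rw [gridSink_odd, gridSink_even, gridSink_even, GridStep]
  simp only [Prod.ext_iff]
  omega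

/-- The generating functions of the paths from the sources to the sinks. -/
noncomputable def gridMatrix (m n k : ℕ) (ω : ℕ × ℕ → ℕ × ℕ → ℝ) : Matrix ℕ ℕ ℝ :=
  (grid m n).pathMatrix ω (gridSource k) (gridSink m n k)

theorem gridMatrix_even_row (hkm : k < m) (hkn : k < n) (ω : ℕ × ℕ → ℕ × ℕ → ℝ) {q j : ℕ}
    (hq : q + 1 < k) (hj : j ∈ Finset.Icc 1 (2 * k - 1)) :
    gridMatrix m n k ω (2 * q + 2) j =
      ω (gridSource k (2 * q + 2)) (gridSource k (2 * q + 1)) *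
          gridMatrix m n k ω (2 * q + 1) j +
        ω (gridSource k (2 * q + 2)) (gridSource k (2 * (q + 1) + 1)) *
          gridMatrix m n k ω (2 * (q + 1) + 1) j := by
  have mem_verts : gridSource k (2 * q + 2) ∈ (grid m n).verts := by
    simp only [gridSource_even, grid, Finset.mem_product, Finset.mem_Icc]
    omega
  have succ_ne : gridSource k (2 * q + 1) ≠ gridSource k (2 * (q + 1) + 1) := by
    simp [gridSource_odd]
  refine (pathSum_eq_sum_succ ω mem_verts (gridSource_ne_gridSink hkm hkn
    (Finset.mem_Icc.2 (by omega)) hj) (N := {gridSource k (2 * q + 1),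
      gridSource k (2 * (q + 1) + 1)}) fun v => ?_).trans (Finset.sum_pair succ_ne)
  rw [Finset.mem_insert, Finset.mem_singleton]
  exact (gridStep_gridSource_iff hq).symm

theorem gridMatrix_odd_col (hkm : k < m) (hkn : k < n) (ω : ℕ × ℕ → ℕ × ℕ → ℝ) {i q : ℕ}
    (hi : i ∈ Finset.Icc 1 (2 * k - 1)) (hq : q + 2 < k) :
    gridMatrix m n k ω i (2 * (q + 1) + 1) =
      gridMatrix m n k ω i (2 * q + 2) *
          ω (gridSink m n k (2 * q + 2)) (gridSink m n k (2 * (q + 1) + 1)) +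
        gridMatrix m n k ω i (2 * (q + 1) + 2) *
          ω (gridSink m n k (2 * (q + 1) + 2)) (gridSink m n k (2 * (q + 1) + 1)) := by
  have mem_verts : gridSink m n k (2 * (q + 1) + 1) ∈ (grid m n).verts := by
    simp only [gridSink_odd, grid, Finset.mem_product, Finset.mem_Icc]
    omega
  have pred_ne : gridSink m n k (2 * q + 2) ≠ gridSink m n k (2 * (q + 1) + 2) := by
    simp [gridSink_even]
  refine (pathSum_eq_sum_pred ω mem_verts (gridSource_ne_gridSink hkm hkn hi
    (Finset.mem_Icc.2 (by omega))) (N := {gridSink m n k (2 * q + 2),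
      gridSink m n k (2 * (q + 1) + 2)}) fun v => ?_).trans (Finset.sum_pair pred_ne)
  rw [Finset.mem_insert, Finset.mem_singleton]
  exact (gridStep_gridSink_iff hkm hq).symm

/-- The rows of `gridMatrix` at the odd sources. -/
noncomputable def oddRows (m n k : ℕ) (ω : ℕ × ℕ → ℕ × ℕ → ℝ) : Matrix (Fin k) ℕ ℝ :=
  (gridMatrix m n k ω).submatrix (fun l => 2 * l + 1) id

theorem exists_mul_oddRows_eq (hkm : k < m) (hkn : k < n) (ω : ℕ × ℕ → ℕ × ℕ → ℝ) :
    ∃ L : Matrix ℕ (Fin k) ℝ, ∀ i ∈ Finset.Icc 1 (2 * k - 1), ∀ j ∈ Finset.Icc 1 (2 * k - 1),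
      (L * oddRows m n k ω) i j = gridMatrix m n k ω i j := by
  suffices ∀ i ∈ Finset.Icc 1 (2 * k - 1), ∃ y : Fin k → ℝ, ∀ j ∈ Finset.Icc 1 (2 * k - 1),
      Matrix.vecMul y (oddRows m n k ω) j = gridMatrix m n k ω i j by
    choose! L hL using this
    exact ⟨Matrix.of L, hL⟩
  intro i hi
  obtain ⟨hi₁, hi₂⟩ := Finset.mem_Icc.1 hi
  obtain ⟨q, rfl | rfl⟩ : ∃ q, i = 2 * q + 1 ∨ i = 2 * q + 2 := ⟨(i - 1) / 2, by omega⟩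
  · refine ⟨Pi.single ⟨q, by omega⟩ 1, fun j _ => ?_⟩
    rw [Matrix.single_one_vecMul]
    rfl
  · refine ⟨Pi.single ⟨q, by omega⟩ (ω (gridSource k (2 * q + 2)) (gridSource k (2 * q + 1))) +
      Pi.single ⟨q + 1, by omega⟩
        (ω (gridSource k (2 * q + 2)) (gridSource k (2 * (q + 1) + 1))), fun j hj => ?_⟩
    rw [gridMatrix_even_row hkm hkn ω (by omega) hj, Matrix.add_vecMul, Matrix.single_vecMul,
      Matrix.single_vecMul]
    rfl

/-- The `r` even columns have a common annihilator, and the inner odd columns are combinations of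
even ones. -/
theorem exists_ne_zero_vecMul_oddRows_eq_zero {r : ℕ} (hrm : r + 1 < m) (hrn : r + 1 < n)
    (ω : ℕ × ℕ → ℕ × ℕ → ℝ) :
    ∃ x ≠ 0, ∀ j ∈ Finset.Ioo 1 (2 * (r + 1) - 1),
      Matrix.vecMul x (oddRows m n (r + 1) ω) j = 0 := by
  set O := oddRows m n (r + 1) ω
  obtain ⟨x, hx, hxO⟩ := exists_ne_zero_mulVec_eq_zero
    (O.submatrix id fun q : Fin r => 2 * q + 2).transpose
  rw [Matrix.mulVec_transpose] at hxO
  have even {q : ℕ} (hq : q < r) : Matrix.vecMul x O (2 * q + 2) = 0 := congrFun hxO ⟨q, hq⟩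
  have combination {i j l : ℕ} {y z : ℝ} (h : ∀ q, O q j = O q i * y + O q l * z)
      (hi : Matrix.vecMul x O i = 0) (hl : Matrix.vecMul x O l = 0) :
      Matrix.vecMul x O j = 0 := by
    rw [Matrix.vecMul, dotProduct] at hi hl ⊢
    simp only [h, mul_add, ← mul_assoc, Finset.sum_add_distrib, ← Finset.sum_mul, hi, hl,
      zero_mul, add_zero]
  refine ⟨x, hx, fun j hj => ?_⟩
  rw [Finset.mem_Ioo] at hj
  obtain ⟨q, rfl | rfl⟩ : ∃ q, j = 2 * q + 2 ∨ j = 2 * (q + 1) + 1 := ⟨(j - 2) / 2, by omega⟩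
  · exact even (by omega)
  · exact combination
      (fun l => gridMatrix_odd_col hrm hrn ω (i := 2 * l + 1) (Finset.mem_Icc.2 (by omega))
        (by omega))
      (even (q := q) (by omega)) (even (q := q + 1) (by omega))

theorem det_submatrix_gridMatrix (hkm : k < m) (hkn : k < n) (ω : ℕ × ℕ → ℕ × ℕ → ℝ) {r : ℕ}
    {a c : Fin r → ℕ} (ha : StrictMono a) (hc : StrictMono c)
    (ha' : ∀ i, a i ∈ Finset.Icc 1 (2 * k - 1)) (hc' : ∀ i, c i ∈ Finset.Icc 1 (2 * k - 1)) :
    ((gridMatrix m n k ω).submatrix a c).det =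
      ∑ P ∈ (grid m n).disjointPaths (gridSource k ∘ a) (gridSink m n k ∘ c),
        ∏ i, pathWeight ω (P i) :=
  det_pathMatrix_of_crossing ω fun hij hab => not_disjoint_of_isPath_gridSource_gridSink hkm hkn
    (ha' _) (ha' _) (hc' _) (hc' _) (ha hij) (hc hab)

theorem patWeight_eq_det_mul_det (hkm : k < m) (hkn : k < n) {ω : ℕ × ℕ → ℕ × ℕ → ℝ}
    {M : Matrix ℕ ℕ ℝ} (hM : ∀ i ∈ Finset.Icc 1 (2 * k - 1), ∀ j ∈ Finset.Icc 1 (2 * k - 1),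
      M i j = gridMatrix m n k ω i j) {r r' : ℕ} {I J : Finset ℕ}
    (hI : I ⊆ Finset.Icc 1 (2 * k - 1)) (hJ : J ⊆ Finset.Icc 1 (2 * k - 1))
    {a c : Fin r → ℕ} {b d : Fin r' → ℕ} (ha : IsIncreasingEnum a I)
    (hb : IsIncreasingEnum b (Finset.Icc 1 (2 * k - 1) \ I)) (hc : IsIncreasingEnum c J)
    (hd : IsIncreasingEnum d (Finset.Icc 1 (2 * k - 1) \ J)) :
    patWeight m n k ω I J = (M.submatrix a c).det * (M.submatrix b d).det := by
  have minor {r : ℕ} {S T : Finset ℕ} (hS : S ⊆ Finset.Icc 1 (2 * k - 1))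
      (hT : T ⊆ Finset.Icc 1 (2 * k - 1)) {a c : Fin r → ℕ} (ha : IsIncreasingEnum a S)
      (hc : IsIncreasingEnum c T) : (M.submatrix a c).det =
        ∑ P ∈ (grid m n).disjointPaths (gridSource k ∘ a) (gridSink m n k ∘ c),
          ∏ i, pathWeight ω (P i) := by
    rw [← det_submatrix_gridMatrix hkm hkn ω ha.strictMono hc.strictMono
      (fun i => hS (ha.mem i)) fun i => hT (hc.mem i)]
    congr 1
    ext i j
    exact hM _ (hS (ha.mem i)) _ (hT (hc.mem j))
  rw [minor hI hJ ha hc, minor Finset.sdiff_subset Finset.sdiff_subset hb hd,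
    ← finsum_tupleEdgeWeight_mul_tupleEdgeWeight, patWeight, ha.map_sort, hb.map_sort,
    hc.map_sort, hd.map_sort]

section Exchange

variable {r : ℕ} {ω : ℕ × ℕ → ℕ × ℕ → ℝ} {M : Matrix ℕ ℕ ℝ} {I J : Finset ℕ} {a c : Fin r → ℕ}
  {b d : Fin (r + 1) → ℕ}

theorem patWeight_erase_first (hkm : k < m) (hkn : k < n) (hk : k ≠ 0)
    (hM : ∀ i ∈ Finset.Icc 1 (2 * k - 1), ∀ j ∈ Finset.Icc 1 (2 * k - 1),
      M i j = gridMatrix m n k ω i j)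
    (hI : I ⊆ Finset.Icc 1 (2 * k - 1)) (hJ : J ⊆ Finset.Icc 1 (2 * k - 1))
    (ha : IsIncreasingEnum a I) (hb : IsIncreasingEnum b (Finset.Icc 1 (2 * k - 1) \ I))
    (hc : IsIncreasingEnum c J) (hd : IsIncreasingEnum d (Finset.Icc 1 (2 * k - 1) \ J))
    (h1 : 1 ∉ J) :
    patWeight m n k ω I ((Finset.Icc 1 (2 * k - 1) \ J).erase 1) =
      (M.submatrix a (Fin.tail d)).det *
        (M.submatrix b (Fin.cons (d 0) c : Fin (r + 1) → ℕ)).det := by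
  have one_mem : 1 ∈ Finset.Icc 1 (2 * k - 1) := Finset.mem_Icc.2 (by omega)
  have hd0 : d 0 = 1 := hd.zero_eq ⟨Finset.mem_sdiff.2 ⟨one_mem, h1⟩, fun y hy =>
    (Finset.mem_Icc.1 (Finset.sdiff_subset hy)).1⟩
  have tail := hd.tail
  rw [hd0] at tail
  refine patWeight_eq_det_mul_det hkm hkn hM hI
    ((Finset.erase_subset ..).trans Finset.sdiff_subset) ha hb tail ?_
  rw [Finset.sdiff_erase one_mem, Finset.sdiff_sdiff_eq_self hJ, hd0]
  exact hc.cons fun y hy =>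
    (Finset.mem_Icc.1 (hJ hy)).1.lt_of_ne fun h => h1 (h ▸ hy)

theorem patWeight_erase_last (hkm : k < m) (hkn : k < n) (hk : k ≠ 0)
    (hM : ∀ i ∈ Finset.Icc 1 (2 * k - 1), ∀ j ∈ Finset.Icc 1 (2 * k - 1),
      M i j = gridMatrix m n k ω i j)
    (hI : I ⊆ Finset.Icc 1 (2 * k - 1)) (hJ : J ⊆ Finset.Icc 1 (2 * k - 1))
    (ha : IsIncreasingEnum a I) (hb : IsIncreasingEnum b (Finset.Icc 1 (2 * k - 1) \ I))
    (hc : IsIncreasingEnum c J) (hd : IsIncreasingEnum d (Finset.Icc 1 (2 * k - 1) \ J))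
    (h2 : 2 * k - 1 ∉ J) :
    patWeight m n k ω I ((Finset.Icc 1 (2 * k - 1) \ J).erase (2 * k - 1)) =
      (M.submatrix a (Fin.init d)).det *
        (M.submatrix b (Fin.snoc c (d (Fin.last r)) : Fin (r + 1) → ℕ)).det := by
  have last_mem : 2 * k - 1 ∈ Finset.Icc 1 (2 * k - 1) := Finset.mem_Icc.2 (by omega)
  have hdl : d (Fin.last r) = 2 * k - 1 := hd.last_eq ⟨Finset.mem_sdiff.2 ⟨last_mem, h2⟩,
    fun y hy => (Finset.mem_Icc.1 (Finset.sdiff_subset hy)).2⟩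
  have init := hd.init
  rw [hdl] at init
  refine patWeight_eq_det_mul_det hkm hkn hM hI
    ((Finset.erase_subset ..).trans Finset.sdiff_subset) ha hb init ?_
  rw [Finset.sdiff_erase last_mem, Finset.sdiff_sdiff_eq_self hJ, hdl]
  exact hc.snoc fun y hy =>
    (Finset.mem_Icc.1 (hJ hy)).2.lt_of_ne fun h => h2 (h ▸ hy)

end Exchange

end Interlacing

theorem card_Icc_sdiff {r : ℕ} {S : Finset ℕ} (hS : S ⊆ Finset.Icc 1 (2 * (r + 1) - 1))
    (hr : S.card = r) : (Finset.Icc 1 (2 * (r + 1) - 1) \ S).card = r + 1 := by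
  rw [Finset.card_sdiff_of_subset hS, Nat.card_Icc, hr]
  omega

theorem stmt_2_general (m n k : ℕ) (hk : 2 ≤ k) (hkm : k < m) (hkn : k < n)
    (ω : ℕ × ℕ → ℕ × ℕ → ℝ) (I J : Finset ℕ) (hI : I ⊆ Finset.Icc 1 (2 * k - 1))
    (hJ : J ⊆ Finset.Icc 1 (2 * k - 1)) (hIcard : I.card = k - 1) (hJcard : J.card = k - 1)
    (h1 : 1 ∉ J) (h2 : 2 * k - 1 ∉ J) :
    patWeight m n k ω I J =
      patWeight m n k ω I (Finset.Icc 2 (2 * k - 1) \ J) +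
      patWeight m n k ω I (Finset.Icc 1 (2 * k - 2) \ J) := by
  obtain ⟨r, rfl⟩ : ∃ r, k = r + 1 := ⟨k - 1, by omega⟩
  have hJ' : Finset.Icc 2 (2 * (r + 1) - 1) \ J =
      (Finset.Icc 1 (2 * (r + 1) - 1) \ J).erase 1 := by grind
  have hJ'' : Finset.Icc 1 (2 * (r + 1) - 2) \ J =
      (Finset.Icc 1 (2 * (r + 1) - 1) \ J).erase (2 * (r + 1) - 1) := by grind
  have inner : J ⊆ Finset.Ioo 1 (2 * (r + 1) - 1) := by grind
  obtain ⟨L, hL⟩ := exists_mul_oddRows_eq hkm hkn ω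
  obtain ⟨x, hx, hxO⟩ := exists_ne_zero_vecMul_oddRows_eq_zero hkm hkn ω
  obtain ⟨a, ha⟩ := IsIncreasingEnum.exists_of_card_eq hIcard
  obtain ⟨c, hc⟩ := IsIncreasingEnum.exists_of_card_eq hJcard
  obtain ⟨b, hb⟩ := IsIncreasingEnum.exists_of_card_eq (card_Icc_sdiff hI hIcard)
  obtain ⟨d, hd⟩ := IsIncreasingEnum.exists_of_card_eq (card_Icc_sdiff hJ hJcard)
  rw [hJ', hJ'', patWeight_eq_det_mul_det hkm hkn hL hI hJ ha hb hc hd,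
    patWeight_erase_first hkm hkn r.succ_ne_zero hL hI hJ ha hb hc hd h1,
    patWeight_erase_last hkm hkn r.succ_ne_zero hL hI hJ ha hb hc hd h2]
  exact det_submatrix_mul_det_submatrix_eq_add (by omega) L _ a b hx
    (fun j => hxO _ (inner (hc.mem j)))
    fun j hj₀ hjl => hxO _ (hd.mem_Ioo Finset.sdiff_subset hj₀ hjl)

/-- for an interlacing grid network, `wt(I,J) = wt(I,J′) + wt(I,J″)`. -/
theorem stmt_2 (m n k : ℕ) (hm : 3 ≤ m) (hn : 3 ≤ n) (hk : 2 ≤ k) (hkm : k < m) (hkn : k < n)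
    (ω : ℕ × ℕ → ℕ × ℕ → ℝ) (hω : ∀ u v, 0 < ω u v)
    (I J : Finset ℕ) (hI : I ⊆ Finset.Icc 1 (2 * k - 1)) (hJ : J ⊆ Finset.Icc 1 (2 * k - 1))
    (hIcard : I.card = k - 1) (hJcard : J.card = k - 1)
    (h1 : 1 ∉ J) (h2 : 2 * k - 1 ∉ J) :
    patWeight m n k ω I J =
      patWeight m n k ω I (Finset.Icc 2 (2 * k - 1) \ J) +
      patWeight m n k ω I (Finset.Icc 1 (2 * k - 2) \ J) :=
  stmt_2_general m n k hk hkm hkn ω I J hI hJ hIcard hJcard h1 h2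
end

section
/- Fix integers m, n ≥ 3, 2 ≤ k < min(m,n), and any positive real edge weights ω on the grid Γ. Fix I ⊆ {1,…,2k−1} with |I| = k−1, fix K ⊆ {2,4,…,2k−2}, and set K′ := {2,4,…,2k−2} ∖ K. Then the sum of wt(I,J) over all (k−1)-element subsets J ⊆ {1,…,2k−1} whose set of even elements equals K is equal to the sum of wt(I,J′) over all (k−1)-element subsets J′ ⊆ {1,…,2k−1} whose set of even elements equals K′. -/
/-!
By the Lindström–Gessel–Viennot lemma both factors of `wt(I, J)` are determinants of path sums.
A path from an even-indexed source passes through one of the two neighbouring odd-indexed sources,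
so attaching to each sink `t_j` the vector `c_j` of path sums from the `k` odd-indexed sources
gives `wt(I, J) = f(c_J) * g(c_{J^c})`, where `J^c` is the complement of `J` and `f`, `g` are
alternating forms of degrees `k - 1` and `k` on a space of dimension `k`.

It remains to prove an identity about such forms. After a perturbation the `c_x` with `x` odd form a
basis, so that `f` is a combination of the forms `det(c_x, ·)` and one may assume
`f = det(c_x, ·)` with `x` odd. Then only sets `J` without `x` contribute, and replacing `J` by its
complement minus `x` exchanges the two determinants, with signs that agree because `x` is odd, while
exchanging the even parts `K` and `K^c`.
-/

namespace GridPaths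

open Function

section Paths

/-- The antidiagonal of the grid on which a vertex lies. -/
def level (v : ℕ × ℕ) : ℕ := v.1 + v.2

/-- Membership in the vertex set `{1,…,m} × {1,…,n}` of the grid. -/
def InGrid (m n : ℕ) (v : ℕ × ℕ) : Prop := 1 ≤ v.1 ∧ v.1 ≤ m ∧ 1 ≤ v.2 ∧ v.2 ≤ n

/-- The set of directed grid paths from `u` to `v`. -/
def gridPaths (m n : ℕ) (u v : ℕ × ℕ) : Set (List (ℕ × ℕ)) := {p | IsGridPath m n u v p}

variable {m n : ℕ} {s t u v x : ℕ × ℕ} {p : List (ℕ × ℕ)}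

theorem level_of_gridStep (h : GridStep u v) : level v = level u + 1 := by
  rcases h with rfl | rfl <;> simp only [level] <;> omega

theorem gridStep_iff_eq_pred (hv : InGrid m n v) :
    GridStep u v ↔ u = (v.1 - 1, v.2) ∨ u = (v.1, v.2 - 1) := by
  obtain ⟨a, b⟩ := u
  obtain ⟨c, d⟩ := v
  simp only [InGrid, GridStep, Prod.mk.injEq] at hv ⊢
  omega

theorem not_isGridPath_nil : ¬ IsGridPath m n s t [] := by
  simp [IsGridPath]

theorem isGridPath_iff : IsGridPath m n s t p ↔ p.head? = some s ∧ p.getLast? = some t ∧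
    (∀ v ∈ p, InGrid m n v) ∧ p.IsChain GridStep :=
  Iff.rfl

theorem isGridPath_cons_iff : IsGridPath m n s t (x :: p) ↔ x = s ∧ InGrid m n s ∧
    ((p = [] ∧ s = t) ∨ ∃ u, GridStep s u ∧ IsGridPath m n u t p) := by
  simp only [isGridPath_iff]
  cases p with
  | nil =>
    simp only [List.head?_cons, List.getLast?_singleton, List.mem_singleton, forall_eq,
      List.head?_nil, reduceCtorEq, List.isChain_singleton, false_and, and_false, exists_false,
      Option.some.injEq]
    grind
  | cons y q =>
    simp only [List.head?_cons, Option.some.injEq, List.getLast?_cons_cons, List.mem_cons,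
      List.isChain_cons_cons]
    constructor
    · rintro ⟨rfl, hlast, hgrid, hstep, hchain⟩
      exact ⟨rfl, hgrid x (.inl rfl),
        .inr ⟨y, hstep, rfl, hlast, fun v hv => hgrid v (.inr hv), hchain⟩⟩
    · rintro ⟨rfl, hx, hnil | ⟨u, hstep, rfl, hlast, hgrid, hchain⟩⟩
      · simp at hnil
      · exact ⟨rfl, hlast, by grind, hstep, hchain⟩

theorem isGridPath_concat_iff : IsGridPath m n s t (p ++ [x]) ↔ x = t ∧ InGrid m n t ∧
    ((p = [] ∧ s = t) ∨ ∃ u, GridStep u t ∧ IsGridPath m n s u p) := by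
  simp only [isGridPath_iff]
  rcases List.eq_nil_or_concat p with rfl | ⟨q, y, rfl⟩
  · simp only [List.nil_append, List.head?_cons, List.getLast?_singleton, List.mem_singleton,
      forall_eq, List.head?_nil, reduceCtorEq, List.isChain_singleton, false_and, and_false,
      exists_false, Option.some.injEq]
    grind
  · have hhead : (q ++ [y] ++ [x]).head? = (q ++ [y]).head? := by cases q <;> simp
    simp only [List.concat_eq_append, hhead, List.getLast?_append, List.getLast?_singleton,
      List.mem_append, List.mem_singleton, List.isChain_append, Option.some_or,
      Option.some.injEq, Option.mem_def, List.head?_cons, List.isChain_singleton]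
    constructor
    · rintro ⟨hfirst, rfl, hgrid, hchain, -, hstep⟩
      exact ⟨rfl, hgrid x (.inr rfl),
        .inr ⟨y, hstep y rfl x rfl, hfirst, rfl, fun v hv => hgrid v (.inl hv), hchain⟩⟩
    · rintro ⟨rfl, hx, hnil | ⟨u, hstep, hfirst, rfl, hgrid, hchain⟩⟩
      · simp at hnil
      · exact ⟨hfirst, rfl, by grind, hchain, trivial, by grind⟩

theorem source_mem (h : IsGridPath m n s t p) : s ∈ p := List.mem_of_head? h.1

theorem target_mem (h : IsGridPath m n s t p) : t ∈ p := List.mem_of_getLast? h.2.1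

theorem eq_source_or_level_lt (h : IsGridPath m n s t p) (hv : v ∈ p) :
    v = s ∨ level s < level v := by
  induction p generalizing s with
  | nil => simp at hv
  | cons x p ih =>
    obtain ⟨rfl, -, ⟨rfl, -⟩ | ⟨u, hstep, hp⟩⟩ := isGridPath_cons_iff.1 h
    · exact .inl (by simpa using hv)
    · have hlevel := level_of_gridStep hstep
      rcases List.mem_cons.1 hv with rfl | hv
      · exact .inl rfl
      · rcases ih hp hv with rfl | hlt <;> omega

theorem eq_target_or_level_lt (h : IsGridPath m n s t p) (hv : v ∈ p) :
    v = t ∨ level v < level t := by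
  induction p using List.reverseRecOn generalizing t with
  | nil => simp at hv
  | append_singleton p x ih =>
    obtain ⟨rfl, -, ⟨rfl, -⟩ | ⟨u, hstep, hp⟩⟩ := isGridPath_concat_iff.1 h
    · exact .inl (by simpa using hv)
    · have hlevel := level_of_gridStep hstep
      rcases List.mem_append.1 hv with hv | hv
      · rcases ih hp hv with rfl | hlt <;> omega
      · exact .inl (by simpa using hv)

theorem gridPaths_eq_empty_of_source (hs : ¬ InGrid m n s) : gridPaths m n s t = ∅ :=
  Set.eq_empty_of_forall_notMem fun _ hp => hs (hp.2.2.1 _ (source_mem hp))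

theorem gridPaths_eq_empty_of_target (ht : ¬ InGrid m n t) : gridPaths m n s t = ∅ :=
  Set.eq_empty_of_forall_notMem fun _ hp => ht (hp.2.2.1 _ (target_mem hp))

theorem gridPaths_eq_empty_of_level_le (hne : s ≠ t) (hlevel : level t ≤ level s) :
    gridPaths m n s t = ∅ := by
  refine Set.eq_empty_of_forall_notMem fun p hp => ?_
  rcases eq_target_or_level_lt hp (source_mem hp) with h | h
  · exact hne h
  · omega

theorem gridPaths_self (hv : InGrid m n v) : gridPaths m n v v = {[v]} := by
  ext p
  refine ⟨fun hp => ?_, ?_⟩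
  · cases p with
    | nil => exact absurd hp not_isGridPath_nil
    | cons x p =>
      obtain ⟨rfl, -, ⟨rfl, -⟩ | ⟨u, hstep, hp⟩⟩ := isGridPath_cons_iff.1 hp
      · rfl
      · have hlevel := level_of_gridStep hstep
        rcases eq_source_or_level_lt hp (target_mem hp) with rfl | hlt <;> omega
  · rintro rfl
    exact isGridPath_cons_iff.2 ⟨rfl, hv, .inl ⟨rfl, rfl⟩⟩

theorem gridPaths_eq_union_cons (hs : InGrid m n s) (hst : s ≠ t) :
    gridPaths m n s t = List.cons s '' gridPaths m n (s.1 + 1, s.2) t ∪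
      List.cons s '' gridPaths m n (s.1, s.2 + 1) t := by
  ext p
  cases p with
  | nil => simp [gridPaths, not_isGridPath_nil]
  | cons x p =>
    simp only [gridPaths, Set.mem_ofPred_eq, isGridPath_cons_iff, GridStep, hs, hst, Set.mem_union,
      Set.mem_image, List.cons.injEq]
    grind

theorem gridPaths_eq_union_concat (ht : InGrid m n t) (hst : s ≠ t) :
    gridPaths m n s t = (· ++ [t]) '' gridPaths m n s (t.1 - 1, t.2) ∪
      (· ++ [t]) '' gridPaths m n s (t.1, t.2 - 1) := by
  ext p
  rcases List.eq_nil_or_concat p with rfl | ⟨p, x, rfl⟩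
  · simp [gridPaths, not_isGridPath_nil]
  · simp only [gridPaths, Set.mem_ofPred_eq, List.concat_eq_append, isGridPath_concat_iff,
      gridStep_iff_eq_pred ht, ht, hst, Set.mem_union, Set.mem_image, List.append_singleton_inj]
    grind

theorem disjoint_gridPaths_of_source_ne (h : u ≠ v) :
    Disjoint (gridPaths m n u t) (gridPaths m n v t) :=
  Set.disjoint_left.2 fun _ hu hv => h (Option.some_injective _ (hu.1.symm.trans hv.1))

theorem disjoint_gridPaths_of_target_ne (h : u ≠ v) :
    Disjoint (gridPaths m n s u) (gridPaths m n s v) :=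
  Set.disjoint_left.2 fun _ hu hv => h (Option.some_injective _ (hu.2.1.symm.trans hv.2.1))

theorem gridPaths_finite (m n : ℕ) (s t : ℕ × ℕ) : (gridPaths m n s t).Finite := by
  induction hN : level t generalizing t with
  | zero =>
    rw [gridPaths_eq_empty_of_target (by simp only [level, InGrid] at *; omega)]
    exact Set.finite_empty
  | succ N ih =>
    by_cases ht : InGrid m n t
    · rcases eq_or_ne s t with rfl | hst
      · rw [gridPaths_self ht]
        exact Set.finite_singleton _
      · rw [gridPaths_eq_union_concat ht hst]
        simp only [level, InGrid] at hN ht ih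
        exact ((ih _ (by grind)).image _).union ((ih _ (by grind)).image _)
    · rw [gridPaths_eq_empty_of_target ht]
      exact Set.finite_empty

variable (ω : ℕ × ℕ → ℕ × ℕ → ℝ)

theorem pathEdgeWeight_cons (x : ℕ × ℕ) (h : p.head? = some u) :
    pathEdgeWeight ω (x :: p) = ω x u * pathEdgeWeight ω p := by
  obtain ⟨q, rfl⟩ := List.head?_eq_some_iff.1 h
  simp [pathEdgeWeight]

theorem pathEdgeWeight_concat (x : ℕ × ℕ) (h : p.getLast? = some u) :
    pathEdgeWeight ω (p ++ [x]) = ω u x * pathEdgeWeight ω p := by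
  induction p with
  | nil => simp at h
  | cons y p ih =>
    cases p with
    | nil => simp_all [pathEdgeWeight]
    | cons z p =>
      rw [List.getLast?_cons_cons] at h
      rw [List.cons_append, pathEdgeWeight_cons ω y (u := z) rfl, ih h,
        pathEdgeWeight_cons ω y (u := z) (by simp), mul_left_comm]

end Paths

section Families

/-- Choices of one list from each `P i` such that no two of the chosen lists share an entry. -/
def disjointFamilies {ι α : Type*} (P : ι → Set (List α)) : Set (ι → List α) :=
  {p | (∀ i, p i ∈ P i) ∧ Pairwise fun i j => (p i).Disjoint (p j)}

/-- The total weight of the disjoint families chosen from `P`, a family being weighted by the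
product of the weights `w` of its members. -/
noncomputable def familyWeight {ι α R : Type*} [Fintype ι] [CommSemiring R] (w : List α → R)
    (P : ι → Set (List α)) : R :=
  ∑ᶠ p ∈ disjointFamilies P, ∏ i, w (p i)

variable {ι α R : Type*} {P : ι → Set (List α)}

theorem disjointFamilies_finite [Finite ι] (hP : ∀ i, (P i).Finite) :
    (disjointFamilies P).Finite :=
  (Set.Finite.pi' hP).subset fun _ hp => hp.1

theorem familyWeight_eq_zero_of_eq_empty [Fintype ι] [CommSemiring R] (w : List α → R) {i : ι}
    (h : P i = ∅) : familyWeight w P = 0 := by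
  rw [familyWeight, Set.eq_empty_of_forall_notMem (s := disjointFamilies P) fun p hp =>
    (h ▸ hp.1 i : p i ∈ (∅ : Set (List α))), finsum_mem_empty]

variable [DecidableEq ι] {A B : Set (List α)} {p : ι → List α} {l : ι}

theorem update_finite (hP : ∀ i, (P i).Finite) (hA : A.Finite) (l i : ι) :
    (update P l A i).Finite :=
  (forall_update_iff P fun _ S => S.Finite).2 ⟨hA, fun i _ => hP i⟩ i

theorem mem_disjointFamilies_update : p ∈ disjointFamilies (update P l A) ↔
    p l ∈ A ∧ (∀ i ≠ l, p i ∈ P i) ∧ Pairwise fun i j => (p i).Disjoint (p j) := by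
  rw [disjointFamilies, Set.mem_ofPred_eq, forall_update_iff P fun i S => p i ∈ S, and_assoc]

theorem disjointFamilies_update_union (P : ι → Set (List α)) (l : ι) (A B : Set (List α)) :
    disjointFamilies (update P l (A ∪ B)) =
      disjointFamilies (update P l A) ∪ disjointFamilies (update P l B) := by
  ext p
  simp only [Set.mem_union, mem_disjointFamilies_update]
  tauto

theorem pairwise_disjoint_update_iff {q : List α} :
    (Pairwise fun i j => (update p l q i).Disjoint (update p l q j)) ↔
      (∀ i ≠ l, q.Disjoint (p i)) ∧ ∀ i ≠ l, ∀ j ≠ l, i ≠ j → (p i).Disjoint (p j) := by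
  refine ⟨fun h => ⟨fun i hi => ?_, fun i hi j hj hij => ?_⟩, fun ⟨hq, hp⟩ i j hij => ?_⟩
  · simpa [hi] using h hi.symm
  · simpa [hi, hj] using h hij
  · rcases eq_or_ne i l with rfl | hi
    · simpa [hij.symm] using hq j hij.symm
    rcases eq_or_ne j l with rfl | hj
    · simpa [hi] using (hq i hi).symm
    · simpa [hi, hj] using hp i hi j hj hij

theorem update_mem_disjointFamilies_image_iff {e : List α → List α} {v : α}
    (he : Injective e) (hmem : ∀ p x, x ∈ e p ↔ x ∈ p ∨ x = v)
    (hv : ∀ i ≠ l, ∀ p ∈ P i, v ∉ p) {q : List α} :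
    update p l (e q) ∈ disjointFamilies (update P l (e '' A)) ↔
      update p l q ∈ disjointFamilies (update P l A) := by
  have hoff (r : List α) : (∀ i ≠ l, update p l r i ∈ P i) ↔ ∀ i ≠ l, p i ∈ P i :=
    forall₂_congr fun i hi => by rw [update_of_ne hi]
  simp only [mem_disjointFamilies_update, update_self, he.mem_set_image, hoff,
    pairwise_disjoint_update_iff]
  refine and_congr_right fun _ => and_congr_right fun hp => and_congr_left fun _ =>
    forall₂_congr fun i hi => ?_
  have hvp : v ∉ p i := hv i hi _ (hp i hi)
  simp only [List.Disjoint, hmem]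
  grind

variable [Fintype ι] [CommSemiring R] {w : List α → R}

theorem familyWeight_update_union (hP : ∀ i, (P i).Finite) (l : ι) (hA : A.Finite) (hB : B.Finite)
    (hAB : Disjoint A B) : familyWeight w (update P l (A ∪ B)) =
      familyWeight w (update P l A) + familyWeight w (update P l B) := by
  rw [familyWeight, disjointFamilies_update_union]
  refine finsum_mem_union (Set.disjoint_left.2 fun p hpA hpB => ?_)
    (disjointFamilies_finite (update_finite hP hA l))
    (disjointFamilies_finite (update_finite hP hB l))
  exact Set.disjoint_left.1 hAB (mem_disjointFamilies_update.1 hpA).1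
    (mem_disjointFamilies_update.1 hpB).1

theorem familyWeight_update_image (hP : ∀ i, (P i).Finite) (hA : A.Finite)
    {e : List α → List α} {v : α} {c : R} (he : Injective e)
    (hmem : ∀ p x, x ∈ e p ↔ x ∈ p ∨ x = v) (hv : ∀ i ≠ l, ∀ p ∈ P i, v ∉ p)
    (hw : ∀ p ∈ A, w (e p) = c * w p) :
    familyWeight w (update P l (e '' A)) = c * familyWeight w (update P l A) := by
  rw [familyWeight, familyWeight,
    mul_finsum_mem' _ _ (disjointFamilies_finite (update_finite hP hA l))]
  symm
  refine finsum_mem_eq_of_bijOn (fun p => update p l (e (p l))) ⟨fun p hp => ?_, ?_, fun p hp => ?_⟩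
    fun p hp => ?_
  · rwa [update_mem_disjointFamilies_image_iff he hmem hv, update_eq_self]
  · intro p _ q _ hpq
    funext i
    have hi := congrFun hpq i
    rcases eq_or_ne i l with rfl | hil
    · exact he (by simpa using hi)
    · simpa [hil] using hi
  · obtain ⟨q, -, hq⟩ := (mem_disjointFamilies_update.1 hp).1
    refine ⟨update p l q, ?_, by simp [hq]⟩
    rwa [← update_mem_disjointFamilies_image_iff he hmem hv, hq, update_eq_self]
  · have hl := hw _ (mem_disjointFamilies_update.1 hp).1
    rw [Fintype.prod_eq_mul_prod_compl l, Fintype.prod_eq_mul_prod_compl l, update_self, hl,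
      mul_assoc]
    refine congrArg _ (congrArg _ (Finset.prod_congr rfl fun i hi => ?_))
    rw [update_of_ne (by simpa using hi)]

theorem familyWeight_update_union_image (hP : ∀ i, (P i).Finite) (hA : A.Finite) (hB : B.Finite)
    (hAB : Disjoint A B) {e : List α → List α} {v : α} {a b : R} (he : Injective e)
    (hmem : ∀ p x, x ∈ e p ↔ x ∈ p ∨ x = v) (hv : ∀ i ≠ l, ∀ p ∈ P i, v ∉ p)
    (ha : ∀ p ∈ A, w (e p) = a * w p) (hb : ∀ p ∈ B, w (e p) = b * w p) :
    familyWeight w (update P l (e '' A ∪ e '' B)) =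
      a * familyWeight w (update P l A) + b * familyWeight w (update P l B) := by
  rw [familyWeight_update_union hP l (hA.image e) (hB.image e) ((Set.disjoint_image_iff he).2 hAB),
    familyWeight_update_image hP hA he hmem hv ha, familyWeight_update_image hP hB he hmem hv hb]

end Families

section DisjointPaths

variable {ι : Type*} [Fintype ι] (m n : ℕ) (ω : ℕ × ℕ → ℕ × ℕ → ℝ)

/-- The total weight of the families of pairwise vertex-disjoint grid paths, the `i`-th of which
leads from `s i` to `t i`. -/
noncomputable def ncWeight (s t : ι → ℕ × ℕ) : ℝ :=
  familyWeight (pathEdgeWeight ω) fun i => gridPaths m n (s i) (t i)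

/-- The total weight of the grid paths from `u` to `v`. -/
noncomputable def pathSum (u v : ℕ × ℕ) : ℝ :=
  ∑ᶠ p ∈ gridPaths m n u v, pathEdgeWeight ω p

variable {m n ω} {s t : ι → ℕ × ℕ} {l : ι}

theorem ncWeight_eq_zero {i j : ι} (hij : i ≠ j) (h : s i = s j ∨ t i = t j) :
    ncWeight m n ω s t = 0 := by
  rw [ncWeight, familyWeight,
    Set.eq_empty_of_forall_notMem (s := disjointFamilies _) fun p hp => ?_, finsum_mem_empty]
  rcases h with h | h
  · exact hp.2 hij (source_mem (hp.1 i)) (h ▸ source_mem (hp.1 j))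
  · exact hp.2 hij (target_mem (hp.1 i)) (h ▸ target_mem (hp.1 j))

theorem ncWeight_eq_zero_of_gridPaths_eq_empty {i : ι} (h : gridPaths m n (s i) (t i) = ∅) :
    ncWeight m n ω s t = 0 :=
  familyWeight_eq_zero_of_eq_empty _ h

theorem ncWeight_self (hs : Injective s) (hgrid : ∀ i, InGrid m n (s i)) :
    ncWeight m n ω s s = 1 := by
  have htrivial : disjointFamilies (fun i => gridPaths m n (s i) (s i)) = {fun i => [s i]} := by
    ext p
    simp only [disjointFamilies, gridPaths_self (hgrid _), Set.mem_ofPred_eq,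
      Set.mem_singleton_iff, funext_iff]
    refine ⟨And.left, fun hp => ⟨hp, fun i j hij => ?_⟩⟩
    simpa [hp] using hs.ne hij.symm
  rw [ncWeight, familyWeight, htrivial, finsum_mem_singleton]
  simp [pathEdgeWeight]

variable [DecidableEq ι]

theorem ncWeight_eq_add_of_source (hgrid : InGrid m n (s l)) (hst : s l ≠ t l)
    (hmin : ∀ i ≠ l, s i ≠ s l ∧ level (s l) ≤ level (s i)) :
    ncWeight m n ω s t =
      ω (s l) ((s l).1 + 1, (s l).2) * ncWeight m n ω (update s l ((s l).1 + 1, (s l).2)) t +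
      ω (s l) ((s l).1, (s l).2 + 1) * ncWeight m n ω (update s l ((s l).1, (s l).2 + 1)) t := by
  have hupdate (u : ℕ × ℕ) : (fun i => gridPaths m n (update s l u i) (t i)) =
      update (fun i => gridPaths m n (s i) (t i)) l (gridPaths m n u (t l)) :=
    funext fun i => apply_update (fun i v => gridPaths m n v (t i)) s l u i
  simp only [ncWeight, hupdate]
  rw [← familyWeight_update_union_image (e := List.cons (s l)) (v := s l)
    (fun i => gridPaths_finite m n _ _) (gridPaths_finite m n _ _) (gridPaths_finite m n _ _)
    (disjoint_gridPaths_of_source_ne (by simp)) (List.cons_injective)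
    (fun p x => by simp [or_comm]) ?_ (fun p hp => pathEdgeWeight_cons ω _ hp.1)
    (fun p hp => pathEdgeWeight_cons ω _ hp.1), ← gridPaths_eq_union_cons hgrid hst, update_eq_self]
  intro i hi p hp hmem
  have hlevel := (hmin i hi).2
  rcases eq_source_or_level_lt hp hmem with h | h
  · exact (hmin i hi).1 h.symm
  · omega

theorem ncWeight_eq_add_of_target (hgrid : InGrid m n (t l)) (hst : s l ≠ t l)
    (hmax : ∀ i ≠ l, t i ≠ t l ∧ level (t i) ≤ level (t l)) :
    ncWeight m n ω s t =
      ω ((t l).1 - 1, (t l).2) (t l) * ncWeight m n ω s (update t l ((t l).1 - 1, (t l).2)) +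
      ω ((t l).1, (t l).2 - 1) (t l) * ncWeight m n ω s (update t l ((t l).1, (t l).2 - 1)) := by
  have hupdate (u : ℕ × ℕ) : (fun i => gridPaths m n (s i) (update t l u i)) =
      update (fun i => gridPaths m n (s i) (t i)) l (gridPaths m n (s l) u) :=
    funext fun i => apply_update (fun i v => gridPaths m n (s i) v) t l u i
  have hne : ((t l).1 - 1, (t l).2) ≠ ((t l).1, (t l).2 - 1) := by
    simp only [InGrid, ne_eq, Prod.mk.injEq] at hgrid ⊢
    omega
  simp only [ncWeight, hupdate]
  rw [← familyWeight_update_union_image (e := (· ++ [t l])) (v := t l)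
    (fun i => gridPaths_finite m n _ _) (gridPaths_finite m n _ _) (gridPaths_finite m n _ _)
    (disjoint_gridPaths_of_target_ne hne) (List.append_left_injective _)
    (fun p x => by simp) ?_ (fun p hp => pathEdgeWeight_concat ω _ hp.2.1)
    (fun p hp => pathEdgeWeight_concat ω _ hp.2.1), ← gridPaths_eq_union_concat hgrid hst,
    update_eq_self]
  intro i hi p hp hmem
  have hlevel := (hmax i hi).2
  rcases eq_target_or_level_lt hp hmem with h | h
  · exact (hmax i hi).1 h.symm
  · omega

variable {u v : ℕ × ℕ}

theorem pathSum_eq_ncWeight (u v : ℕ × ℕ) :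
    pathSum m n ω u v = ncWeight m n ω (fun _ : Unit => u) (fun _ => v) := by
  refine finsum_mem_eq_of_bijOn (fun p _ => p) ⟨fun p hp => ?_, ?_, fun p hp => ?_⟩ fun p _ => ?_
  · exact ⟨fun _ => hp, fun i j hij => (hij rfl).elim⟩
  · exact fun p _ q _ hpq => congrFun hpq ()
  · exact ⟨p (), hp.1 (), rfl⟩
  · simp

theorem pathSum_eq_zero (h : gridPaths m n u v = ∅) : pathSum m n ω u v = 0 := by
  rw [pathSum, h, finsum_mem_empty]

theorem pathSum_self (hv : InGrid m n v) : pathSum m n ω v v = 1 := by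
  rw [pathSum, gridPaths_self hv, finsum_mem_singleton]
  simp [pathEdgeWeight]

theorem pathSum_eq_add_of_source (hu : InGrid m n u) (huv : u ≠ v) : pathSum m n ω u v =
    ω u (u.1 + 1, u.2) * pathSum m n ω (u.1 + 1, u.2) v +
      ω u (u.1, u.2 + 1) * pathSum m n ω (u.1, u.2 + 1) v := by
  have h := ncWeight_eq_add_of_source (ω := ω) (s := fun _ : Unit => u) (t := fun _ => v) (l := ())
    hu huv (fun i hi => (hi rfl).elim)
  rw [update_eq_const_of_subsingleton, update_eq_const_of_subsingleton] at h
  simp only [pathSum_eq_ncWeight]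
  exact h

theorem pathSum_eq_add_of_target (hv : InGrid m n v) (huv : u ≠ v) : pathSum m n ω u v =
    ω (v.1 - 1, v.2) v * pathSum m n ω u (v.1 - 1, v.2) +
      ω (v.1, v.2 - 1) v * pathSum m n ω u (v.1, v.2 - 1) := by
  have h := ncWeight_eq_add_of_target (ω := ω) (s := fun _ : Unit => u) (t := fun _ => v) (l := ())
    hv huv (fun i hi => (hi rfl).elim)
  rw [update_eq_const_of_subsingleton, update_eq_const_of_subsingleton] at h
  simp only [pathSum_eq_ncWeight]
  exact h

end DisjointPaths

section LindstromGesselViennot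

/-- The antidiagonal coordinate of a vertex, increasing from south-west to north-east. -/
def content (v : ℕ × ℕ) : ℤ := v.2 - v.1

variable {ι : Type*} {m n : ℕ} {ω : ℕ × ℕ → ℕ × ℕ → ℝ} {s t : ι → ℕ × ℕ} {u : ℕ × ℕ} {l : ι}

theorem eq_of_content_eq {u v : ℕ × ℕ} (hcontent : content u = content v)
    (hlevel : level u = level v) : u = v := by
  simp only [content, level, Prod.ext_iff] at *
  omega

-- Contents on the same level have the same parity, so a unit move cannot jump over a vertex.
theorem content_lt_iff_of_gridStep {u v x : ℕ × ℕ} (hstep : GridStep u v ∨ GridStep v u)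
    (hlevel : level x = level u ∨ level x = level v) (hxu : x ≠ u) (hxv : x ≠ v) :
    (content u < content x ↔ content v < content x) ∧
      (content x < content u ↔ content x < content v) := by
  simp only [content, level, GridStep, Prod.ext_iff, ne_eq] at *
  omega

theorem sum_update_lt {α : Type*} [Fintype ι] [DecidableEq ι] {f : α → ℕ} {t : ι → α} {u : α}
    (h : f u < f (t l)) : ∑ i, f (update t l u i) < ∑ i, f (t i) := by
  have hlt : f ∘ update t l u < f ∘ t := by rwa [comp_update, update_lt_self_iff]
  exact Fintype.sum_strictMono hlt

section Order

variable [LinearOrder ι]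

theorem eq_of_strictMono_of_range_subset {β : Type*} [Finite ι] [Preorder β] {f g : ι → β}
    (hf : StrictMono f) (hg : StrictMono g) (h : Set.range f ⊆ Set.range g) : f = g := by
  refine (StrictMono.range_inj hf hg).1 (Set.eq_of_subset_of_ncard_le h ?_)
  rw [Set.ncard_range_of_injective hf.injective, Set.ncard_range_of_injective hg.injective]

theorem injective_of_strictMono_content (ht : StrictMono (content ∘ t)) : Injective t :=
  ht.injective.of_comp

theorem strictMono_content_update_or_exists_eq (ht : StrictMono (content ∘ t))
    (hstep : GridStep u (t l) ∨ GridStep (t l) u)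
    (hlevel : ∀ i, level (t i) = level u ∨ level (t i) = level (t l)) :
    StrictMono (content ∘ update t l u) ∨ ∃ j ≠ l, t j = u := by
  refine or_iff_not_imp_right.2 fun hne => ?_
  push Not at hne
  have hcompare (j : ι) (hj : j ≠ l) := content_lt_iff_of_gridStep hstep (hlevel j) (hne j hj)
    ((injective_of_strictMono_content ht).ne hj)
  intro i j hij
  have hlt : content (t i) < content (t j) := ht hij
  rcases eq_or_ne i l with rfl | hi
  · simpa [hij.ne'] using (hcompare j hij.ne').1.2 hlt
  rcases eq_or_ne j l with rfl | hj
  · simpa [hi] using (hcompare i hi).2.2 hlt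
  · simpa [hi, hj] using hlt

end Order

/-- The matrix of path sums from the sources `s` to the targets `t`. -/
noncomputable def pathMatrix (m n : ℕ) (ω : ℕ × ℕ → ℕ × ℕ → ℝ) (s t : ι → ℕ × ℕ) : Matrix ι ι ℝ :=
  .of fun i j => pathSum m n ω (s i) (t j)

section Det

variable [DecidableEq ι]

theorem pathMatrix_self {L : ℕ} (hs : Injective s) (hgrid : ∀ i, InGrid m n (s i))
    (hL : ∀ i, level (s i) = L) : pathMatrix m n ω s s = 1 := by
  ext i j
  rcases eq_or_ne i j with rfl | hij
  · rw [Matrix.one_apply_eq]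
    exact pathSum_self (hgrid i)
  · rw [Matrix.one_apply_ne hij]
    exact pathSum_eq_zero
      (gridPaths_eq_empty_of_level_le (hs.ne hij) ((hL j).trans (hL i).symm).le)

theorem pathMatrix_update_source (u : ℕ × ℕ) : pathMatrix m n ω (update s l u) t =
    (pathMatrix m n ω s t).updateRow l fun j => pathSum m n ω u (t j) := by
  ext i j
  rcases eq_or_ne i l with rfl | hi
  · simp [pathMatrix]
  · simp [pathMatrix, hi]

theorem pathMatrix_update_target (u : ℕ × ℕ) : pathMatrix m n ω s (update t l u) =
    (pathMatrix m n ω s t).updateCol l fun i => pathSum m n ω (s i) u := by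
  ext i j
  rcases eq_or_ne j l with rfl | hj
  · simp [pathMatrix]
  · simp [pathMatrix, hj]

variable [Fintype ι]

theorem det_pathMatrix_eq_zero {i j : ι} (hij : i ≠ j) (h : s i = s j ∨ t i = t j) :
    (pathMatrix m n ω s t).det = 0 := by
  rcases h with h | h
  · exact Matrix.det_zero_of_row_eq hij (by ext; simp [pathMatrix, h])
  · exact Matrix.det_zero_of_column_eq hij (by simp [pathMatrix, h])

theorem ncWeight_eq_det_of_eq {i j : ι} (hij : i ≠ j) (h : s i = s j ∨ t i = t j) :
    ncWeight m n ω s t = (pathMatrix m n ω s t).det := by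
  rw [ncWeight_eq_zero hij h, det_pathMatrix_eq_zero hij h]

theorem ncWeight_eq_det_of_source_notMem (h : ¬ InGrid m n (s l)) :
    ncWeight m n ω s t = (pathMatrix m n ω s t).det := by
  rw [ncWeight_eq_zero_of_gridPaths_eq_empty (gridPaths_eq_empty_of_source h),
    Matrix.det_eq_zero_of_row_eq_zero l fun _ =>
      pathSum_eq_zero (gridPaths_eq_empty_of_source h)]

theorem ncWeight_eq_det_of_target_notMem (h : ¬ InGrid m n (t l)) :
    ncWeight m n ω s t = (pathMatrix m n ω s t).det := by
  rw [ncWeight_eq_zero_of_gridPaths_eq_empty (gridPaths_eq_empty_of_target h),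
    Matrix.det_eq_zero_of_column_eq_zero l fun _ =>
      pathSum_eq_zero (gridPaths_eq_empty_of_target h)]

theorem det_pathMatrix_eq_add_of_source (hgrid : InGrid m n (s l)) (hst : ∀ j, s l ≠ t j) :
    (pathMatrix m n ω s t).det =
      ω (s l) ((s l).1 + 1, (s l).2) *
        (pathMatrix m n ω (update s l ((s l).1 + 1, (s l).2)) t).det +
      ω (s l) ((s l).1, (s l).2 + 1) *
        (pathMatrix m n ω (update s l ((s l).1, (s l).2 + 1)) t).det := by
  simp only [pathMatrix_update_source, ← Matrix.det_updateRow_smul, ← Matrix.det_updateRow_add]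
  congr 1
  nth_rw 1 [← update_eq_self l s, pathMatrix_update_source]
  congr 1
  funext j
  exact pathSum_eq_add_of_source hgrid (hst j)

theorem det_pathMatrix_eq_add_of_target (hgrid : InGrid m n (t l)) (hst : ∀ i, s i ≠ t l) :
    (pathMatrix m n ω s t).det =
      ω ((t l).1 - 1, (t l).2) (t l) *
        (pathMatrix m n ω s (update t l ((t l).1 - 1, (t l).2))).det +
      ω ((t l).1, (t l).2 - 1) (t l) *
        (pathMatrix m n ω s (update t l ((t l).1, (t l).2 - 1))).det := by
  simp only [pathMatrix_update_target, ← Matrix.det_updateCol_smul, ← Matrix.det_updateCol_add]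
  congr 1
  nth_rw 1 [← update_eq_self l t, pathMatrix_update_target]
  congr 1
  funext i
  exact pathSum_eq_add_of_target hgrid (hst i)

end Det

variable [Fintype ι] [LinearOrder ι]

theorem ncWeight_eq_det_of_level_eq {L : ℕ} (hs : StrictMono (content ∘ s))
    (ht : StrictMono (content ∘ t)) (hsL : ∀ i, level (s i) = L) (htL : ∀ i, level (t i) = L) :
    ncWeight m n ω s t = (pathMatrix m n ω s t).det := by
  have hempty {i j : ι} (hij : s i ≠ t j) : gridPaths m n (s i) (t j) = ∅ :=
    gridPaths_eq_empty_of_level_le hij ((htL j).trans (hsL i).symm).le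
  by_cases hgrid : ∀ i, InGrid m n (s i)
  · by_cases hrange : ∀ j, t j ∈ Set.range s
    · have hsub : Set.range (content ∘ t) ⊆ Set.range (content ∘ s) := by
        rintro _ ⟨j, rfl⟩
        obtain ⟨i, hi⟩ := hrange j
        exact ⟨i, congrArg content hi⟩
      obtain rfl : t = s := funext fun i => eq_of_content_eq
        (congrFun (eq_of_strictMono_of_range_subset ht hs hsub) i) ((htL i).trans (hsL i).symm)
      have hinj := injective_of_strictMono_content hs
      rw [ncWeight_self hinj hgrid, pathMatrix_self hinj hgrid hsL, Matrix.det_one]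
    · push Not at hrange
      obtain ⟨j, hj⟩ := hrange
      have hne (i : ι) : s i ≠ t j := fun h => hj ⟨i, h⟩
      rw [ncWeight_eq_zero_of_gridPaths_eq_empty (hempty (hne j)),
        Matrix.det_eq_zero_of_column_eq_zero j fun i => pathSum_eq_zero (hempty (hne i))]
  · push Not at hgrid
    obtain ⟨i, hi⟩ := hgrid
    exact ncWeight_eq_det_of_source_notMem hi

theorem ncWeight_eq_det_of_raise_sources {a : ℕ}
    (hbase : ∀ s' : ι → ℕ × ℕ, StrictMono (content ∘ s') → (∀ i, level (s' i) = a + 1) →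
      ncWeight m n ω s' t = (pathMatrix m n ω s' t).det)
    (ht : ∀ j, a < level (t j)) (hs : StrictMono (content ∘ s))
    (hlevel : ∀ i, level (s i) = a ∨ level (s i) = a + 1) :
    ncWeight m n ω s t = (pathMatrix m n ω s t).det := by
  induction hN : ∑ i, (a + 1 - level (s i)) using Nat.strong_induction_on generalizing s with
  | _ N ih =>
  by_cases hall : ∀ i, level (s i) = a + 1
  · exact hbase s hs hall
  push Not at hall
  obtain ⟨l, hl⟩ := hall
  replace hl : level (s l) = a := (hlevel l).resolve_right hl
  by_cases hgrid : InGrid m n (s l)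
  swap
  · exact ncWeight_eq_det_of_source_notMem hgrid
  have hraise (u : ℕ × ℕ) (hu : GridStep (s l) u) :
      ncWeight m n ω (update s l u) t = (pathMatrix m n ω (update s l u) t).det := by
    have hul : level u = a + 1 := by rw [level_of_gridStep hu, hl]
    rcases strictMono_content_update_or_exists_eq hs (.inr hu)
      (by rw [hl, hul]; exact fun i => (hlevel i).symm) with hsorted | ⟨j, hj, rfl⟩
    · exact ih _ (hN ▸ sum_update_lt (f := (a + 1 - level ·)) (by omega)) hsorted
        ((forall_update_iff s fun _ v => level v = a ∨ level v = a + 1).2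
          ⟨.inr hul, fun i _ => hlevel i⟩) rfl
    · exact ncWeight_eq_det_of_eq hj (.inl (by simp [hj]))
  have hst (j : ι) : s l ≠ t j := fun h => (ht j).ne (by rw [← h, hl])
  rw [ncWeight_eq_add_of_source hgrid (hst l) fun i hi =>
      ⟨(injective_of_strictMono_content hs).ne hi, by have := hlevel i; omega⟩,
    det_pathMatrix_eq_add_of_source hgrid hst, hraise _ (.inl rfl), hraise _ (.inr rfl)]

theorem ncWeight_eq_det_of_lower_targets {b : ℕ}
    (hbase : ∀ t' : ι → ℕ × ℕ, StrictMono (content ∘ t') → (∀ i, level (t' i) = b) →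
      ncWeight m n ω s t' = (pathMatrix m n ω s t').det)
    (hs : ∀ i, level (s i) < b + 1) (ht : StrictMono (content ∘ t))
    (hlevel : ∀ j, level (t j) = b ∨ level (t j) = b + 1) :
    ncWeight m n ω s t = (pathMatrix m n ω s t).det := by
  induction hN : ∑ j, level (t j) using Nat.strong_induction_on generalizing t with
  | _ N ih =>
  by_cases hall : ∀ j, level (t j) = b
  · exact hbase t ht hall
  push Not at hall
  obtain ⟨l, hl⟩ := hall
  replace hl : level (t l) = b + 1 := (hlevel l).resolve_left hl
  by_cases hgrid : InGrid m n (t l)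
  swap
  · exact ncWeight_eq_det_of_target_notMem hgrid
  have hlower (u : ℕ × ℕ) (hu : u = ((t l).1 - 1, (t l).2) ∨ u = ((t l).1, (t l).2 - 1)) :
      ncWeight m n ω s (update t l u) = (pathMatrix m n ω s (update t l u)).det := by
    replace hu : GridStep u (t l) := (gridStep_iff_eq_pred hgrid).2 hu
    have hul : level u = b := by have := level_of_gridStep hu; omega
    rcases strictMono_content_update_or_exists_eq ht (.inl hu) (by rwa [hl, hul])
      with hsorted | ⟨j, hj, rfl⟩
    · exact ih _ (hN ▸ sum_update_lt (f := level) (by omega)) hsorted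
        ((forall_update_iff t fun _ v => level v = b ∨ level v = b + 1).2
          ⟨.inl hul, fun i _ => hlevel i⟩) rfl
    · exact ncWeight_eq_det_of_eq hj (.inr (by simp [hj]))
  have hst (i : ι) : s i ≠ t l := fun h => (hs i).ne (by rw [h, hl])
  rw [ncWeight_eq_add_of_target hgrid (hst l) fun j hj =>
      ⟨(injective_of_strictMono_content ht).ne hj, by have := hlevel j; omega⟩,
    det_pathMatrix_eq_add_of_target hgrid hst, hlower _ (.inl rfl), hlower _ (.inr rfl)]

theorem ncWeight_eq_det {a b : ℕ} (hab : a + 1 ≤ b) (hs : StrictMono (content ∘ s))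
    (ht : StrictMono (content ∘ t)) (hsa : ∀ i, level (s i) = a ∨ level (s i) = a + 1)
    (htb : ∀ j, level (t j) = b ∨ level (t j) = b + 1) :
    ncWeight m n ω s t = (pathMatrix m n ω s t).det := by
  suffices hsingle : ∀ t' : ι → ℕ × ℕ, StrictMono (content ∘ t') → (∀ j, level (t' j) = b) →
      ncWeight m n ω s t' = (pathMatrix m n ω s t').det from
    ncWeight_eq_det_of_lower_targets hsingle (fun i => by have := hsa i; omega) ht htb
  clear ht htb
  induction b, hab using Nat.le_induction with
  | base =>
    exact fun t' ht htb => ncWeight_eq_det_of_raise_sources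
      (fun s' hs hsa => ncWeight_eq_det_of_level_eq hs ht hsa htb)
      (fun j => by rw [htb]; omega) hs hsa
  | succ b hab ih =>
    exact fun t' ht htb => ncWeight_eq_det_of_lower_targets ih
      (fun i => by have := hsa i; omega) ht fun j => .inr (htb j)

end LindstromGesselViennot

section AlternatingForms

variable {R M N : Type*} [CommRing R] [AddCommGroup M] [Module R M] {r : ℕ}

theorem alternatingMap_ext_removeNth [AddCommGroup N] [Module R N]
    (e : Module.Basis (Fin (r + 1)) R M) {f g : M [⋀^Fin r]→ₗ[R] N}
    (h : ∀ j : Fin (r + 1), f (j.removeNth e) = g (j.removeNth e)) : f = g := by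
  refine Module.Basis.ext_alternating e fun v hv => ?_
  obtain ⟨j, hj⟩ : ∃ j, ∀ i, v i ≠ j := by
    by_contra! hsurj
    simpa using Fintype.card_le_of_surjective v hsurj
  choose τ hτ using fun i => Fin.exists_succAbove_eq (hj i)
  have hinj : Injective τ := fun i i' hi => hv (by rw [← hτ, ← hτ, hi])
  let σ : Equiv.Perm (Fin r) := Equiv.ofBijective τ (Finite.injective_iff_bijective.1 hinj)
  have hperm : (fun i => e (v i)) = j.removeNth e ∘ σ := funext fun i => by
    simp [σ, Fin.removeNth, hτ]
  rw [hperm, f.map_perm, g.map_perm, h]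

theorem alternatingMap_insertNth_eq_curryLeft (d : M [⋀^Fin (r + 1)]→ₗ[R] R) (p : Fin (r + 1))
    (x : M) (v : Fin r → M) : d (p.insertNth x v) = (-1) ^ (p : ℕ) * d.curryLeft x v := by
  rw [AlternatingMap.map_insertNth, zsmul_eq_mul]
  push_cast
  rfl

theorem detRowAlternating_curryLeft_removeNth (a : Fin (r + 1) → R) (j : Fin (r + 1)) :
    Matrix.detRowAlternating.curryLeft a (j.removeNth (Pi.basisFun R (Fin (r + 1)))) =
      (-1) ^ (j : ℕ) * a j := by
  have hdet : Matrix.detRowAlternating (j.insertNth a (j.removeNth (Pi.basisFun R (Fin (r + 1)))))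
      = a j := by
    have hone : ⇑(Pi.basisFun R (Fin (r + 1))) = (1 : Matrix (Fin (r + 1)) (Fin (r + 1)) R) := by
      ext i j
      simp [Matrix.one_eq_pi_single]
    rw [Fin.insertNth_removeNth, hone]
    change (Matrix.updateRow 1 j a).det = a j
    rw [← Matrix.cramer_transpose_apply, Matrix.transpose_one, Matrix.cramer_one]
    rfl
  rw [← hdet, alternatingMap_insertNth_eq_curryLeft, ← mul_assoc, ← mul_pow, neg_one_mul, neg_neg,
    one_pow, one_mul]

theorem exists_eq_detRowAlternating_curryLeft (f : (Fin (r + 1) → R) [⋀^Fin r]→ₗ[R] R) :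
    ∃ a, f = Matrix.detRowAlternating.curryLeft a := by
  refine ⟨fun j => (-1) ^ (j : ℕ) * f (j.removeNth (Pi.basisFun R _)),
    alternatingMap_ext_removeNth (Pi.basisFun R _) fun j => ?_⟩
  rw [detRowAlternating_curryLeft_removeNth, ← mul_assoc, ← mul_pow, neg_one_mul, neg_neg,
    one_pow, one_mul]

end AlternatingForms

section SortedSubsets

/-- The `i`-th smallest element of `S`, counted from `0`; the value is `0` when `S` has at most
`i` elements. -/
def sortedNth (S : Finset ℕ) (i : ℕ) : ℕ := (S.sort (· ≤ ·)).getD i 0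

variable {S : Finset ℕ} {r x : ℕ}

theorem sortedNth_eq_orderEmbOfFin (hS : S.card = r) (i : Fin r) :
    sortedNth S i = S.orderEmbOfFin hS i := by
  rw [Finset.orderEmbOfFin_apply, sortedNth, List.getD_eq_getElem]
  rfl

theorem sortedNth_mem (hS : S.card = r) (i : Fin r) : sortedNth S i ∈ S := by
  rw [sortedNth_eq_orderEmbOfFin hS]
  exact Finset.orderEmbOfFin_mem _ _ _

theorem exists_sortedNth_eq (hS : S.card = r) (hx : x ∈ S) : ∃ i : Fin r, sortedNth S i = x := by
  simp only [sortedNth_eq_orderEmbOfFin hS]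
  rwa [← Set.mem_range, Finset.range_orderEmbOfFin]

theorem strictMono_sortedNth (hS : S.card = r) : StrictMono fun i : Fin r => sortedNth S i := by
  simp only [sortedNth_eq_orderEmbOfFin hS]
  exact (S.orderEmbOfFin hS).strictMono

theorem card_filter_lt_sortedNth (hS : S.card = r) (p : Fin r) :
    (S.filter (· < sortedNth S p)).card = p := by
  have himage : S.filter (· < sortedNth S p) =
      (Finset.Iio p).image fun i : Fin r => sortedNth S i := by
    ext y
    simp only [Finset.mem_filter, Finset.mem_image, Finset.mem_Iio]
    constructor
    · rintro ⟨hy, hlt⟩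
      obtain ⟨q, rfl⟩ := exists_sortedNth_eq hS hy
      exact ⟨q, (strictMono_sortedNth hS).lt_iff_lt.1 hlt, rfl⟩
    · rintro ⟨q, hq, rfl⟩
      exact ⟨sortedNth_mem hS q, strictMono_sortedNth hS hq⟩
  rw [himage, Finset.card_image_of_injective _ (strictMono_sortedNth hS).injective, Fin.card_Iio]

theorem sortedNth_erase (hS : S.card = r + 1) (p : Fin (r + 1)) (i : Fin r) :
    sortedNth (S.erase (sortedNth S p)) i = sortedNth S (p.succAbove i) := by
  have hcard : (S.erase (sortedNth S p)).card = r := by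
    rw [Finset.card_erase_of_mem (sortedNth_mem hS p), hS, Nat.add_sub_cancel]
  rw [sortedNth_eq_orderEmbOfFin hcard]
  refine (congrFun (Finset.orderEmbOfFin_unique hcard
    (f := fun i => sortedNth S (p.succAbove i)) (fun i => ?_) ?_) i).symm
  · exact Finset.mem_erase.2 ⟨(strictMono_sortedNth hS).injective.ne (Fin.succAbove_ne p i),
      sortedNth_mem hS _⟩
  · exact (strictMono_sortedNth hS).comp (Fin.strictMono_succAbove p)

theorem alternatingMap_sortedNth_eq_curryLeft {R M : Type*} [CommRing R] [AddCommGroup M]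
    [Module R M] (d : M [⋀^Fin (r + 1)]→ₗ[R] R) (c : ℕ → M) (hS : S.card = r + 1) (hx : x ∈ S) :
    d (fun i => c (sortedNth S i)) = (-1) ^ (S.filter (· < x)).card *
      d.curryLeft (c x) fun i => c (sortedNth (S.erase x) i) := by
  obtain ⟨p, rfl⟩ := exists_sortedNth_eq hS hx
  simp only [card_filter_lt_sortedNth hS, sortedNth_erase hS]
  rw [← alternatingMap_insertNth_eq_curryLeft]
  exact congrArg d (Fin.insertNth_self_removeNth p fun i => c (sortedNth S i)).symm

end SortedSubsets

section SplitSums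

/-- The even indices `2, 4, …, 2r` among `1, …, 2r + 1`. -/
def evenIndices (r : ℕ) : Finset ℕ := (Finset.Icc 1 (2 * r + 1)).filter fun x => x % 2 = 0

/-- The `r`-element subsets of `{1, …, 2r + 1}` whose set of even elements is `K`. -/
def patternsWithEvens (r : ℕ) (K : Finset ℕ) : Finset (Finset ℕ) :=
  ((Finset.Icc 1 (2 * r + 1)).powersetCard r).filter fun J => J.filter (fun x => x % 2 = 0) = K

variable {r x : ℕ} {J K : Finset ℕ}

theorem mem_patternsWithEvens : J ∈ patternsWithEvens r K ↔
    (J ⊆ Finset.Icc 1 (2 * r + 1) ∧ J.card = r) ∧ J.filter (fun x => x % 2 = 0) = K := by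
  rw [patternsWithEvens, Finset.mem_filter, Finset.mem_powersetCard]

theorem card_Icc_sdiff (hJ : J ⊆ Finset.Icc 1 (2 * r + 1)) (hcard : J.card = r) :
    (Finset.Icc 1 (2 * r + 1) \ J).card = r + 1 := by
  rw [Finset.card_sdiff_of_subset hJ, hcard, Nat.card_Icc]
  omega

/-- The subset of `{1, …, 2r + 1}` complementary to `J` and the index `x`. -/
def complErase (r x : ℕ) (J : Finset ℕ) : Finset ℕ := (Finset.Icc 1 (2 * r + 1) \ J).erase x

theorem mem_complErase {y : ℕ} :
    y ∈ complErase r x J ↔ y ≠ x ∧ y ∈ Finset.Icc 1 (2 * r + 1) ∧ y ∉ J := by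
  rw [complErase, Finset.mem_erase, Finset.mem_sdiff]

theorem complErase_complErase (hJ : J ⊆ Finset.Icc 1 (2 * r + 1)) (hxJ : x ∉ J) :
    complErase r x (complErase r x J) = J := by
  ext y
  have := @hJ y
  simp only [mem_complErase]
  grind

theorem Icc_sdiff_complErase (hJ : J ⊆ Finset.Icc 1 (2 * r + 1))
    (hx : x ∈ Finset.Icc 1 (2 * r + 1)) :
    Finset.Icc 1 (2 * r + 1) \ complErase r x J = insert x J := by
  ext y
  have := @hJ y
  simp only [Finset.mem_sdiff, mem_complErase, Finset.mem_insert]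
  grind

theorem complErase_mem_patternsWithEvens (hx : x ∈ Finset.Icc 1 (2 * r + 1)) (hodd : x % 2 = 1)
    (hJ : J ∈ patternsWithEvens r K) (hxJ : x ∉ J) :
    complErase r x J ∈ patternsWithEvens r (evenIndices r \ K) := by
  obtain ⟨⟨hsub, hcard⟩, rfl⟩ := mem_patternsWithEvens.1 hJ
  refine mem_patternsWithEvens.2 ⟨⟨?_, ?_⟩, ?_⟩
  · exact (Finset.erase_subset _ _).trans Finset.sdiff_subset
  · rw [complErase, Finset.card_erase_of_mem (Finset.mem_sdiff.2 ⟨hx, hxJ⟩),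
      card_Icc_sdiff hsub hcard, Nat.add_sub_cancel]
  · ext y
    simp only [evenIndices, Finset.mem_filter, Finset.mem_sdiff, mem_complErase]
    grind

theorem even_card_filter_lt_add (hJ : J ⊆ Finset.Icc 1 (2 * r + 1))
    (hx : x ∈ Finset.Icc 1 (2 * r + 1)) (hodd : x % 2 = 1) :
    Even (((insert x J).filter (· < x)).card +
      ((Finset.Icc 1 (2 * r + 1) \ J).filter (· < x)).card) := by
  have hunion : (insert x J).filter (· < x) ∪ (Finset.Icc 1 (2 * r + 1) \ J).filter (· < x) =
      Finset.Ico 1 x := by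
    ext y
    have := @hJ y
    simp only [Finset.mem_union, Finset.mem_filter, Finset.mem_insert, Finset.mem_sdiff,
      Finset.mem_Ico, Finset.mem_Icc] at *
    grind
  rw [← Finset.card_union_of_disjoint, hunion, Nat.card_Ico]
  · rw [Finset.mem_Icc] at hx
    exact Nat.even_iff.2 (by omega)
  · rw [Finset.disjoint_left]
    grind

variable {R M : Type*} [CommRing R] [AddCommGroup M] [Module R M]

/-- The product of `f` on the vectors `c` indexed by `J` and `g` on those indexed by the complement
of `J` in `{1, …, 2r + 1}`, both in increasing order. -/
def splitProduct (f : M [⋀^Fin r]→ₗ[R] R) (g : M [⋀^Fin (r + 1)]→ₗ[R] R) (c : ℕ → M)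
    (J : Finset ℕ) : R :=
  f (fun i => c (sortedNth J i)) * g fun i => c (sortedNth (Finset.Icc 1 (2 * r + 1) \ J) i)

/-- The sum of the split products over all index sets with even part `K`. -/
def splitSum (f : M [⋀^Fin r]→ₗ[R] R) (g : M [⋀^Fin (r + 1)]→ₗ[R] R) (c : ℕ → M)
    (K : Finset ℕ) : R :=
  ∑ J ∈ patternsWithEvens r K, splitProduct f g c J

variable (d : M [⋀^Fin (r + 1)]→ₗ[R] R) (c : ℕ → M)

theorem isLinearMap_splitSum : IsLinearMap R fun f : M [⋀^Fin r]→ₗ[R] R => splitSum f d c K where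
  map_add f₁ f₂ := by simp [splitSum, splitProduct, add_mul, Finset.sum_add_distrib]
  map_smul ρ f := by simp [splitSum, splitProduct, Finset.mul_sum, mul_assoc]

theorem splitSum_smul_right (f : M [⋀^Fin r]→ₗ[R] R) (ρ : R) :
    splitSum f (ρ • d) c K = ρ * splitSum f d c K := by
  simp [splitSum, splitProduct, Finset.mul_sum, mul_left_comm]

theorem splitProduct_curryLeft_of_mem (hcard : J.card = r) (hxJ : x ∈ J) :
    splitProduct (d.curryLeft (c x)) d c J = 0 := by
  obtain ⟨i, hi⟩ := exists_sortedNth_eq hcard hxJ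
  have hzero := d.map_eq_zero_of_eq (Matrix.vecCons (c x) fun i : Fin r => c (sortedNth J i))
    (i := 0) (j := i.succ) (by simp [hi]) (Fin.succ_ne_zero i).symm
  rw [splitProduct, AlternatingMap.curryLeft_apply_apply, hzero, zero_mul]

-- Moving `c x` to the front of both second factors costs signs which agree, since together they
-- count the `x - 1` indices below the odd index `x`.
theorem splitProduct_curryLeft_complErase (hJ : J ⊆ Finset.Icc 1 (2 * r + 1)) (hcard : J.card = r)
    (hx : x ∈ Finset.Icc 1 (2 * r + 1)) (hodd : x % 2 = 1) (hxJ : x ∉ J) :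
    splitProduct (d.curryLeft (c x)) d c J =
      splitProduct (d.curryLeft (c x)) d c (complErase r x J) := by
  have hinsert : (insert x J).card = r + 1 := by rw [Finset.card_insert_of_notMem hxJ, hcard]
  have hsign := neg_one_pow_congr (R := R) (Nat.even_add.1 (even_card_filter_lt_add hJ hx hodd))
  rw [splitProduct, splitProduct, Icc_sdiff_complErase hJ hx,
    alternatingMap_sortedNth_eq_curryLeft d c (card_Icc_sdiff hJ hcard)
      (Finset.mem_sdiff.2 ⟨hx, hxJ⟩),
    alternatingMap_sortedNth_eq_curryLeft d c hinsert (Finset.mem_insert_self x J),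
    Finset.erase_insert hxJ, hsign, complErase]
  ring

theorem splitSum_curryLeft_odd (hx : x ∈ Finset.Icc 1 (2 * r + 1)) (hodd : x % 2 = 1)
    (hK : K ⊆ evenIndices r) :
    splitSum (d.curryLeft (c x)) d c K = splitSum (d.curryLeft (c x)) d c (evenIndices r \ K) := by
  have havoid (K : Finset ℕ) : splitSum (d.curryLeft (c x)) d c K =
      ∑ J ∈ (patternsWithEvens r K).filter (x ∉ ·), splitProduct (d.curryLeft (c x)) d c J := by
    refine (Finset.sum_filter_of_ne fun J hJ hne => ?_).symm
    exact mt (splitProduct_curryLeft_of_mem d c (mem_patternsWithEvens.1 hJ).1.2) hne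
  rw [havoid, havoid]
  refine Finset.sum_nbij' (complErase r x) (complErase r x) ?_ ?_ ?_ ?_ ?_ <;> intro J hJ <;>
    obtain ⟨hJ, hxJ⟩ := Finset.mem_filter.1 hJ <;>
    obtain ⟨⟨hsub, hcard⟩, -⟩ := mem_patternsWithEvens.1 hJ
  · exact Finset.mem_filter.2
      ⟨complErase_mem_patternsWithEvens hx hodd hJ hxJ, Finset.notMem_erase _ _⟩
  · have := complErase_mem_patternsWithEvens hx hodd hJ hxJ
    rw [Finset.sdiff_sdiff_eq_self hK] at this
    exact Finset.mem_filter.2 ⟨this, Finset.notMem_erase _ _⟩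
  · exact complErase_complErase hsub hxJ
  · exact complErase_complErase hsub hxJ
  · exact splitProduct_curryLeft_complErase d c hsub hcard hx hodd hxJ

end SplitSums

section DetIdentity

open Matrix Polynomial

variable {R : Type*} [CommRing R] {r : ℕ} (c : ℕ → Fin (r + 1) → R) (a : Fin (r + 1) → R)
  {K : Finset ℕ}

/-- The square matrix whose rows are the vectors of `c` with odd index. -/
def oddRows : Matrix (Fin (r + 1)) (Fin (r + 1)) R := .of fun i => c (2 * i + 1)

theorem det_oddRows_smul_eq_sum :
    (oddRows c).det • a = ∑ i, (a ᵥ* (oddRows c).adjugate) i • c (2 * i + 1) := by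
  calc (oddRows c).det • a = a ᵥ* ((oddRows c).adjugate * oddRows c) := by
        rw [adjugate_mul, vecMul_smul, vecMul_one]
    _ = (a ᵥ* (oddRows c).adjugate) ᵥ* oddRows c := (vecMul_vecMul _ _ _).symm
    _ = _ := vecMul_eq_sum _ _

theorem det_oddRows_mul_splitSum (hK : K ⊆ evenIndices r) :
    (oddRows c).det * splitSum (detRowAlternating.curryLeft a) detRowAlternating c K =
      (oddRows c).det *
        splitSum (detRowAlternating.curryLeft a) detRowAlternating c (evenIndices r \ K) := by
  have hscale (K : Finset ℕ) :
      (oddRows c).det * splitSum (detRowAlternating.curryLeft a) detRowAlternating c K =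
        ∑ i, (a ᵥ* (oddRows c).adjugate) i *
          splitSum (detRowAlternating.curryLeft (c (2 * i + 1))) detRowAlternating c K := by
    have hlinear := congrArg ((isLinearMap_splitSum detRowAlternating c (K := K)).mk' ∘ₗ
      detRowAlternating.curryLeft) (det_oddRows_smul_eq_sum c a)
    simpa only [map_smul, map_sum, smul_eq_mul, LinearMap.comp_apply, IsLinearMap.mk'_apply]
      using hlinear
  rw [hscale, hscale]
  refine Finset.sum_congr rfl fun i _ => ?_
  rw [splitSum_curryLeft_odd _ c (Finset.mem_Icc.2 ⟨by omega, by omega⟩) (by omega) hK]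

theorem map_splitSum_det {S : Type*} [CommRing S] (φ : R →+* S) :
    φ (splitSum (detRowAlternating.curryLeft a) detRowAlternating c K) =
      splitSum (detRowAlternating.curryLeft (φ ∘ a)) detRowAlternating (fun x => φ ∘ c x) K := by
  have hmap (v : Fin (r + 1) → Fin (r + 1) → R) :
      φ (detRowAlternating v) = detRowAlternating fun i => φ ∘ v i := φ.map_det v
  simp only [splitSum, splitProduct, map_sum, map_mul, AlternatingMap.curryLeft_apply_apply, hmap]
  refine Finset.sum_congr rfl fun J _ => congrArg (· * _) (congrArg _ (funext fun i => ?_))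
  cases i using Fin.cases <;> rfl

/-- The vectors `c` with the indeterminate added at the entries `(2j + 1, j)`, which makes the
odd-indexed vectors generic. -/
noncomputable def perturb (x : ℕ) (j : Fin (r + 1)) : R[X] :=
  C (c x j) + if x = 2 * j + 1 then X else 0

theorem det_oddRows_perturb : (oddRows (perturb c)).det = (-oddRows c).charpoly := by
  rw [charpoly]
  congr 1
  ext1 i j
  rcases eq_or_ne i j with rfl | hij
  · simp [oddRows, perturb, add_comm]
  · simp [oddRows, perturb, hij, Fin.val_ne_of_ne hij]

-- The identity holds up to the factor `det (oddRows c)`, which the perturbation turns into a monic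
-- polynomial; so it can be cancelled over `R[X]` before specialising to `X = 0`.
theorem splitSum_det_eq (hK : K ⊆ evenIndices r) :
    splitSum (detRowAlternating.curryLeft a) detRowAlternating c K =
      splitSum (detRowAlternating.curryLeft a) detRowAlternating c (evenIndices r \ K) := by
  have hcancel := det_oddRows_mul_splitSum (perturb c) (C ∘ a) hK
  rw [det_oddRows_perturb] at hcancel
  have heval := congrArg (evalRingHom 0) ((charpoly_monic _).isRegular.left hcancel)
  have ha : evalRingHom (0 : R) ∘ C ∘ a = a := by ext; simp
  have hc : (fun x => evalRingHom (0 : R) ∘ perturb c x) = c := by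
    ext x j
    by_cases hx : x = 2 * j + 1 <;> simp [perturb, hx]
  simpa only [map_splitSum_det, ha, hc] using heval

theorem splitSum_eq_splitSum_compl (f : (Fin (r + 1) → R) [⋀^Fin r]→ₗ[R] R)
    (g : (Fin (r + 1) → R) [⋀^Fin (r + 1)]→ₗ[R] R) (hK : K ⊆ evenIndices r) :
    splitSum f g c K = splitSum f g c (evenIndices r \ K) := by
  obtain ⟨a, rfl⟩ := exists_eq_detRowAlternating_curryLeft f
  rw [g.eq_smul_basis_det (Pi.basisFun R _), Pi.basisFun_det, splitSum_smul_right,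
    splitSum_smul_right, splitSum_det_eq c a hK]

end DetIdentity
section SourcesAndSinks

variable {m n r i j : ℕ} {ω : ℕ × ℕ → ℕ × ℕ → ℝ}

theorem level_gridSource (hi : i ∈ Finset.Icc 1 (2 * r + 1)) :
    level (gridSource (r + 1) i) = r + 1 ∨ level (gridSource (r + 1) i) = r + 1 + 1 := by
  rw [Finset.mem_Icc] at hi
  unfold level gridSource
  split_ifs <;> simp only <;> omega

theorem strictMonoOn_content_gridSource :
    StrictMonoOn (fun i => content (gridSource (r + 1) i)) (Finset.Icc 1 (2 * r + 1)) := by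
  intro i hi j hj hij
  simp only [Finset.coe_Icc, Set.mem_Icc] at hi hj
  simp only [content, gridSource]
  split_ifs <;> simp only <;> omega

theorem level_gridSink (hm : r + 1 ≤ m) (hn : r + 1 ≤ n) (hj : j ∈ Finset.Icc 1 (2 * r + 1)) :
    level (gridSink m n (r + 1) j) = m + n - (r + 1) ∨
      level (gridSink m n (r + 1) j) = m + n - (r + 1) + 1 := by
  rw [Finset.mem_Icc] at hj
  unfold level gridSink
  split_ifs <;> simp only <;> omega

theorem strictMonoOn_content_gridSink (hm : r + 1 ≤ m) (hn : r + 1 ≤ n) :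
    StrictMonoOn (fun j => content (gridSink m n (r + 1) j)) (Finset.Icc 1 (2 * r + 1)) := by
  intro i hi j hj hij
  simp only [Finset.coe_Icc, Set.mem_Icc] at hi hj
  simp only [content, gridSink]
  split_ifs <;> simp only <;> omega

theorem strictMono_comp_sortedNth {S : Finset ℕ} {ρ : ℕ} {f : ℕ → ℤ}
    (hf : StrictMonoOn f (Finset.Icc 1 (2 * r + 1))) (hS : S ⊆ Finset.Icc 1 (2 * r + 1))
    (hcard : S.card = ρ) :
    StrictMono fun l : Fin ρ => f (sortedNth S l) :=
  fun _ _ h => hf (hS (sortedNth_mem hcard _)) (hS (sortedNth_mem hcard _))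
    (strictMono_sortedNth hcard h)

variable (m n r ω) in
/-- The path sums to `t` from the odd-indexed sources, which form the antidiagonal of level
`r + 2`. -/
noncomputable def oddSourceSums (t : ℕ × ℕ) (a : Fin (r + 1)) : ℝ :=
  pathSum m n ω (gridSource (r + 1) (2 * a + 1)) t

-- An even-indexed source steps onto the two neighbouring odd-indexed sources.
theorem exists_linearMap_pathSum (hm : r ≤ m) (hn : r ≤ n) (hi : i ∈ Finset.Icc 1 (2 * r + 1)) :
    ∃ φ : (Fin (r + 1) → ℝ) →ₗ[ℝ] ℝ, ∀ t, r + 1 < level t →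
      pathSum m n ω (gridSource (r + 1) i) t = φ (oddSourceSums m n r ω t) := by
  rw [Finset.mem_Icc] at hi
  rcases Nat.even_or_odd' i with ⟨a, rfl | rfl⟩
  · obtain ⟨a, rfl⟩ : ∃ b, a = b + 1 := ⟨a - 1, by omega⟩
    have hsource : gridSource (r + 1) (2 * (a + 1)) = (r - a, a + 1) := by
      simp [gridSource]
    have hdown : gridSource (r + 1) (2 * a + 1) = (r - a + 1, a + 1) := by
      rw [gridSource, if_pos (by omega)]
      ext <;> simp only <;> omega
    have hright : gridSource (r + 1) (2 * (a + 1) + 1) = (r - a, a + 1 + 1) := by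
      rw [gridSource, if_pos (by omega)]
      ext <;> simp only <;> omega
    refine ⟨ω (r - a, a + 1) (r - a + 1, a + 1) • .proj ⟨a, by omega⟩ +
      ω (r - a, a + 1) (r - a, a + 1 + 1) • .proj ⟨a + 1, by omega⟩, fun t ht => ?_⟩
    rw [hsource, pathSum_eq_add_of_source (by simp only [InGrid]; omega)
      (by rintro rfl; simp only [level] at ht; omega)]
    simp [oddSourceSums, hdown, hright]
  · exact ⟨.proj ⟨a, by omega⟩, fun t _ => rfl⟩

theorem exists_alternatingMap_det_pathMatrix {ι : Type*} [Fintype ι] [DecidableEq ι]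
    (hm : r ≤ m) (hn : r ≤ n) {σ : ι → ℕ} (hσ : ∀ l, σ l ∈ Finset.Icc 1 (2 * r + 1)) :
    ∃ f : (Fin (r + 1) → ℝ) [⋀^ι]→ₗ[ℝ] ℝ, ∀ t : ι → ℕ × ℕ, (∀ l, r + 1 < level (t l)) →
      (pathMatrix m n ω (fun l => gridSource (r + 1) (σ l)) t).det =
        f fun l => oddSourceSums m n r ω (t l) := by
  choose φ hφ using fun l => exists_linearMap_pathSum (ω := ω) hm hn (hσ l)
  refine ⟨Matrix.detRowAlternating.compLinearMap (.pi φ), fun t ht => ?_⟩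
  rw [← Matrix.det_transpose]
  refine congrArg Matrix.det (Matrix.ext fun j l => ?_)
  exact hφ l (t j) (ht j)

theorem exists_alternatingMap_ncWeight {S : Finset ℕ} {ρ : ℕ} (hm : r + 1 ≤ m) (hn : r + 1 ≤ n)
    (hmn : 2 * (r + 1) < m + n) (hS : S ⊆ Finset.Icc 1 (2 * r + 1)) (hcard : S.card = ρ) :
    ∃ f : (Fin (r + 1) → ℝ) [⋀^Fin ρ]→ₗ[ℝ] ℝ,
      ∀ T ⊆ Finset.Icc 1 (2 * r + 1), T.card = ρ →
        ncWeight m n ω (fun l : Fin ρ => gridSource (r + 1) (sortedNth S l))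
            (fun l => gridSink m n (r + 1) (sortedNth T l)) =
          f fun l => oddSourceSums m n r ω (gridSink m n (r + 1) (sortedNth T l)) := by
  have hmem (l : Fin ρ) := hS (sortedNth_mem hcard l)
  obtain ⟨f, hf⟩ := exists_alternatingMap_det_pathMatrix (m := m) (n := n) (ω := ω)
    (by omega) (by omega) hmem
  refine ⟨f, fun T hT hTcard => ?_⟩
  have hlevel (l : Fin ρ) := level_gridSink hm hn (hT (sortedNth_mem hTcard l))
  rw [← hf _ fun l => by have := hlevel l; omega]
  refine ncWeight_eq_det (a := r + 1) (b := m + n - (r + 1)) (by omega)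
    (strictMono_comp_sortedNth strictMonoOn_content_gridSource hS hcard)
    (strictMono_comp_sortedNth (strictMonoOn_content_gridSink hm hn) hT hTcard)
    (fun l => level_gridSource (hmem l)) hlevel

end SourcesAndSinks

section PatternWeights

/-- Tuples of disjoint paths between two lists of vertices as families of disjoint paths indexed
by `Fin r`. -/
def ncTupleEquiv (m n : ℕ) {r : ℕ} {src tgt : List (ℕ × ℕ)} (hsrc : src.length = r)
    (htgt : tgt.length = r) : NCTuple m n src tgt ≃ disjointFamilies fun i : Fin r =>
      gridPaths m n (src.getD i (0, 0)) (tgt.getD i (0, 0)) where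
  toFun T := ⟨fun i => T.path.getD i [], by
    have hlength : T.path.length = r := T.hlen.trans hsrc
    exact ⟨fun i => T.valid i (by omega), fun i j hij => List.disjoint_left.2
      (T.disj i j (by omega) (by omega) (Fin.val_ne_of_ne hij))⟩⟩
  invFun p :=
    { path := List.ofFn p.1
      hlen := by rw [List.length_ofFn, hsrc]
      hlen' := by rw [List.length_ofFn, htgt]
      valid := fun l hl => by
        rw [List.getD_eq_getElem _ _ hl, List.getElem_ofFn]
        exact p.2.1 ⟨l, by simpa using hl⟩
      disj := fun l l' hl hl' hne => by
        rw [List.getD_eq_getElem _ _ hl, List.getElem_ofFn, List.getD_eq_getElem _ _ hl',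
          List.getElem_ofFn]
        exact List.disjoint_left.1 (p.2.2 (by simpa using hne)) }
  left_inv := by
    rintro ⟨path, hlen, -, -, -⟩
    simp only [NCTuple.mk.injEq]
    refine List.ext_getElem (by simp [hlen, hsrc]) fun i _ hi => ?_
    rw [List.getElem_ofFn, List.getD_eq_getElem _ _ hi]
  right_inv p := by
    refine Subtype.ext (funext fun i => ?_)
    change (List.ofFn p.1).getD i [] = p.1 i
    rw [List.getD_eq_getElem _ _ (by simp), List.getElem_ofFn]

variable {m n r : ℕ} {ω : ℕ × ℕ → ℕ × ℕ → ℝ}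

theorem finite_ncTuple {src tgt : List (ℕ × ℕ)} (hsrc : src.length = r) (htgt : tgt.length = r) :
    Finite (NCTuple m n src tgt) := by
  have := (disjointFamilies_finite fun i : Fin r =>
    gridPaths_finite m n (src.getD i (0, 0)) (tgt.getD i (0, 0))).to_subtype
  exact Finite.of_equiv _ (ncTupleEquiv m n hsrc htgt).symm

theorem finsum_tupleEdgeWeight {src tgt : List (ℕ × ℕ)} (hsrc : src.length = r)
    (htgt : tgt.length = r) : ∑ᶠ T : NCTuple m n src tgt, tupleEdgeWeight ω T.path =
      ncWeight m n ω (fun i : Fin r => src.getD i (0, 0)) (fun i => tgt.getD i (0, 0)) := by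
  rw [ncWeight, familyWeight, ← finsum_set_coe_eq_finsum_mem,
    ← finsum_comp_equiv (ncTupleEquiv m n hsrc htgt)]
  refine finsum_congr fun T => ?_
  have hlength : T.path.length = r := T.hlen.trans hsrc
  change _ = ∏ i : Fin r, pathEdgeWeight ω (T.path.getD i [])
  rw [tupleEdgeWeight, ← List.prod_ofFn]
  refine congrArg List.prod (List.ext_getElem (by simp [hlength]) fun i hi _ => ?_)
  rw [List.getElem_map, List.getElem_ofFn, List.getD_eq_getElem]

theorem getD_map_sort {S : Finset ℕ} (hS : S.card = r) (g : ℕ → ℕ × ℕ) (i : Fin r) :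
    ((S.sort (· ≤ ·)).map g).getD i (0, 0) = g (sortedNth S i) := by
  have hi : (i : ℕ) < (S.sort (· ≤ ·)).length := by rw [Finset.length_sort, hS]; exact i.2
  rw [sortedNth, List.getD_eq_getElem _ _ (by simpa using hi), List.getD_eq_getElem _ _ hi,
    List.getElem_map]

theorem finsum_prod_mul {α β R : Type*} [Finite α] [Finite β] [NonUnitalNonAssocSemiring R]
    (f : α → R) (g : β → R) : ∑ᶠ x : α × β, f x.1 * g x.2 = (∑ᶠ a, f a) * ∑ᶠ b, g b := by
  have := Fintype.ofFinite α
  have := Fintype.ofFinite β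
  simp only [finsum_eq_sum_of_fintype, Fintype.sum_prod_type, Finset.sum_mul_sum]

theorem patWeight_eq_ncWeight_mul {I J : Finset ℕ} (hI : I ⊆ Finset.Icc 1 (2 * r + 1))
    (hIcard : I.card = r) (hJ : J ⊆ Finset.Icc 1 (2 * r + 1)) (hJcard : J.card = r) :
    patWeight m n (r + 1) ω I J =
      ncWeight m n ω (fun l : Fin r => gridSource (r + 1) (sortedNth I l))
          (fun l => gridSink m n (r + 1) (sortedNth J l)) *
        ncWeight m n ω
          (fun l : Fin (r + 1) => gridSource (r + 1) (sortedNth (Finset.Icc 1 (2 * r + 1) \ I) l))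
          (fun l => gridSink m n (r + 1) (sortedNth (Finset.Icc 1 (2 * r + 1) \ J) l)) := by
  have hlength {S : Finset ℕ} {ρ : ℕ} (hS : S.card = ρ) (g : ℕ → ℕ × ℕ) :
      ((S.sort (· ≤ ·)).map g).length = ρ := by
    rw [List.length_map, Finset.length_sort, hS]
  have hI' := card_Icc_sdiff hI hIcard
  have hJ' := card_Icc_sdiff hJ hJcard
  have := finite_ncTuple (m := m) (n := n) (hlength hIcard (gridSource (r + 1)))
    (hlength hJcard (gridSink m n (r + 1)))
  have := finite_ncTuple (m := m) (n := n) (hlength hI' (gridSource (r + 1)))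
    (hlength hJ' (gridSink m n (r + 1)))
  simp only [← getD_map_sort hIcard, ← getD_map_sort hJcard, ← getD_map_sort hI',
    ← getD_map_sort hJ']
  rw [← finsum_tupleEdgeWeight (hlength hIcard _) (hlength hJcard _),
    ← finsum_tupleEdgeWeight (hlength hI' _) (hlength hJ' _)]
  rw [← finsum_prod_mul]
  rfl

theorem exists_patWeight_eq_splitProduct {I : Finset ℕ} (hm : r + 1 ≤ m) (hn : r + 1 ≤ n)
    (hmn : 2 * (r + 1) < m + n) (hI : I ⊆ Finset.Icc 1 (2 * r + 1)) (hIcard : I.card = r) :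
    ∃ (f : (Fin (r + 1) → ℝ) [⋀^Fin r]→ₗ[ℝ] ℝ) (g : (Fin (r + 1) → ℝ) [⋀^Fin (r + 1)]→ₗ[ℝ] ℝ),
      ∀ J ⊆ Finset.Icc 1 (2 * r + 1), J.card = r → patWeight m n (r + 1) ω I J =
        splitProduct f g (fun j => oddSourceSums m n r ω (gridSink m n (r + 1) j)) J := by
  obtain ⟨f, hf⟩ := exists_alternatingMap_ncWeight (ω := ω) hm hn hmn hI hIcard
  obtain ⟨g, hg⟩ := exists_alternatingMap_ncWeight (ω := ω) hm hn hmn Finset.sdiff_subset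
    (card_Icc_sdiff hI hIcard)
  refine ⟨f, g, fun J hJ hJcard => ?_⟩
  rw [patWeight_eq_ncWeight_mul hI hIcard hJ hJcard, hf J hJ hJcard,
    hg _ Finset.sdiff_subset (card_Icc_sdiff hJ hJcard), splitProduct]

end PatternWeights

end GridPaths

theorem stmt_3_general (m n k : ℕ) (hk : 1 ≤ k) (hkm : k ≤ m) (hkn : k ≤ n)
    (hkmn : 2 * k < m + n) (ω : ℕ × ℕ → ℕ × ℕ → ℝ)
    (I K : Finset ℕ) (hI : I ⊆ Finset.Icc 1 (2 * k - 1)) (hIcard : I.card = k - 1)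
    (hK : K ⊆ (Finset.Icc 1 (2 * k - 1)).filter (fun x => x % 2 = 0)) :
    ∑ J ∈ ((Finset.Icc 1 (2 * k - 1)).powersetCard (k - 1)).filter
        (fun J => J.filter (fun x => x % 2 = 0) = K),
      patWeight m n k ω I J =
    ∑ J ∈ ((Finset.Icc 1 (2 * k - 1)).powersetCard (k - 1)).filter
        (fun J => J.filter (fun x => x % 2 = 0) =
          (Finset.Icc 1 (2 * k - 1)).filter (fun x => x % 2 = 0) \ K),
      patWeight m n k ω I J := by
  obtain ⟨r, rfl⟩ : ∃ r, k = r + 1 := ⟨k - 1, by omega⟩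
  obtain ⟨f, g, hfg⟩ := GridPaths.exists_patWeight_eq_splitProduct (ω := ω) hkm hkn hkmn hI hIcard
  have hsum (K : Finset ℕ) : ∑ J ∈ GridPaths.patternsWithEvens r K, patWeight m n (r + 1) ω I J =
      GridPaths.splitSum f g
        (fun j => GridPaths.oddSourceSums m n r ω (gridSink m n (r + 1) j)) K :=
    Finset.sum_congr rfl fun J hJ =>
      have hJ := (GridPaths.mem_patternsWithEvens.1 hJ).1
      hfg J hJ.1 hJ.2
  exact (hsum K).trans ((GridPaths.splitSum_eq_splitSum_compl _ f g hK).trans (hsum _).symm)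

/-- fixing the source pattern `I` and the set `K` of even sinks, the total
weight over sink patterns with even part `K` equals the total weight over sink patterns
with even part `K′ = {2,4,…,2k-2} ∖ K`. -/
theorem stmt_3 (m n k : ℕ) (hm : 3 ≤ m) (hn : 3 ≤ n) (hk : 2 ≤ k) (hkm : k < m) (hkn : k < n)
    (ω : ℕ × ℕ → ℕ × ℕ → ℝ) (hω : ∀ u v, 0 < ω u v)
    (I K : Finset ℕ) (hI : I ⊆ Finset.Icc 1 (2 * k - 1)) (hIcard : I.card = k - 1)
    (hK : K ⊆ (Finset.Icc 1 (2 * k - 1)).filter (fun x => x % 2 = 0)) :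
    ∑ J ∈ ((Finset.Icc 1 (2 * k - 1)).powersetCard (k - 1)).filter
        (fun J => J.filter (fun x => x % 2 = 0) = K),
      patWeight m n k ω I J =
    ∑ J ∈ ((Finset.Icc 1 (2 * k - 1)).powersetCard (k - 1)).filter
        (fun J => J.filter (fun x => x % 2 = 0) =
          (Finset.Icc 1 (2 * k - 1)).filter (fun x => x % 2 = 0) \ K),
      patWeight m n k ω I J :=
  stmt_3_general m n k (by omega) hkm.le hkn.le (by omega) ω I K hI hIcard hK
end

section
/- Let k ≥ 2 and let M be an interlacing matrix of order 2k−1. Fix I, J ⊆ {1,…,2k−1} with |I| = |J| = k−1 and 1 ∉ J, 2k−1 ∉ J. Set J′ := {2,…,2k−1} ∖ J and J″ := {1,…,2k−2} ∖ J, and for K ⊆ {1,…,2k−1} write K̄ := {1,…,2k−1} ∖ K. Then det M[Ī|J̄] · det M[I|J] = det M[Ī|J̄′] · det M[I|J′] + det M[Ī|J̄″] · det M[I|J″]. -/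
/-- The minor of the (1-indexed) matrix `M` with rows `U` and columns `W`, both taken in
increasing order.  When `U` and `W` have different cardinalities we set it to `0`
(this case is never used); for `U = W = ∅` it is `1` (the empty determinant). -/
noncomputable def minorN (M : ℕ → ℕ → ℝ) (U W : Finset ℕ) : ℝ :=
  if h : U.card = W.card then
    Matrix.det (Matrix.of fun i j : Fin U.card =>
      M (U.orderIsoOfFin rfl i).val (W.orderIsoOfFin h.symm j).val)
  else 0

/-- `M` (1-indexed, of order `2k-1`) is an interlacing matrix: totally nonnegative, of rank
at most `k`, and the submatrix with all rows and columns `2,…,2k-2` has rank at most `k-1`. -/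
def IsInterlacingMatrix (k : ℕ) (M : ℕ → ℕ → ℝ) : Prop :=
  (∀ U W : Finset ℕ, U ⊆ Finset.Icc 1 (2 * k - 1) → W ⊆ Finset.Icc 1 (2 * k - 1) →
    0 ≤ minorN M U W) ∧
  (Matrix.of fun i j : Fin (2 * k - 1) => M (i.val + 1) (j.val + 1)).rank ≤ k ∧
  (Matrix.of fun (i : Fin (2 * k - 1)) (j : Fin (2 * k - 3)) =>
    M (i.val + 1) (j.val + 2)).rank ≤ k - 1

/-!
A minor with fixed rows is an alternating form in the columns of `M`. Let `W` be the span of the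
columns strictly between the first column `x` and the last column `y`. Since `dim W ≤ k - 1`, any
two alternating forms of degree `k - 1` are proportional on `W`, so the difference of the two sides,
an alternating bilinear form `D (x, y)`, vanishes as soon as `x` or `y` lies in `W`. If the
columns `J` are linearly dependent, every term vanishes; otherwise they span `W`, which then has
codimension at most one in the column space of `M`, and on such a space `D` must be zero.
-/

open Matrix Module Submodule

section AlternatingForms

variable {R K M N V ι : Type*} [CommRing R] [AddCommGroup M] [Module R M] [AddCommGroup N]
  [Module R N] [Field K] [AddCommGroup V] [Module K V] [Module K N] [Fintype ι]

theorem alternatingMap_snoc {m : ℕ} (f : M [⋀^Fin (m + 1)]→ₗ[R] R) (b : Fin m → M) (y : M) :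
    f (Fin.snoc b y) = (-1) ^ m * f (vecCons y b) := by
  rw [← Fin.insertNth_last', f.map_insertNth, Fin.val_last, zsmul_eq_mul]
  push_cast
  rfl

theorem alternatingMap_vecCons_swap {m : ℕ} (f : M [⋀^Fin (m + 2)]→ₗ[R] N) (x y : M)
    (b : Fin m → M) : f (vecCons x (vecCons y b)) = -f (vecCons y (vecCons x b)) := by
  have hinsert : vecCons x (vecCons y b) = (1 : Fin (m + 2)).insertNth y (vecCons x b) := by
    rw [← Fin.succ_zero_eq_one, vecCons, vecCons, vecCons, Fin.insertNth_succ_cons,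
      Fin.insertNth_zero']
  rw [hinsert, f.map_insertNth, Fin.val_one, pow_one, neg_one_smul]

theorem card_le_finrank_of_linearIndependent_of_mem {W : Submodule K V} [FiniteDimensional K W]
    {v : ι → V} (hli : LinearIndependent K v) (hv : ∀ i, v i ∈ W) :
    Fintype.card ι ≤ finrank K W :=
  (finrank_span_eq_card hli).symm.trans_le
    (finrank_mono (span_le.2 (Set.range_subset_iff.2 hv)))

theorem alternatingMap_eq_zero_of_finrank_lt (f : V [⋀^ι]→ₗ[K] N) {W : Submodule K V}
    [FiniteDimensional K W] (hW : finrank K W < Fintype.card ι) {v : ι → V}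
    (hv : ∀ i, v i ∈ W) : f v = 0 :=
  f.map_linearDependent v fun hli =>
    hW.not_ge (card_le_finrank_of_linearIndependent_of_mem hli hv)

theorem alternatingMap_mul_comm_of_finrank_le (f g : V [⋀^ι]→ₗ[K] K) {W : Submodule K V}
    [FiniteDimensional K W] (hW : finrank K W ≤ Fintype.card ι) {v w : ι → V}
    (hv : ∀ i, v i ∈ W) (hw : ∀ i, w i ∈ W) : f v * g w = f w * g v := by
  classical
  rcases hW.lt_or_eq with hlt | heq
  · simp only [alternatingMap_eq_zero_of_finrank_lt _ hlt hv,
      alternatingMap_eq_zero_of_finrank_lt _ hlt hw, zero_mul]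
  · let e : Basis ι K W := (finBasisOfFinrankEq K W heq).reindex (Fintype.equivFin ι).symm
    have eval_eq (h : V [⋀^ι]→ₗ[K] K) (u : ι → V) (hu : ∀ i, u i ∈ W) :
        h u = h (fun i => e i) * e.det fun i => ⟨u i, hu i⟩ :=
      congrArg (· fun i => ⟨u i, hu i⟩) ((h.compLinearMap W.subtype).eq_smul_basis_det e)
    rw [eval_eq f v hv, eval_eq f w hw, eval_eq g v hv, eval_eq g w hw]
    ring

theorem exists_eq_smul_add_of_finrank_le {W T : Submodule K V} [FiniteDimensional K T]
    (hWT : W ≤ T) (hfinrank : finrank K T ≤ finrank K W + 1) {x y : V} (hx : x ∈ T) (hxW : x ∉ W)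
    (hy : y ∈ T) : ∃ t : K, ∃ w ∈ W, y = t • x + w := by
  have := finiteDimensional_of_le hWT
  have hsup : W ⊔ span K {x} ≤ T := sup_le hWT ((span_singleton_le_iff_mem _ _).2 hx)
  have hlt : finrank K W < finrank K ↥(W ⊔ span K {x}) :=
    finrank_lt_finrank_of_lt (by simpa using hxW)
  rw [← eq_of_le_of_finrank_le hsup (by lia), sup_comm] at hy
  obtain ⟨_, hx', w, hw, rfl⟩ := mem_sup.1 hy
  obtain ⟨t, rfl⟩ := mem_span_singleton.1 hx'
  exact ⟨t, w, hw, rfl⟩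

end AlternatingForms

section ThreeTerm

variable {K V : Type*} [Field K] [AddCommGroup V] [Module K V] {m : ℕ}
  (f : V [⋀^Fin (m + 2)]→ₗ[K] K) (g : V [⋀^Fin (m + 1)]→ₗ[K] K)
  {a : Fin (m + 1) → V} {b : Fin m → V} {W : Submodule K V}

theorem alternatingMap_exchange_of_mem [FiniteDimensional K W] (hW : finrank K W ≤ m + 1)
    (ha : ∀ i, a i ∈ W) (hb : ∀ i, b i ∈ W) (x : V) {w : V} (hw : w ∈ W) :
    f (vecCons x (vecCons w b)) * g a = f (vecCons x a) * g (vecCons w b) :=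
  alternatingMap_mul_comm_of_finrank_le (f.curryLeft x) g (by simpa using hW)
    (Fin.cases hw hb) ha

theorem alternatingMap_three_term {T : Submodule K V} [FiniteDimensional K T] (hWT : W ≤ T)
    (hW : finrank K W ≤ m + 1) (hT : finrank K T ≤ m + 2)
    (ha : ∀ i, a i ∈ W) (hb : ∀ i, b i ∈ W) {x y : V} (hx : x ∈ T) (hy : y ∈ T) :
    f (vecCons x (vecCons y b)) * g a =
      f (vecCons x a) * g (vecCons y b) - f (vecCons y a) * g (vecCons x b) := by
  have := finiteDimensional_of_le hWT
  have map_cons_eq_zero {w : V} (hw : w ∈ W) : f (vecCons w a) = 0 :=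
    alternatingMap_eq_zero_of_finrank_lt f (by simpa using hW.trans_lt (by simp))
      (Fin.cases hw ha)
  by_cases hli : LinearIndependent K a
  swap
  · have map_cons_dependent (u : V) : f (vecCons u a) = 0 :=
      (f.curryLeft u).map_linearDependent a hli
    simp only [g.map_linearDependent a hli, map_cons_dependent, mul_zero, zero_mul, sub_zero]
  by_cases hxW : x ∈ W
  · rw [alternatingMap_vecCons_swap, map_cons_eq_zero hxW]
    linear_combination -alternatingMap_exchange_of_mem f g hW ha hb y hxW
  have hWdim : m + 1 ≤ finrank K W := by
    simpa using card_le_finrank_of_linearIndependent_of_mem hli ha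
  obtain ⟨t, w, hw, rfl⟩ := exists_eq_smul_add_of_finrank_le hWT (by lia) hx hxW hy
  have map_self : f (vecCons x (vecCons x b)) = 0 := DFunLike.congr_fun (f.curryLeft_same x) b
  have map_expand : f (vecCons x (vecCons (t • x + w) b)) = f (vecCons x (vecCons w b)) := by
    simp only [← f.curryLeft_apply_apply x, AlternatingMap.map_vecCons_add,
      AlternatingMap.map_vecCons_smul]
    rw [f.curryLeft_apply_apply, map_self, smul_zero, zero_add]
  rw [map_expand]
  simp only [AlternatingMap.map_vecCons_add, AlternatingMap.map_vecCons_smul, map_cons_eq_zero hw,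
    smul_eq_mul]
  linear_combination alternatingMap_exchange_of_mem f g hW ha hb x hw

end ThreeTerm

section Minors

variable {R ι κ : Type*} [CommRing R] [LinearOrder ι] [LinearOrder κ]

/-- The minor of `M` with rows `U` and columns `W`, both in increasing order. It extends `minorN` to
arbitrary linearly ordered index types and commutative rings, with the same value `0` when `U` and
`W` have different cardinalities. -/
def minor (M : Matrix ι κ R) (U : Finset ι) (W : Finset κ) : R :=
  if h : U.card = W.card then
    (M.submatrix (U.orderEmbOfFin rfl) (W.orderEmbOfFin h.symm)).det
  else 0

/-- The determinant of the rows `U` of a `p`-tuple of column vectors, as an alternating form. -/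
def minorForm (R : Type*) [CommRing R] {p : ℕ} {U : Finset ι} (hU : U.card = p) :
    (ι → R) [⋀^Fin p]→ₗ[R] R :=
  detRowAlternating.compLinearMap (LinearMap.funLeft R R (U.orderEmbOfFin hU))

theorem minorN_eq_minor (M : ℕ → ℕ → ℝ) (U W : Finset ℕ) : minorN M U W = minor M U W := rfl

theorem minor_eq_minorForm (M : Matrix ι κ R) {p : ℕ} {U : Finset ι} {W : Finset κ}
    (hU : U.card = p) (hW : W.card = p) :
    minor M U W = minorForm R hU (M.col ∘ W.orderEmbOfFin hW) := by
  subst hU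
  rw [minor, dif_pos hW.symm, ← det_transpose]
  rfl

theorem minor_map_left {ι' : Type*} [LinearOrder ι'] (M : Matrix ι κ R) (e : ι' ↪o ι)
    (U : Finset ι') (W : Finset κ) :
    minor M (U.map e.toEmbedding) W = minor (M.submatrix e id) U W := by
  by_cases hcard : U.card = W.card
  · have hmap : (U.map e.toEmbedding).card = W.card := by rw [Finset.card_map, hcard]
    have horder : e ∘ U.orderEmbOfFin hcard = (U.map e.toEmbedding).orderEmbOfFin hmap :=
      Finset.orderEmbOfFin_unique hmap (fun i => by simp)
        (e.strictMono.comp (U.orderEmbOfFin hcard).strictMono)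
    rw [minor_eq_minorForm M hmap rfl, minor_eq_minorForm _ hcard rfl, minorForm, ← horder]
    rfl
  · rw [minor, minor, dif_neg hcard, dif_neg (by rwa [Finset.card_map])]

theorem orderEmbOfFin_insert_of_forall_lt {p : ℕ} {W : Finset κ} (hW : W.card = p) {x : κ}
    (hx : ∀ j ∈ W, x < j) (hcard : (insert x W).card = p + 1) :
    ⇑((insert x W).orderEmbOfFin hcard) = vecCons x (W.orderEmbOfFin hW) := by
  have hmono : StrictMono (vecCons x (W.orderEmbOfFin hW)) := Fin.strictMono_cons.2
    ⟨fun i => hx _ (W.orderEmbOfFin_mem hW i), (W.orderEmbOfFin hW).strictMono⟩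
  exact (Finset.orderEmbOfFin_unique hcard (Fin.cases (by simp) (by simp)) hmono).symm

theorem orderEmbOfFin_insert_of_forall_gt {p : ℕ} {W : Finset κ} (hW : W.card = p) {y : κ}
    (hy : ∀ j ∈ W, j < y) (hcard : (insert y W).card = p + 1) :
    ⇑((insert y W).orderEmbOfFin hcard) = Fin.snoc (W.orderEmbOfFin hW) y := by
  have hmono : StrictMono (Fin.snoc (W.orderEmbOfFin hW) y : Fin (p + 1) → κ) := by
    rw [← Fin.insertNth_last', Fin.strictMono_insertNth_iff]
    exact ⟨(W.orderEmbOfFin hW).strictMono, fun i _ => hy _ (W.orderEmbOfFin_mem hW i),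
      fun i hi => absurd hi (Fin.castSucc_lt_last i).not_ge⟩
  exact (Finset.orderEmbOfFin_unique hcard (Fin.lastCases (by simp) (by simp)) hmono).symm

variable (M : Matrix ι κ R) {p : ℕ} {U : Finset ι} {W : Finset κ} {x y : κ}

theorem minor_insert_of_forall_lt (hU : U.card = p + 1) (hW : W.card = p) (hx : ∀ j ∈ W, x < j) :
    minor M U (insert x W) =
      minorForm R hU (vecCons (M.col x) (M.col ∘ W.orderEmbOfFin hW)) := by
  have hcard : (insert x W).card = p + 1 := by
    rw [Finset.card_insert_of_notMem fun hxW => (hx x hxW).false, hW]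
  rw [minor_eq_minorForm M hU hcard, orderEmbOfFin_insert_of_forall_lt hW hx, vecCons, vecCons,
    Fin.comp_cons]

theorem minor_insert_of_forall_gt (hU : U.card = p + 1) (hW : W.card = p) (hy : ∀ j ∈ W, j < y) :
    minor M U (insert y W) =
      (-1) ^ p * minorForm R hU (vecCons (M.col y) (M.col ∘ W.orderEmbOfFin hW)) := by
  have hcard : (insert y W).card = p + 1 := by
    rw [Finset.card_insert_of_notMem fun hyW => (hy y hyW).false, hW]
  rw [minor_eq_minorForm M hU hcard, orderEmbOfFin_insert_of_forall_gt hW hy, Fin.comp_snoc,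
    alternatingMap_snoc]

theorem minor_insert_insert (hU : U.card = p + 2) (hW : W.card = p) (hx : ∀ j ∈ W, x < j)
    (hy : ∀ j ∈ W, j < y) (hxy : x < y) :
    minor M U (insert x (insert y W)) = (-1) ^ p *
      minorForm R hU (vecCons (M.col x) (vecCons (M.col y) (M.col ∘ W.orderEmbOfFin hW))) := by
  have hcard : (insert y W).card = p + 1 := by
    rw [Finset.card_insert_of_notMem fun hyW => (hy y hyW).false, hW]
  have hx' : ∀ j ∈ insert y W, x < j := Finset.forall_mem_insert _ _ _ |>.2 ⟨hxy, hx⟩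
  rw [minor_insert_of_forall_lt M hU hcard hx', orderEmbOfFin_insert_of_forall_gt hW hy,
    Fin.comp_snoc]
  exact alternatingMap_snoc ((minorForm R hU).curryLeft (M.col x)) _ _

end Minors

section Rank

variable {K ι κ : Type*} [Field K]

theorem finrank_span_col_image_le_rank_submatrix {κ' : Type*} [Fintype κ'] (M : Matrix ι κ K)
    (c : κ' → κ) {s : Set κ} (hs : s ⊆ Set.range c) :
    finrank K (span K (M.col '' s)) ≤ (M.submatrix id c).rank := by
  have hspan : span K (M.col '' s) ≤ span K (Set.range (M.submatrix id c).col) := by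
    refine span_mono ((Set.image_mono hs).trans ?_)
    rw [← Set.range_comp]
    exact subset_rfl
  have := FiniteDimensional.span_of_finite K (Set.finite_range (M.submatrix id c).col)
  rw [rank_eq_finrank_span_cols]
  exact finrank_mono hspan

variable [LinearOrder ι] [LinearOrder κ]

theorem minor_three_term_of_finrank_le (M : Matrix ι κ K) {m : ℕ} {U V : Finset ι}
    {J L : Finset κ} {x y : κ} (hU : U.card = m + 2) (hV : V.card = m + 1)
    (hJ : J.card = m + 1) (hL : L.card = m) (hx : ∀ j ∈ J ∪ L, x < j) (hy : ∀ j ∈ J ∪ L, j < y)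
    (hinner : finrank K (span K (M.col '' ↑(J ∪ L))) ≤ m + 1)
    (hall : finrank K (span K (M.col '' ↑(insert x (insert y (J ∪ L))))) ≤ m + 2) :
    minor M U (insert x (insert y L)) * minor M V J =
      minor M U (insert x J) * minor M V (insert y L) +
        minor M U (insert y J) * minor M V (insert x L) := by
  obtain ⟨j, hj⟩ : J.Nonempty := Finset.card_pos.1 (by lia)
  have hxy : x < y := (hx j (by simp [hj])).trans (hy j (by simp [hj]))
  let W : Submodule K (ι → K) := span K (M.col '' ↑(J ∪ L))
  let T : Submodule K (ι → K) := span K (M.col '' ↑(insert x (insert y (J ∪ L))))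
  have hWT : W ≤ T := span_mono (Set.image_mono (Finset.coe_subset.2
    ((Finset.subset_insert _ _).trans (Finset.subset_insert _ _))))
  have : FiniteDimensional K T :=
    FiniteDimensional.span_of_finite K ((Finset.finite_toSet _).image _)
  have col_mem_W (j : κ) (hj : j ∈ J ∪ L) : M.col j ∈ W := subset_span ⟨j, hj, rfl⟩
  have col_mem_T (j : κ) (hj : j ∈ insert x (insert y (J ∪ L))) : M.col j ∈ T :=
    subset_span ⟨j, hj, rfl⟩
  have hthree := alternatingMap_three_term (minorForm K hU) (minorForm K hV) hWT hinner hall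
    (a := M.col ∘ J.orderEmbOfFin hJ) (b := M.col ∘ L.orderEmbOfFin hL)
    (fun i => col_mem_W _ (Finset.mem_union_left _ (J.orderEmbOfFin_mem hJ i)))
    (fun i => col_mem_W _ (Finset.mem_union_right _ (L.orderEmbOfFin_mem hL i)))
    (col_mem_T x (by simp)) (col_mem_T y (by simp))
  simp only [Finset.mem_union, or_imp, forall_and] at hx hy
  rw [minor_insert_insert M hU hL hx.2 hy.2 hxy, minor_eq_minorForm M hV hJ,
    minor_insert_of_forall_lt M hU hJ hx.1, minor_insert_of_forall_gt M hV hL hy.2,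
    minor_insert_of_forall_gt M hU hJ hy.1, minor_insert_of_forall_lt M hV hL hx.2]
  linear_combination (-1) ^ m * hthree

end Rank

section Intervals

variable {α : Type*} [LinearOrder α] [LocallyFiniteOrder α] {a b : α} {J : Finset α}

theorem Ioc_sdiff_eq_insert (hab : a < b) (hb : b ∉ J) :
    Finset.Ioc a b \ J = insert b (Finset.Ioo a b \ J) := by
  rw [← Finset.insert_sdiff_of_notMem _ hb, Finset.Ioo_insert_right hab]

theorem Ico_sdiff_eq_insert (hab : a < b) (ha : a ∉ J) :
    Finset.Ico a b \ J = insert a (Finset.Ioo a b \ J) := by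
  rw [← Finset.insert_sdiff_of_notMem _ ha, Finset.Ioo_insert_left hab]

theorem Icc_sdiff_eq_insert_insert (hab : a < b) (ha : a ∉ J) (hb : b ∉ J) :
    Finset.Icc a b \ J = insert a (insert b (Finset.Ioo a b \ J)) := by
  rw [← Ioc_sdiff_eq_insert hab hb, ← Finset.insert_sdiff_of_notMem _ ha,
    Finset.Ioc_insert_left hab.le]

theorem Icc_sdiff_Ioc_sdiff (hab : a ≤ b) (hJ : J ⊆ Finset.Icc a b) :
    Finset.Icc a b \ (Finset.Ioc a b \ J) = insert a J := by
  ext j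
  have := @hJ j
  grind

theorem Icc_sdiff_Ico_sdiff (hab : a ≤ b) (hJ : J ⊆ Finset.Icc a b) :
    Finset.Icc a b \ (Finset.Ico a b \ J) = insert b J := by
  ext j
  have := @hJ j
  grind

end Intervals

/-- The order embedding of `Fin n` onto `{1, …, n}`, translating between `Fin`-indexed and
`1`-indexed matrices. -/
def oneBased (n : ℕ) : Fin n ↪o ℕ :=
  OrderEmbedding.ofStrictMono (fun i => i.val + 1) fun _ _ h => Nat.succ_lt_succ h

theorem map_oneBased_univ (n : ℕ) :
    Finset.univ.map (oneBased n).toEmbedding = Finset.Icc 1 n := by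
  ext j
  simp only [Finset.mem_map, Finset.mem_univ, true_and, Finset.mem_Icc]
  exact ⟨by rintro ⟨i, rfl⟩; exact ⟨Nat.succ_pos i, i.isLt⟩,
    fun hj => ⟨⟨j - 1, by lia⟩, Nat.sub_add_cancel hj.1⟩⟩

theorem exists_eq_map_oneBased {n : ℕ} {U : Finset ℕ} (hU : U ⊆ Finset.Icc 1 n) :
    ∃ U' : Finset (Fin n), U = U'.map (oneBased n).toEmbedding := by
  rw [← map_oneBased_univ, Finset.subset_map_iff] at hU
  obtain ⟨U', -, hU'⟩ := hU
  exact ⟨U', hU'⟩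

theorem minor_three_term_of_rank_le {K : Type*} [Field K] (M : Matrix ℕ ℕ K) {n c m : ℕ}
    (hall : (M.submatrix (oneBased n) fun j : Fin (c + 2) => j.val + 1).rank ≤ m + 2)
    (hinner : (M.submatrix (oneBased n) fun j : Fin c => j.val + 2).rank ≤ m + 1)
    {U V J L : Finset ℕ} (hU : U ⊆ Finset.Icc 1 n) (hV : V ⊆ Finset.Icc 1 n)
    (hUcard : U.card = m + 2) (hVcard : V.card = m + 1)
    (hJ : J ⊆ Finset.Ioo 1 (c + 2)) (hL : L ⊆ Finset.Ioo 1 (c + 2))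
    (hJcard : J.card = m + 1) (hLcard : L.card = m) :
    minor M U (insert 1 (insert (c + 2) L)) * minor M V J =
      minor M U (insert 1 J) * minor M V (insert (c + 2) L) +
        minor M U (insert (c + 2) J) * minor M V (insert 1 L) := by
  obtain ⟨U, rfl⟩ := exists_eq_map_oneBased hU
  obtain ⟨V, rfl⟩ := exists_eq_map_oneBased hV
  rw [Finset.card_map] at hUcard hVcard
  have hJL (j : ℕ) (hj : j ∈ J ∪ L) : 1 < j ∧ j < c + 2 :=
    Finset.mem_Ioo.1 (Finset.union_subset hJ hL hj)
  simp only [minor_map_left]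
  refine minor_three_term_of_finrank_le _ hUcard hVcard hJcard hLcard
    (fun j hj => (hJL j hj).1) (fun j hj => (hJL j hj).2)
    ((finrank_span_col_image_le_rank_submatrix _ _ fun j hj => ?_).trans hinner)
    ((finrank_span_col_image_le_rank_submatrix _ _ fun j hj => ?_).trans hall)
  · have := hJL j hj
    exact ⟨⟨j - 2, by lia⟩, Nat.sub_add_cancel this.1⟩
  · have : 1 ≤ j ∧ j ≤ c + 2 := by
      have := hJL j
      grind
    exact ⟨⟨j - 1, by lia⟩, Nat.sub_add_cancel this.1⟩

theorem stmt_4_general {K : Type*} [Field K] {k n : ℕ} (hk : 2 ≤ k) (M : Matrix ℕ ℕ K)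
    (hall : (M.submatrix (fun i : Fin n => i.val + 1)
      fun j : Fin (2 * k - 1) => j.val + 1).rank ≤ k)
    (hinner : (M.submatrix (fun i : Fin n => i.val + 1)
      fun j : Fin (2 * k - 3) => j.val + 2).rank ≤ k - 1)
    {U V J : Finset ℕ} (hU : U ⊆ Finset.Icc 1 n) (hV : V ⊆ Finset.Icc 1 n)
    (hJ : J ⊆ Finset.Icc 1 (2 * k - 1)) (hUcard : U.card = k) (hVcard : V.card = k - 1)
    (hJcard : J.card = k - 1) (h1 : 1 ∉ J) (h2 : 2 * k - 1 ∉ J) :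
    minor M U (Finset.Icc 1 (2 * k - 1) \ J) * minor M V J =
      minor M U (Finset.Icc 1 (2 * k - 1) \ (Finset.Icc 2 (2 * k - 1) \ J)) *
        minor M V (Finset.Icc 2 (2 * k - 1) \ J) +
      minor M U (Finset.Icc 1 (2 * k - 1) \ (Finset.Icc 1 (2 * k - 2) \ J)) *
        minor M V (Finset.Icc 1 (2 * k - 2) \ J) := by
  obtain ⟨m, rfl⟩ : ∃ m, k = m + 2 := ⟨k - 2, by lia⟩
  have hJIoo : J ⊆ Finset.Ioo 1 (2 * m + 3) := fun j hj => by
    have := Finset.mem_Icc.1 (hJ hj)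
    grind
  have hLcard : (Finset.Ioo 1 (2 * m + 3) \ J).card = m := by
    rw [Finset.card_sdiff_of_subset hJIoo, Nat.card_Ioo]
    lia
  have hlt : 1 < 2 * m + 3 := by lia
  change minor M U (Finset.Icc 1 (2 * m + 3) \ J) * minor M V J =
      minor M U (Finset.Icc 1 (2 * m + 3) \ (Finset.Ioc 1 (2 * m + 3) \ J)) *
        minor M V (Finset.Ioc 1 (2 * m + 3) \ J) +
      minor M U (Finset.Icc 1 (2 * m + 3) \ (Finset.Ico 1 (2 * m + 3) \ J)) *
        minor M V (Finset.Ico 1 (2 * m + 3) \ J)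
  rw [Icc_sdiff_Ioc_sdiff hlt.le hJ, Icc_sdiff_Ico_sdiff hlt.le hJ,
    Icc_sdiff_eq_insert_insert hlt h1 h2, Ioc_sdiff_eq_insert hlt h2, Ico_sdiff_eq_insert hlt h1]
  exact minor_three_term_of_rank_le M hall hinner hU hV hUcard hVcard hJIoo Finset.sdiff_subset
    hJcard hLcard

/-- the three-term determinantal identity for interlacing matrices. -/
theorem stmt_4 (k : ℕ) (hk : 2 ≤ k) (M : ℕ → ℕ → ℝ) (hM : IsInterlacingMatrix k M)
    (I J : Finset ℕ) (hI : I ⊆ Finset.Icc 1 (2 * k - 1)) (hJ : J ⊆ Finset.Icc 1 (2 * k - 1))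
    (hIcard : I.card = k - 1) (hJcard : J.card = k - 1)
    (h1 : 1 ∉ J) (h2 : 2 * k - 1 ∉ J) :
    minorN M (Finset.Icc 1 (2 * k - 1) \ I) (Finset.Icc 1 (2 * k - 1) \ J) * minorN M I J =
      minorN M (Finset.Icc 1 (2 * k - 1) \ I)
          (Finset.Icc 1 (2 * k - 1) \ (Finset.Icc 2 (2 * k - 1) \ J)) *
        minorN M I (Finset.Icc 2 (2 * k - 1) \ J) +
      minorN M (Finset.Icc 1 (2 * k - 1) \ I)
          (Finset.Icc 1 (2 * k - 1) \ (Finset.Icc 1 (2 * k - 2) \ J)) *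
        minorN M I (Finset.Icc 1 (2 * k - 2) \ J) := by
  have hIcompl : (Finset.Icc 1 (2 * k - 1) \ I).card = k := by
    rw [Finset.card_sdiff_of_subset hI, Nat.card_Icc]; lia
  simpa only [minorN_eq_minor] using stmt_4_general hk M hM.2.1 hM.2.2 Finset.sdiff_subset hI hJ
    hIcompl hIcard hJcard h1 h2
end

section
/- Let l, n ≥ 1 and let A = (a_{ij}) be an l×n real matrix. Define the l×(l+n) matrix φ(A) whose first l columns form the l×l identity matrix and whose entry in row s and column l+j equals (−1)^{l−s} · a_{l+1−s, j} for 1 ≤ s ≤ l, 1 ≤ j ≤ n. Then for every r ≥ 0 and every I = {i_1 < … < i_r} ⊆ {1,…,l} and J = {j_1 < … < j_r} ⊆ {1,…,n}, one has det A[I|J] = det of the l×l submatrix of φ(A) whose columns are the set ({1,…,l} ∖ {l+1−i : i ∈ I}) ∪ {l+j : j ∈ J}, taken in increasing order. -/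
/-- The `l × (l+n)` matrix `φ(A)` (1-indexed): the first `l` columns form the identity
matrix, and the entry in row `s`, column `l+j` is `(-1)^(l-s) * a_{l+1-s, j}`. -/
noncomputable def phiMat (l : ℕ) (a : ℕ → ℕ → ℝ) : ℕ → ℕ → ℝ := fun s c =>
  if c ≤ l then (if s = c then 1 else 0)
  else (-1 : ℝ) ^ (l - s) * a (l + 1 - s) (c - l)

/-!
Put `R = {l + 1 - i : i ∈ I}` and `C = {1, …, l} \ R`. Every column `c ∈ C` of the maximal minor
is the standard basis vector `e_c`, so expanding along these columns one after another leaves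
`det φ(A)[R | l + J]`, with a sign counting the pairs `s < c` with `s ∈ R` and `c ∈ C`. Taking out
the factors `(-1) ^ (l - s)` and reversing the order of the rows turns this into `det A[I|J]`, with
a further sign `(-1) ^ (#R choose 2)`, where `#R choose 2` counts the pairs `s < t` in `R`.
Since `l - s` is the number of elements of `{1, …, l}` above `s`, the exponents of the three signs
add up to the even number `2 * ∑ s ∈ R, (l - s)`.
-/

open Finset

section LtPairCount

variable {α : Type*} [LinearOrder α]

/-- The number of pairs `(s, t) ∈ S × T` with `s < t`; for disjoint `S` and `T` this is the number
of inversions of the shuffle listing `T` before `S`, each in increasing order. -/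
def ltPairCount (S T : Finset α) : ℕ := #{x ∈ S ×ˢ T | x.1 < x.2}

theorem ltPairCount_eq_sum_card_lt (S T : Finset α) :
    ltPairCount S T = ∑ t ∈ T, #{s ∈ S | s < t} := by
  simp only [ltPairCount, card_filter, sum_product_right]

theorem ltPairCount_eq_sum_card_gt (S T : Finset α) :
    ltPairCount S T = ∑ s ∈ S, #{t ∈ T | s < t} := by
  simp only [ltPairCount, card_filter, sum_product]

theorem ltPairCount_self (S : Finset α) : ltPairCount S S = (#S).choose 2 :=
  card_product_filter_lt

theorem ltPairCount_insert_right (S : Finset α) {t : α} {T : Finset α} (ht : t ∉ T) :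
    ltPairCount S (insert t T) = #{s ∈ S | s < t} + ltPairCount S T := by
  simp only [ltPairCount_eq_sum_card_lt, sum_insert ht]

theorem ltPairCount_sdiff_add_choose_two {S T : Finset α} (hST : S ⊆ T) :
    ltPairCount S (T \ S) + (#S).choose 2 = ltPairCount S T := by
  rw [← ltPairCount_self]
  simp only [ltPairCount_eq_sum_card_lt, sum_sdiff hST]

theorem ltPairCount_Icc_one (S : Finset ℕ) (l : ℕ) :
    ltPairCount S (Icc 1 l) = ∑ s ∈ S, (l - s) := by
  rw [ltPairCount_eq_sum_card_gt]
  refine sum_congr rfl fun s _ => ?_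
  rw [show {t ∈ Icc 1 l | s < t} = Ioc s l by grind, Nat.card_Ioc]

end LtPairCount

theorem image_univ_comp_succAbove {α : Type*} [DecidableEq α] {k : ℕ} {f : Fin (k + 1) → α}
    (hf : Function.Injective f) (i : Fin (k + 1)) :
    univ.image (f ∘ i.succAbove) = (univ.image f).erase (f i) := by
  rw [← image_image, Fin.image_succAbove_univ, compl_singleton, image_erase hf]

section StrictMonoEnumeration

variable {α : Type*} [LinearOrder α]

theorem exists_strictMono_image_univ_eq_pair {U W : Finset α} (h : #U = #W) :
    ∃ (k : ℕ) (f g : Fin k → α),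
      StrictMono f ∧ StrictMono g ∧ univ.image f = U ∧ univ.image g = W :=
  ⟨#W, U.orderEmbOfFin h, W.orderEmbOfFin rfl, (U.orderEmbOfFin h).strictMono,
    (W.orderEmbOfFin rfl).strictMono, U.image_orderEmbOfFin_univ h, W.image_orderEmbOfFin_univ rfl⟩

theorem card_filter_lt_image_univ {k : ℕ} {f : Fin k → α} (hf : StrictMono f) (i : Fin k) :
    #{x ∈ univ.image f | x < f i} = i := by
  simp only [filter_image, hf.lt_iff_lt, card_image_of_injective _ hf.injective,
    filter_gt_eq_Iio, Fin.card_Iio]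

end StrictMonoEnumeration

theorem sign_revPerm (k : ℕ) : Equiv.Perm.sign (Fin.revPerm (n := k)) = (-1) ^ k.choose 2 := by
  have reverses {i j : Fin k} (hij : i ∈ Iio j) : ¬ Fin.revPerm i < Fin.revPerm j := by
    simpa using (mem_Iio.1 hij).le
  calc Equiv.Perm.sign (Fin.revPerm (n := k))
      = ∏ j : Fin k, ∏ i ∈ Iio j, -1 := by
        rw [Equiv.Perm.sign_eq_prod_prod_Iio]
        exact prod_congr rfl fun j _ => prod_congr rfl fun i hij => if_neg (reverses hij)
    _ = (-1) ^ k.choose 2 := by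
        simp only [prod_const, Fin.card_Iio]
        rw [prod_pow_eq_pow_sum, Fin.sum_univ_eq_sum_range (fun i => i), sum_range_id,
          Nat.choose_two_right]

section Minor

variable {M N : ℕ → ℕ → ℝ} {U W : Finset ℕ}

theorem minorN_image_univ (M : ℕ → ℕ → ℝ) {k : ℕ} {f g : Fin k → ℕ} (hf : StrictMono f)
    (hg : StrictMono g) :
    minorN M (univ.image f) (univ.image g) = (Matrix.of fun i j => M (f i) (g j)).det := by
  obtain ⟨U, hU⟩ : ∃ U, univ.image f = U := ⟨_, rfl⟩
  have hUcard : #U = k := by rw [← hU, card_image_of_injective _ hf.injective, card_fin]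
  have hWcard : #(univ.image g) = k := by rw [card_image_of_injective _ hg.injective, card_fin]
  rw [hU]
  subst hUcard
  have hf_eq := orderEmbOfFin_unique (s := U) rfl
    (fun x => hU ▸ mem_image_of_mem f (mem_univ x)) hf
  have hg_eq := orderEmbOfFin_unique hWcard (fun x => mem_image_of_mem g (mem_univ x)) hg
  rw [minorN, dif_pos hWcard.symm]
  simp only [coe_orderIsoOfFin_apply, ← hf_eq, ← hg_eq]

theorem minorN_of_card_ne (M : ℕ → ℕ → ℝ) (h : #U ≠ #W) : minorN M U W = 0 := dif_neg h

theorem minorN_congr (h : ∀ u ∈ U, ∀ w ∈ W, M u w = N u w) : minorN M U W = minorN N U W := by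
  unfold minorN
  congr! 3 with hcard
  ext i j
  exact h _ (orderIsoOfFin U rfl i).2 _ (orderIsoOfFin W hcard.symm j).2

theorem minorN_mul_row (ε : ℕ → ℝ) (M : ℕ → ℕ → ℝ) (U W : Finset ℕ) :
    minorN (fun u w => ε u * M u w) U W = (∏ u ∈ U, ε u) * minorN M U W := by
  by_cases hcard : #U = #W
  · obtain ⟨k, f, g, hf, hg, rfl, rfl⟩ := exists_strictMono_image_univ_eq_pair hcard
    rw [minorN_image_univ _ hf hg, minorN_image_univ _ hf hg, prod_image hf.injective.injOn]
    exact Matrix.det_mul_column (fun i => ε (f i)) _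
  · rw [minorN_of_card_ne _ hcard, minorN_of_card_ne _ hcard, mul_zero]

theorem minorN_image_image_of_strictAntiOn_of_strictMonoOn (M : ℕ → ℕ → ℝ) {p q : ℕ → ℕ}
    (hp : StrictAntiOn p U) (hq : StrictMonoOn q W) :
    minorN M (U.image p) (W.image q) =
      (-1) ^ (#U).choose 2 * minorN (fun u w => M (p u) (q w)) U W := by
  by_cases hcard : #U = #W
  · obtain ⟨k, f, g, hf, hg, rfl, rfl⟩ := exists_strictMono_image_univ_eq_pair hcard
    have hpf : StrictMono (p ∘ f ∘ Fin.revPerm) := fun i j hij =>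
      hp (by simp) (by simp) (hf (Fin.rev_lt_rev.2 hij))
    have hqg : StrictMono (q ∘ g) := fun i j hij => hq (by simp) (by simp) (hg hij)
    have himage : (univ.image f).image p = univ.image (p ∘ f ∘ Fin.revPerm) := by
      rw [← image_image, ← image_image, image_univ_equiv]
    rw [himage, image_image, minorN_image_univ _ hpf hqg, minorN_image_univ _ hf hg,
      card_image_of_injective _ hf.injective, card_fin]
    have hdet := Matrix.det_permute Fin.revPerm (Matrix.of fun i j => M (p (f i)) (q (g j)))
    rw [sign_revPerm] at hdet
    push_cast at hdet
    exact hdet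
  · have hcard_image : #(U.image p) ≠ #(W.image q) := by
      rwa [card_image_of_injOn hp.injOn, card_image_of_injOn hq.injOn]
    rw [minorN_of_card_ne _ hcard, minorN_of_card_ne _ hcard_image, mul_zero]

theorem minorN_eq_mul_minorN_erase {u w : ℕ} (hu : u ∈ U) (hw : w ∈ W)
    (hzero : ∀ x ∈ U, x ≠ u → M x w = 0) :
    minorN M U W = (-1) ^ (#{x ∈ U | x < u} + #{y ∈ W | y < w}) * M u w *
      minorN M (U.erase u) (W.erase w) := by
  by_cases hcard : #U = #W
  · obtain ⟨_ | k, f, g, hf, hg, rfl, rfl⟩ := exists_strictMono_image_univ_eq_pair hcard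
    · simp at hu
    obtain ⟨i, -, rfl⟩ := mem_image.1 hu
    obtain ⟨j, -, rfl⟩ := mem_image.1 hw
    rw [card_filter_lt_image_univ hf, card_filter_lt_image_univ hg,
      ← image_univ_comp_succAbove hf.injective, ← image_univ_comp_succAbove hg.injective,
      minorN_image_univ _ hf hg, minorN_image_univ _ (hf.comp i.strictMono_succAbove)
        (hg.comp j.strictMono_succAbove), Matrix.det_succ_column _ j, Fintype.sum_eq_single i]
    · rfl
    · intro i' hi'
      have hentry : M (f i') (g j) = 0 :=
        hzero _ (mem_image_of_mem f (mem_univ i')) (hf.injective.ne hi')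
      simp [hentry]
  · have hcard_erase : #(U.erase u) ≠ #(W.erase w) := by
      have := card_erase_add_one hu
      have := card_erase_add_one hw
      omega
    rw [minorN_of_card_ne _ hcard, minorN_of_card_ne _ hcard_erase, mul_zero]

theorem minorN_union_union_of_unit_columns {R C K : Finset ℕ} (hRC : Disjoint R C)
    (hCK : ∀ c ∈ C, ∀ k ∈ K, c < k)
    (hunit : ∀ x ∈ R ∪ C, ∀ c ∈ C, M x c = if x = c then 1 else 0) :
    minorN M (R ∪ C) (C ∪ K) = (-1) ^ ltPairCount R C * minorN M R K := by
  induction C using Finset.induction_on with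
  | empty => simp [ltPairCount]
  | insert c C hc ih =>
    have hcR : c ∉ R := fun h => disjoint_left.1 hRC h (mem_insert_self c C)
    have hcK : ∀ k ∈ K, c < k := hCK c (mem_insert_self c C)
    have erase_rows : (R ∪ insert c C).erase c = R ∪ C := by grind
    have erase_cols : (insert c C ∪ K).erase c = C ∪ K := by grind
    have rows_lt : #{x ∈ R ∪ insert c C | x < c} = #{x ∈ R | x < c} + #{x ∈ C | x < c} := by
      rw [← card_union_of_disjoint (by grind [disjoint_left])]
      congr 1
      grind
    have cols_lt : {y ∈ insert c C ∪ K | y < c} = {y ∈ C | y < c} := by grind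
    rw [minorN_eq_mul_minorN_erase (u := c) (w := c) (by simp) (by simp)
        (fun x hx hxc => by rw [hunit x hx c (mem_insert_self c C), if_neg hxc]),
      hunit c (by simp) c (by simp), if_pos rfl, erase_rows, erase_cols, rows_lt, cols_lt,
      ih (disjoint_insert_right.1 hRC).2 (fun c' hc' => hCK c' (mem_insert_of_mem hc'))
        (fun x hx c' hc' => hunit x (by grind) c' (mem_insert_of_mem hc')),
      ltPairCount_insert_right R hc, add_assoc, pow_add, (Even.add_self _).neg_one_pow, pow_add]
    ring

end Minor

section PhiMat

variable {l : ℕ} (a : ℕ → ℕ → ℝ)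

theorem phiMat_of_le {c : ℕ} (hc : c ≤ l) (s : ℕ) : phiMat l a s c = if s = c then 1 else 0 :=
  if_pos hc

theorem phiMat_of_lt {c : ℕ} (hc : l < c) (s : ℕ) :
    phiMat l a s c = (-1) ^ (l - s) * a (l + 1 - s) (c - l) :=
  if_neg hc.not_ge

variable {I J : Finset ℕ}

theorem minorN_phiMat_reflect_shift (hI : I ⊆ Icc 1 l) (hJ : ∀ j ∈ J, 1 ≤ j) :
    minorN (phiMat l a) (I.image (fun i => l + 1 - i)) (J.image (fun j => l + j)) =
      (-1) ^ (∑ s ∈ I.image (fun i => l + 1 - i), (l - s)) *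
        ((-1) ^ (#I).choose 2 * minorN a I J) := by
  have hentries : ∀ s ∈ I.image (fun i => l + 1 - i), ∀ c ∈ J.image (fun j => l + j),
      phiMat l a s c = (-1) ^ (l - s) * a (l + 1 - s) (c - l) := by
    intro s _ c hc
    exact phiMat_of_lt a (by grind) s
  have hanti : StrictAntiOn (fun i => l + 1 - i) (I : Set ℕ) := fun i _ i' hi' hlt => by
    have := mem_Icc.1 (hI hi')
    dsimp only
    omega
  rw [minorN_congr hentries, minorN_mul_row (fun s => (-1) ^ (l - s)), prod_pow_eq_pow_sum,
    minorN_image_image_of_strictAntiOn_of_strictMonoOn _ hanti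
      (fun _ _ _ _ hlt => Nat.add_lt_add_left hlt l)]
  congr 2
  refine minorN_congr fun i hi j _ => ?_
  have := mem_Icc.1 (hI hi)
  congr 1 <;> omega

end PhiMat

/-- the minors of `A` appear as maximal minors of `φ(A)`:
`det A[I|J]` equals the maximal minor of `φ(A)` on columns
`({1,…,l} ∖ {l+1-i : i ∈ I}) ∪ {l+j : j ∈ J}`. -/
theorem stmt_5 (l n : ℕ) (hl : 1 ≤ l) (hn : 1 ≤ n) (a : ℕ → ℕ → ℝ)
    (r : ℕ) (I J : Finset ℕ) (hI : I ⊆ Finset.Icc 1 l) (hJ : J ⊆ Finset.Icc 1 n)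
    (hIcard : I.card = r) (hJcard : J.card = r) :
    minorN a I J =
      minorN (phiMat l a) (Finset.Icc 1 l)
        ((Finset.Icc 1 l \ I.image (fun i => l + 1 - i)) ∪ J.image (fun j => l + j)) := by
  set R := I.image (fun i => l + 1 - i) with hR
  have hRl : R ⊆ Icc 1 l := by grind
  have hRcard : #R = #I := card_image_of_injOn fun i hi i' hi' h => by grind
  have hexpand : minorN (phiMat l a) (Icc 1 l) ((Icc 1 l \ R) ∪ J.image (fun j => l + j)) =
      (-1) ^ ltPairCount R (Icc 1 l \ R) * minorN (phiMat l a) R (J.image (fun j => l + j)) := by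
    rw [← minorN_union_union_of_unit_columns disjoint_sdiff (by grind)
      (fun s _ c hc => phiMat_of_le a (by grind) s), union_sdiff_of_subset hRl]
  have hexponent : ltPairCount R (Icc 1 l \ R) + (#I).choose 2 = ∑ s ∈ R, (l - s) := by
    rw [← hRcard, ltPairCount_sdiff_add_choose_two hRl, ltPairCount_Icc_one]
  rw [hexpand, minorN_phiMat_reflect_shift a hI (fun j hj => (mem_Icc.1 (hJ hj)).1), ← hR,
    ← mul_assoc, ← mul_assoc, ← pow_add, ← pow_add,
    Even.neg_one_pow ⟨∑ s ∈ R, (l - s), by omega⟩, one_mul]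
end
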